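/- arXiv:1809.10439 — 5 statements merged into one kernel-verified Lean document; each statement's English description precedes it below -/
import Mathlib

section
/- Let b be real with b < −1/2, set β = 1 − 1/(2b²) ∈ (−1, 1) and α = arccos(β) ∈ (0, π). For n ≥ 1 let P_n be the unique polynomial of degree n satisfying P_n(z) = (z − b + s)^n + (z − b − s)^n − (−b)^n for all z (s² = z² − 1). Then for every bounded continuous f : ℂ → ℝ, the averages (1/n) Σ f(z) over the roots z of P_n counted with multiplicity converge, as n → ∞, to (1/π) ∫_{β}^{1} f( b(1 − t²) + t·√(1 − b²(1 − t²)) ) dt/√(1 − t²) + (1/(2π)) ∫_{α}^{2π − α} f( (ζ(θ) + 1/ζ(θ))/2 ) dθ, where √ denotes the nonnegative real square root (its argument 1 − b²(1 − t²) is positive for t ∈ [β, 1]) and ζ(θ) = b(1 − e^{iθ}). -/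
open Filter

/-!
In the exterior coordinate, `P n (joukowski ζ) = (ζ - b) ^ n + (ζ⁻¹ - b) ^ n - (-b) ^ n`.

On the real segment `z = segmentPoint b (cos φ)` one has `z - b ± √(z ^ 2 - 1) = ρ * exp (± i φ)`
with `ρ ≥ -b`, so that `P n z = 2 * ρ ^ n * cos (n * φ) - (-b) ^ n` changes sign between
consecutive points `φ = k * π / n`, which gives a root for every `k`.

On the circle `ζ = b * (1 - ω)` with `‖ω‖ = 1`, outside the unit disc, `(ζ⁻¹ - b) ^ n` is
exponentially smaller than `b ^ n`. If `ω ^ n = 1`, the two other terms cancel, and since some root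
lies within `n * |p z / p' z|` of `z` for every polynomial `p` of degree `n`, there is a root of
`P n` exponentially close to `joukowski ζ`.

Riemann sums over these roots show that `∫ f dμ ≤ liminf` of the averages for `f ≥ 0`, where `μ` is
the claimed limit. As `μ` has total mass `1`, this already forces weak convergence: no mass is left
for other roots.
-/

section

open MeasureTheory Set Polynomial
open scoped Topology BoundedContinuousFunction Real

/-! ### Roots of polynomials -/

theorem exists_mem_roots_norm_sub_mul_le {K : Type*} [NormedField K] {p : K[X]} (hp : p.Splits)
    (hp0 : p.natDegree ≠ 0) (z : K) :
    ∃ r ∈ p.roots, ‖z - r‖ * ‖p.derivative.eval z‖ ≤ p.natDegree * ‖p.eval z‖ := by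
  classical
  rw [hp.natDegree_eq_card_roots] at hp0 ⊢
  obtain ⟨w, hw⟩ := Multiset.exists_mem_of_ne_zero (mt Multiset.card_eq_zero.2 hp0)
  obtain ⟨r, hr, hmin⟩ := p.roots.toFinset.exists_min_image (fun r => ‖z - r‖)
    ⟨w, Multiset.mem_toFinset.2 hw⟩
  simp only [Multiset.mem_toFinset] at hr hmin
  refine ⟨r, hr, ?_⟩
  by_cases hz : p.eval z = 0
  · have : ‖z - r‖ ≤ ‖z - z‖ := hmin z ((mem_roots (ne_zero_of_mem_roots hr)).2 hz)
    rw [sub_self, norm_zero] at this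
    rw [le_antisymm this (norm_nonneg _), zero_mul]
    positivity
  have hzr : 0 < ‖z - r‖ := by
    refine norm_pos_iff.2 (sub_ne_zero.2 ?_)
    rintro rfl
    exact hz (isRoot_of_mem_roots hr)
  have hlog : ‖p.derivative.eval z / p.eval z‖ ≤ p.roots.card * (1 / ‖z - r‖) := by
    rw [hp.eval_derivative_div_eval_of_ne_zero hz, ← nsmul_eq_mul]
    refine (norm_multiset_sum_le _).trans ?_
    refine (Multiset.sum_le_card_nsmul _ (1 / ‖z - r‖) ?_).trans_eq (by simp)
    simp only [Multiset.map_map, Multiset.mem_map, Function.comp_apply, norm_div, norm_one]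
    rintro _ ⟨w, hw, rfl⟩
    exact one_div_le_one_div_of_le hzr (hmin w hw)
  rwa [norm_div, mul_one_div, div_le_div_iff₀ (norm_pos_iff.2 hz) hzr, mul_comm] at hlog

theorem sum_le_sum_map_of_injOn {ι α : Type*} {s : Finset ι} {m : Multiset α} {u : ι → α}
    (hu : InjOn u s) (hmem : ∀ i ∈ s, u i ∈ m) {f : α → ℝ} (hf : ∀ a, 0 ≤ f a) :
    ∑ i ∈ s, f (u i) ≤ (m.map f).sum := by
  have hle : s.val.map u ≤ m := by
    rw [Multiset.le_iff_subset (Multiset.Nodup.map_on hu s.nodup)]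
    simpa [Multiset.subset_iff] using hmem
  obtain ⟨v, rfl⟩ := Multiset.le_iff_exists_add.1 hle
  rw [Multiset.map_add, Multiset.sum_add, Multiset.map_map]
  refine le_add_of_nonneg_right (Multiset.sum_nonneg fun x hx => ?_)
  obtain ⟨a, -, rfl⟩ := Multiset.mem_map.1 hx
  exact hf a

theorem integral_toMeasure_ofMultiset {X : Type*} [MeasurableSpace X] [MeasurableSingletonClass X]
    (s : Multiset X) (hs : s ≠ 0) {f : X → ℝ}
    (hf : Integrable f (PMF.ofMultiset s hs).toMeasure) :
    ∫ x, f x ∂(PMF.ofMultiset s hs).toMeasure = 1 / (s.card : ℝ) * (s.map f).sum := by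
  classical
  rw [PMF.integral_eq_tsum _ _ hf, tsum_eq_sum (s := s.toFinset), Finset.sum_multiset_map_count,
    Finset.mul_sum]
  · refine Finset.sum_congr rfl fun x _ => ?_
    rw [PMF.ofMultiset_apply, ENNReal.toReal_div, ENNReal.toReal_natCast, ENNReal.toReal_natCast,
      smul_eq_mul, nsmul_eq_mul]
    ring
  · intro x hx
    rw [PMF.ofMultiset_apply_of_notMem hs (by simpa using hx), ENNReal.toReal_zero, zero_smul]

/-! ### Riemann sums -/

section RiemannSum

variable {E : Type*} [NormedAddCommGroup E] [NormedSpace ℝ E]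

theorem norm_sum_smul_sub_integral_le [CompleteSpace E] {p : ℕ → ℝ} {m n : ℕ} (hmn : m ≤ n)
    (hp : ∀ k, p k ≤ p (k + 1)) {h : ℝ → E} {y : ℕ → E} {ε : ℝ}
    (hint : ∀ k ∈ Finset.Ico m n, IntervalIntegrable h volume (p k) (p (k + 1)))
    (hy : ∀ k ∈ Finset.Ico m n, ∀ x ∈ Icc (p k) (p (k + 1)), ‖y k - h x‖ ≤ ε) :
    ‖∑ k ∈ Finset.Ico m n, (p (k + 1) - p k) • y k - ∫ x in p m..p n, h x‖ ≤
      ε * (p n - p m) := by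
  rw [← intervalIntegral.sum_integral_adjacent_intervals_Ico hmn
    fun k hk => hint k (Finset.mem_Ico.2 hk), ← Finset.sum_sub_distrib,
    ← Finset.sum_Ico_sub p hmn, Finset.mul_sum]
  refine norm_sum_le_of_le _ fun k hk => ?_
  rw [← intervalIntegral.integral_const, ← intervalIntegral.integral_sub (by simp) (hint k hk),
    ← abs_of_nonneg (sub_nonneg.2 (hp k))]
  refine intervalIntegral.norm_integral_le_of_norm_le_const fun x hx => ?_
  rw [uIoc_of_le (hp k)] at hx
  exact hy k hk x (Ioc_subset_Icc_self hx)

/-- The `k`-th node of the mesh of width `l / n` on `[0, ∞)`. -/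
noncomputable def meshPoint (l : ℝ) (n k : ℕ) : ℝ := l * k / n

/-- The indices `k` of the cells `[meshPoint l n k, meshPoint l n (k + 1)]` lying in `[a, c]`,
for `0 ≤ a`; empty for `n = 0`. -/
noncomputable def meshCells (l a c : ℝ) (n : ℕ) : Finset ℕ :=
  Finset.Ico ⌈a / l * n⌉₊ ⌊c / l * n⌋₊

theorem meshPoint_succ_sub (l : ℝ) (n k : ℕ) :
    meshPoint l n (k + 1) - meshPoint l n k = l / n := by
  simp only [meshPoint, Nat.cast_add_one]
  ring

theorem monotone_meshPoint {l : ℝ} (hl : 0 ≤ l) (n : ℕ) : Monotone (meshPoint l n) :=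
  fun _ _ h => by unfold meshPoint; gcongr

variable {l a c : ℝ}

theorem ne_zero_of_mem_meshCells {n k : ℕ} (hk : k ∈ meshCells l a c n) : n ≠ 0 := by
  rintro rfl
  simp [meshCells] at hk

theorem Icc_meshPoint_subset (hl : 0 < l) {n k : ℕ} (hk : k ∈ meshCells l a c n) :
    Icc (meshPoint l n k) (meshPoint l n (k + 1)) ⊆ Icc a c := by
  have hn : (0 : ℝ) < n := Nat.cast_pos.2 (ne_zero_of_mem_meshCells hk).pos
  obtain ⟨hk₁, hk₂⟩ := Finset.mem_Ico.1 hk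
  have ha := Nat.ceil_le.1 hk₁
  have hc := (Nat.le_floor_iff' k.succ_ne_zero).1 hk₂
  rw [div_mul_eq_mul_div, div_le_iff₀ hl] at ha
  rw [div_mul_eq_mul_div, le_div_iff₀ hl] at hc
  refine Icc_subset_Icc ?_ ?_
  · rw [meshPoint, le_div_iff₀ hn]
    linarith
  · rw [meshPoint, div_le_iff₀ hn]
    linarith

theorem meshPoint_mem_Icc (hl : 0 < l) {n k : ℕ} (hk : k ∈ meshCells l a c n) :
    meshPoint l n k ∈ Icc a c :=
  Icc_meshPoint_subset hl hk (left_mem_Icc.2 (monotone_meshPoint hl.le n k.le_succ))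

theorem tendsto_meshPoint_ceil (hl : 0 < l) (ha : 0 ≤ a) :
    Tendsto (fun n : ℕ => meshPoint l n ⌈a / l * n⌉₊) atTop (𝓝 a) := by
  have h := ((tendsto_nat_ceil_mul_div_atTop (div_nonneg ha hl.le)).comp
    tendsto_natCast_atTop_atTop).const_mul l
  rw [mul_div_cancel₀ _ hl.ne'] at h
  exact h.congr fun n => by simp only [Function.comp_apply, meshPoint, mul_div_assoc]

theorem tendsto_meshPoint_floor (hl : 0 < l) (hc : 0 ≤ c) :
    Tendsto (fun n : ℕ => meshPoint l n ⌊c / l * n⌋₊) atTop (𝓝 c) := by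
  have h := ((tendsto_nat_floor_mul_div_atTop (div_nonneg hc hl.le)).comp
    tendsto_natCast_atTop_atTop).const_mul l
  rw [mul_div_cancel₀ _ hl.ne'] at h
  exact h.congr fun n => by simp only [Function.comp_apply, meshPoint, mul_div_assoc]

theorem tendsto_intervalIntegral_endpoints (hac : a ≤ c) {h : ℝ → E}
    (hh : IntervalIntegrable h volume a c) {p q : ℕ → ℝ} (hp : Tendsto p atTop (𝓝 a))
    (hq : Tendsto q atTop (𝓝 c)) (hpm : ∀ᶠ n in atTop, p n ∈ Icc a c)
    (hqm : ∀ᶠ n in atTop, q n ∈ Icc a c) :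
    Tendsto (fun n => ∫ x in p n..q n, h x) atTop (𝓝 (∫ x in a..c, h x)) := by
  have hcont := intervalIntegral.continuousOn_primitive_interval' hh left_mem_uIcc
  rw [uIcc_of_le hac] at hcont
  have hP := (hcont a (left_mem_Icc.2 hac)).tendsto.comp (tendsto_nhdsWithin_iff.2 ⟨hp, hpm⟩)
  have hQ := (hcont c (right_mem_Icc.2 hac)).tendsto.comp (tendsto_nhdsWithin_iff.2 ⟨hq, hqm⟩)
  have hlim := hQ.sub hP
  rw [intervalIntegral.integral_same, sub_zero] at hlim
  refine hlim.congr' ?_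
  filter_upwards [hpm, hqm] with n hpn hqn
  have hsub : ∀ u ∈ Icc a c, IntervalIntegrable h volume a u := fun u hu =>
    hh.mono_set (uIcc_subset_uIcc_left (by rwa [uIcc_of_le hac]))
  exact intervalIntegral.integral_interval_sub_left (hsub _ hqn) (hsub _ hpn)

theorem eventually_meshPoint_mem (hl : 0 < l) (ha : 0 ≤ a) (hac : a < c) :
    ∀ᶠ n : ℕ in atTop, ⌈a / l * n⌉₊ ≤ ⌊c / l * n⌋₊ ∧
      meshPoint l n ⌈a / l * n⌉₊ ∈ Icc a c ∧ meshPoint l n ⌊c / l * n⌋₊ ∈ Icc a c := by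
  filter_upwards [(tendsto_meshPoint_ceil hl ha).eventually_lt
    (tendsto_meshPoint_floor hl (ha.trans hac.le)) hac, eventually_gt_atTop 0] with n hlt hn
  have hn' : (0 : ℝ) < n := Nat.cast_pos.2 hn
  have hle : ⌈a / l * n⌉₊ ≤ ⌊c / l * n⌋₊ :=
    le_of_not_gt fun h => (monotone_meshPoint hl.le n h.le).not_gt hlt
  have hceil : a ≤ meshPoint l n ⌈a / l * n⌉₊ := by
    rw [meshPoint, le_div_iff₀ hn', ← div_le_iff₀' hl, mul_div_right_comm]
    exact Nat.le_ceil _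
  have hfloor : meshPoint l n ⌊c / l * n⌋₊ ≤ c := by
    rw [meshPoint, div_le_iff₀ hn', ← le_div_iff₀' hl, mul_div_right_comm]
    exact Nat.floor_le (mul_nonneg (div_nonneg (ha.trans hac.le) hl.le) hn'.le)
  exact ⟨hle, ⟨hceil, hlt.le.trans hfloor⟩, hceil.trans hlt.le, hfloor⟩

theorem tendsto_sum_meshCells [CompleteSpace E] (hl : 0 < l) (ha : 0 ≤ a) (hac : a < c)
    {h : ℝ → E}
    (hh : IntervalIntegrable h volume a c) {y : ℕ → ℕ → E}
    (hy : ∀ ε > 0, ∀ᶠ n in atTop, ∀ k ∈ meshCells l a c n,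
      ∀ x ∈ Icc (meshPoint l n k) (meshPoint l n (k + 1)), ‖y n k - h x‖ ≤ ε) :
    Tendsto (fun n : ℕ => (l / n) • ∑ k ∈ meshCells l a c n, y n k) atTop
      (𝓝 (∫ x in a..c, h x)) := by
  have hcells := eventually_meshPoint_mem hl ha hac
  have hint := tendsto_intervalIntegral_endpoints hac.le hh (tendsto_meshPoint_ceil hl ha)
    (tendsto_meshPoint_floor hl (ha.trans hac.le)) (hcells.mono fun n h => h.2.1)
    (hcells.mono fun n h => h.2.2)
  suffices hdiff : Tendsto (fun n : ℕ => (l / n) • ∑ k ∈ meshCells l a c n, y n k -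
      ∫ x in meshPoint l n ⌈a / l * n⌉₊..meshPoint l n ⌊c / l * n⌋₊, h x) atTop (𝓝 0) by
    simpa using hdiff.add hint
  refine NormedAddGroup.tendsto_nhds_zero.2 fun ε hε => ?_
  have hca : 0 < c - a := sub_pos.2 hac
  filter_upwards [hy (ε / (2 * (c - a))) (by positivity), hcells] with n hyn ⟨hle, hpn, hqn⟩
  have hbound := norm_sum_smul_sub_integral_le hle
    (fun k => monotone_meshPoint hl.le n k.le_succ) (h := h) (y := y n)
    (fun k hk => hh.mono_set (by
      rw [uIcc_of_le hac.le, uIcc_of_le (monotone_meshPoint hl.le n k.le_succ)]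
      exact Icc_meshPoint_subset hl hk)) hyn
  simp only [meshPoint_succ_sub, ← Finset.smul_sum] at hbound
  calc _ ≤ ε / (2 * (c - a)) * (c - a) :=
        hbound.trans (by gcongr; exacts [hqn.2, hpn.1])
    _ = ε / 2 := by field_simp
    _ < ε := half_lt_self hε

end RiemannSum

section Curve

variable {X : Type*} [PseudoMetricSpace X] {l a c : ℝ} {γ : ℝ → X} {z : ℕ → ℕ → X}

theorem eventually_dist_comp_le_of_meshCells {E : Type*} [PseudoMetricSpace E] (hl : 0 < l)
    (hγ : ContinuousOn γ (Icc a c)) {f : X → E} (hf : Continuous f)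
    (hz : ∀ ε > 0, ∀ᶠ n in atTop, ∀ k ∈ meshCells l a c n,
      ∃ t ∈ Icc (meshPoint l n k) (meshPoint l n (k + 1)), dist (z n k) (γ t) < ε)
    {ε : ℝ} (hε : 0 < ε) :
    ∀ᶠ n in atTop, ∀ k ∈ meshCells l a c n,
      ∀ x ∈ Icc (meshPoint l n k) (meshPoint l n (k + 1)), dist (f (z n k)) (f (γ x)) ≤ ε := by
  have hK : IsCompact (γ '' Icc a c) := isCompact_Icc.image_of_continuousOn hγ
  obtain ⟨δ, hδ, hfδ⟩ : ∃ δ > 0, ∀ u ∈ γ '' Icc a c, ∀ v, dist u v < δ → dist (f u) (f v) < ε := by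
    have h := hK.uniformContinuousAt_of_continuousAt f (fun u _ => hf.continuousAt)
      (Metric.dist_mem_uniformity hε)
    obtain ⟨δ, hδ, h⟩ := Metric.mem_uniformity_dist.1 h
    exact ⟨δ, hδ, fun u hu v huv => h huv hu⟩
  obtain ⟨η, hη, hγη⟩ := Metric.uniformContinuousOn_iff.1
    (isCompact_Icc.uniformContinuousOn_of_continuous hγ) (δ / 2) (half_pos hδ)
  have hmesh : ∀ᶠ n : ℕ in atTop, l / n < η :=
    (tendsto_const_div_atTop_nhds_zero_nat l).eventually_lt_const hη
  filter_upwards [hz (δ / 2) (half_pos hδ), hmesh] with n hzn hnη k hk x hx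
  obtain ⟨t, ht, hzt⟩ := hzn k hk
  have hxac := Icc_meshPoint_subset hl hk hx
  have hxt : dist x t < η := by
    have := Real.dist_le_of_mem_Icc hx ht
    rw [meshPoint_succ_sub] at this
    exact this.trans_lt hnη
  have hγxt := hγη x hxac t (Icc_meshPoint_subset hl hk ht) hxt
  rw [dist_comm]
  refine (hfδ _ (mem_image_of_mem γ hxac) _ ?_).le
  calc dist (γ x) (z n k) ≤ dist (γ x) (γ t) + dist (z n k) (γ t) := dist_triangle_right _ _ _
    _ < δ := by linarith

theorem tendsto_sum_comp_meshCells {E : Type*} [NormedAddCommGroup E] [NormedSpace ℝ E]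
    [CompleteSpace E] (hl : 0 < l) (ha : 0 ≤ a) (hac : a < c) (hγ : ContinuousOn γ (Icc a c))
    {f : X → E} (hf : Continuous f)
    (hz : ∀ ε > 0, ∀ᶠ n in atTop, ∀ k ∈ meshCells l a c n,
      ∃ t ∈ Icc (meshPoint l n k) (meshPoint l n (k + 1)), dist (z n k) (γ t) < ε) :
    Tendsto (fun n : ℕ => (1 / n : ℝ) • ∑ k ∈ meshCells l a c n, f (z n k)) atTop
      (𝓝 ((1 / l) • ∫ x in a..c, f (γ x))) := by
  have hint : IntervalIntegrable (fun x => f (γ x)) volume a c :=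
    (hf.comp_continuousOn hγ).intervalIntegrable_of_Icc hac.le
  have h := (tendsto_sum_meshCells hl ha hac hint (y := fun n k => f (z n k))
    fun ε hε => by
      simpa only [dist_eq_norm] using eventually_dist_comp_le_of_meshCells hl hγ hf hz hε)
  refine (h.const_smul (1 / l)).congr fun n => ?_
  rw [smul_smul, one_div_mul_eq_div, div_right_comm, div_self hl.ne']

end Curve

/-- For large `n` the points `z n k`, one for each cell `k` of the mesh of width `l / n` in
`[a, c]`, are distinct roots of `P n`, and `z n k` approaches the image of the `k`-th cell under
the curve `γ` uniformly in `k`. Such roots equidistribute along `γ`: they are `1 / l` of all roots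
per unit of the parameter if `P n` has degree `n`. -/
structure RootsAlong (P : ℕ → ℂ[X]) (γ : ℝ → ℂ) (l a c : ℝ) (z : ℕ → ℕ → ℂ) : Prop where
  eventually_mem_roots : ∀ᶠ n in atTop, ∀ k ∈ meshCells l a c n, z n k ∈ (P n).roots
  eventually_injOn : ∀ᶠ n in atTop, InjOn (z n) (meshCells l a c n)
  eventually_dist_lt : ∀ ε > 0, ∀ᶠ n in atTop, ∀ k ∈ meshCells l a c n,
    ∃ t ∈ Icc (meshPoint l n k) (meshPoint l n (k + 1)), dist (z n k) (γ t) < ε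

/-- `p` is, up to a nonzero constant factor, the `n`-th Faber polynomial of the Joukowski airfoil
with exterior map `z ↦ joukowski ((1 - b) * z + b)`; `s` ranges over both square roots of
`z ^ 2 - 1`. -/
structure IsAirfoilFaber (b : ℂ) (n : ℕ) (p : ℂ[X]) : Prop where
  degree_eq : p.degree = n
  eval_eq : ∀ z s : ℂ, s ^ 2 = z ^ 2 - 1 → p.eval z = (z - b + s) ^ n + (z - b - s) ^ n - (-b) ^ n

theorem IsAirfoilFaber.ne_zero {b : ℂ} {n : ℕ} {p : ℂ[X]} (hp : IsAirfoilFaber b n p) : p ≠ 0 := by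
  rintro rfl
  simpa using hp.degree_eq

theorem IsAirfoilFaber.natDegree_eq {b : ℂ} {n : ℕ} {p : ℂ[X]} (hp : IsAirfoilFaber b n p) :
    p.natDegree = n :=
  natDegree_eq_of_degree_eq_some hp.degree_eq

/-! ### Roots on the real segment -/

section Segment

/-- The larger solution `x` of `x - b = t * √(b ^ 2 + 1 - 2 * b * x)` if `b < 0`, in closed form;
the square root is meaningful where `2 * b ^ 2 * (1 - t) ≤ 1`. -/
noncomputable def segmentPoint (b t : ℝ) : ℝ := b * (1 - t ^ 2) + t * √(1 - b ^ 2 * (1 - t ^ 2))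

/-- The common modulus `√(b ^ 2 + 1 - 2 * b * x)` of the two numbers `x - b ± √(x ^ 2 - 1)` for
`x = segmentPoint b t`, so that `t` is the cosine of their argument. -/
noncomputable def segmentRadius (b t : ℝ) : ℝ := √(1 - b ^ 2 * (1 - t ^ 2)) - b * t

variable {b t : ℝ}

theorem continuous_segmentPoint (b : ℝ) : Continuous (segmentPoint b) := by
  unfold segmentPoint
  fun_prop

theorem continuous_segmentRadius (b : ℝ) : Continuous (segmentRadius b) := by
  unfold segmentRadius
  fun_prop

theorem segmentPoint_sub (b t : ℝ) : segmentPoint b t - b = segmentRadius b t * t := by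
  unfold segmentPoint segmentRadius
  ring

theorem neg_le_segmentRadius (ht : 2 * b ^ 2 * (1 - t) ≤ 1) : -b ≤ segmentRadius b t := by
  have h : |b * (1 - t)| ≤ √(1 - b ^ 2 * (1 - t ^ 2)) := Real.abs_le_sqrt (by linarith)
  unfold segmentRadius
  linarith [neg_abs_le (b * (1 - t))]

theorem segmentRadius_sq (ht : 2 * b ^ 2 * (1 - t) ≤ 1) :
    segmentRadius b t ^ 2 = b ^ 2 + 1 - 2 * b * segmentPoint b t := by
  have h := Real.sq_sqrt (show 0 ≤ 1 - b ^ 2 * (1 - t ^ 2) by linarith [sq_nonneg (b * (1 - t))])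
  unfold segmentRadius segmentPoint
  linear_combination h

theorem one_sub_segmentPoint_sq (ht : 2 * b ^ 2 * (1 - t) ≤ 1) :
    1 - segmentPoint b t ^ 2 = segmentRadius b t ^ 2 * (1 - t ^ 2) := by
  linear_combination (-(segmentPoint b t - b) - segmentRadius b t * t) * segmentPoint_sub b t -
    segmentRadius_sq ht

theorem segmentPoint_mem_Icc (ht : 2 * b ^ 2 * (1 - t) ≤ 1) (ht' : t ^ 2 ≤ 1) :
    segmentPoint b t ∈ Icc (-1) 1 := by
  rw [mem_Icc, ← abs_le, ← sq_le_one_iff_abs_le_one, ← sub_nonneg, one_sub_segmentPoint_sq ht]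
  exact mul_nonneg (sq_nonneg _) (sub_nonneg.2 ht')

theorem injOn_segmentPoint (hb : b < 0) :
    InjOn (segmentPoint b) {t | 2 * b ^ 2 * (1 - t) ≤ 1} := by
  intro t ht u hu htu
  have ht₀ : 0 < segmentRadius b t := (neg_pos.2 hb).trans_le (neg_le_segmentRadius ht)
  have hu₀ : 0 < segmentRadius b u := (neg_pos.2 hb).trans_le (neg_le_segmentRadius hu)
  have hsq : segmentRadius b t ^ 2 = segmentRadius b u ^ 2 := by
    rw [segmentRadius_sq ht, segmentRadius_sq hu, htu]
  have hr : segmentRadius b t = segmentRadius b u := (sq_eq_sq₀ ht₀.le hu₀.le).1 hsq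
  have hmul := segmentPoint_sub b t
  rw [htu, segmentPoint_sub, hr] at hmul
  exact (mul_left_cancel₀ hu₀.ne' hmul).symm

theorem IsAirfoilFaber.eval_segmentPoint {n : ℕ} {p : ℂ[X]} (hp : IsAirfoilFaber b n p) {φ : ℝ}
    (hφ : 2 * b ^ 2 * (1 - Real.cos φ) ≤ 1) :
    p.eval (segmentPoint b (Real.cos φ) : ℂ) =
      ((2 * segmentRadius b (Real.cos φ) ^ n * Real.cos (n * φ) - (-b) ^ n : ℝ) : ℂ) := by
  set x := segmentPoint b (Real.cos φ)
  set ρ := segmentRadius b (Real.cos φ)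
  have hx : (x : ℂ) - b = ρ * Complex.cos φ := by exact_mod_cast segmentPoint_sub b (Real.cos φ)
  have hs : (ρ * Complex.sin φ * Complex.I) ^ 2 = (x : ℂ) ^ 2 - 1 := by
    have h : 1 - (x : ℂ) ^ 2 = ρ ^ 2 * (1 - Complex.cos φ ^ 2) := by
      exact_mod_cast one_sub_segmentPoint_sq hφ
    rw [mul_pow, Complex.I_sq]
    linear_combination h - ρ ^ 2 * Complex.sin_sq_add_cos_sq φ
  have hplus : (x : ℂ) - b + ρ * Complex.sin φ * Complex.I =
      ρ * (Complex.cos φ + Complex.sin φ * Complex.I) := by rw [hx]; ring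
  have hminus : (x : ℂ) - b - ρ * Complex.sin φ * Complex.I =
      ρ * (Complex.cos (-φ) + Complex.sin (-φ) * Complex.I) := by
    rw [hx, Complex.cos_neg, Complex.sin_neg]
    ring
  rw [hp.eval_eq _ _ hs, hplus, hminus, mul_pow, mul_pow, Complex.cos_add_sin_mul_I_pow,
    Complex.cos_add_sin_mul_I_pow, mul_neg, Complex.cos_neg, Complex.sin_neg]
  push_cast
  ring

-- At `φ = k * π / n` the value `2 * ρ ^ n * cos (n * φ) - (-b) ^ n` has the sign of `(-1) ^ k`,
-- because `-b ≤ ρ`.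
theorem IsAirfoilFaber.exists_segmentPoint_mem_roots {n k : ℕ} {p : ℂ[X]}
    (hp : IsAirfoilFaber b n p) (hb : b < 0) (hn : n ≠ 0)
    (hcell : ∀ φ ∈ Icc (meshPoint π n k) (meshPoint π n (k + 1)),
      2 * b ^ 2 * (1 - Real.cos φ) ≤ 1) :
    ∃ φ ∈ Ioo (meshPoint π n k) (meshPoint π n (k + 1)),
      (segmentPoint b (Real.cos φ) : ℂ) ∈ p.roots := by
  let F : ℝ → ℝ := fun φ =>
    2 * segmentRadius b (Real.cos φ) ^ n * Real.cos (n * φ) - (-b) ^ n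
  have hF : Continuous F := by
    have := (continuous_segmentRadius b).comp Real.continuous_cos
    unfold F
    fun_prop
  have hsign : ∀ j, 2 * b ^ 2 * (1 - Real.cos (meshPoint π n j)) ≤ 1 →
      0 < (-1) ^ j * F (meshPoint π n j) := by
    intro j hj
    have hb' : 0 < (-b) ^ n := pow_pos (neg_pos.2 hb) n
    have hρ := pow_le_pow_left₀ (neg_pos.2 hb).le (neg_le_segmentRadius hj) n
    have harg : (n : ℝ) * meshPoint π n j = j * π := by
      unfold meshPoint
      field_simp
    simp only [F, harg, Real.cos_nat_mul_pi]
    obtain h | h := neg_one_pow_eq_or ℝ j <;> rw [h] <;> linarith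
  have hle := monotone_meshPoint Real.pi_nonneg n k.le_succ
  have h₀ := hsign k (hcell _ (left_mem_Icc.2 hle))
  have h₁ := hsign (k + 1) (hcell _ (right_mem_Icc.2 hle))
  obtain ⟨φ, hφ, hzero⟩ := intermediate_value_Ioo' hle
    (f := fun φ => (-1) ^ k * F φ) (by fun_prop) ⟨by rw [pow_succ] at h₁; linarith, h₀⟩
  refine ⟨φ, hφ, (mem_roots hp.ne_zero).2 ?_⟩
  have hFφ : F φ = 0 := (mul_eq_zero.1 hzero).resolve_left (by simp)
  rw [IsRoot, hp.eval_segmentPoint (hcell φ (Ioo_subset_Icc_self hφ))]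
  exact_mod_cast hFφ

theorem exists_rootsAlong_segmentPoint (hb : b < 0) {α : ℝ} (hαπ : α ≤ π)
    (hα : 2 * b ^ 2 * (1 - Real.cos α) ≤ 1) {P : ℕ → ℂ[X]}
    (hP : ∀ n ≠ 0, IsAirfoilFaber b n (P n)) :
    ∃ z : ℕ → ℕ → ℂ, (∀ n, ∀ k ∈ meshCells π 0 α n, z n k ∈ (↑) '' Icc (-1 : ℝ) 1) ∧
      RootsAlong P (fun φ => segmentPoint b (Real.cos φ)) π 0 α z := by
  have hcos : ∀ φ ∈ Icc 0 α, 2 * b ^ 2 * (1 - Real.cos φ) ≤ 1 := fun φ hφ => by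
    have := Real.cos_le_cos_of_nonneg_of_le_pi hφ.1 hαπ hφ.2
    exact le_trans (by gcongr) hα
  have hex : ∀ n, ∀ k ∈ meshCells π 0 α n,
      ∃ φ ∈ Ioo (meshPoint π n k) (meshPoint π n (k + 1)),
        (segmentPoint b (Real.cos φ) : ℂ) ∈ (P n).roots := fun n k hk =>
    (hP n (ne_zero_of_mem_meshCells hk)).exists_segmentPoint_mem_roots hb
      (ne_zero_of_mem_meshCells hk) fun φ hφ => hcos φ (Icc_meshPoint_subset Real.pi_pos hk hφ)
  choose! φ hφ hroot using hex
  have hφα : ∀ n, ∀ k ∈ meshCells π 0 α n, φ n k ∈ Icc 0 α := fun n k hk =>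
    Icc_meshPoint_subset Real.pi_pos hk (Ioo_subset_Icc_self (hφ n k hk))
  refine ⟨fun n k => segmentPoint b (Real.cos (φ n k)), fun n k hk => mem_image_of_mem _
    (segmentPoint_mem_Icc (hcos _ (hφα n k hk)) (Real.cos_sq_le_one _)),
    .of_forall hroot, .of_forall fun n => ?_, fun ε hε => .of_forall fun n k hk =>
    ⟨φ n k, Ioo_subset_Icc_self (hφ n k hk), by rwa [dist_self]⟩⟩
  intro k hk m hm hkm
  have hφkm : φ n k = φ n m := by
    refine Real.injOn_cos ?_ ?_ (injOn_segmentPoint hb (hcos _ (hφα n k hk))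
      (hcos _ (hφα n m hm)) (Complex.ofReal_injective hkm))
    · exact Icc_subset_Icc_right hαπ (hφα n k hk)
    · exact Icc_subset_Icc_right hαπ (hφα n m hm)
  by_contra hne
  exact disjoint_left.1 ((monotone_meshPoint Real.pi_nonneg n).pairwise_disjoint_on_Ioo_succ hne)
    (hφ n k hk) (hφkm ▸ hφ n m hm)

end Segment

/-! ### Roots near the arc -/

section Joukowski

/-- The Joukowski map. -/
noncomputable def joukowski (ζ : ℂ) : ℂ := (ζ + 1 / ζ) / 2

theorem hasDerivAt_joukowski {ζ : ℂ} (hζ : ζ ≠ 0) :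
    HasDerivAt joukowski ((1 - ζ⁻¹ ^ 2) / 2) ζ := by
  have h := ((hasDerivAt_id ζ).add (hasDerivAt_inv hζ)).div_const 2
  simp only [inv_pow, sub_eq_add_neg]
  exact h.congr_of_eventuallyEq (.of_forall fun w => by simp [joukowski])

theorem joukowski_sub_joukowski {z w : ℂ} (hz : z ≠ 0) (hw : w ≠ 0) :
    joukowski z - joukowski w = (z - w) * (1 - (z * w)⁻¹) / 2 := by
  unfold joukowski
  field_simp
  ring

theorem norm_sub_mul_le_norm_joukowski_sub {z w : ℂ} {m : ℝ} (hm : 0 < m) (hz : m ≤ ‖z‖)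
    (hw : m ≤ ‖w‖) : ‖z - w‖ * (1 - (m * m)⁻¹) / 2 ≤ ‖joukowski z - joukowski w‖ := by
  rw [joukowski_sub_joukowski (norm_pos_iff.1 (hm.trans_le hz)) (norm_pos_iff.1 (hm.trans_le hw)),
    norm_div, norm_mul, Complex.norm_ofNat]
  have hinv : ‖(z * w)⁻¹‖ ≤ (m * m)⁻¹ := by
    rw [norm_inv, norm_mul]
    gcongr
  have hone := norm_sub_norm_le 1 (z * w)⁻¹
  rw [norm_one] at hone
  gcongr
  linarith

-- `joukowski` maps `‖ζ‖ = R` to the ellipse with foci `±1` and major axis `R + 1 / R`.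
theorem norm_joukowski_sub_one_add_norm_joukowski_add_one {ζ : ℂ} (hζ : ζ ≠ 0) :
    ‖joukowski ζ - 1‖ + ‖joukowski ζ + 1‖ = ‖ζ‖ + ‖ζ‖⁻¹ := by
  have hsub : joukowski ζ - 1 = (ζ - 1) ^ 2 / (2 * ζ) := by unfold joukowski; field_simp; ring
  have hadd : joukowski ζ + 1 = (ζ + 1) ^ 2 / (2 * ζ) := by unfold joukowski; field_simp; ring
  have hpar := parallelogram_law_with_norm ℝ ζ 1
  have hζ' := norm_ne_zero_iff.2 hζ
  rw [hsub, hadd, norm_div, norm_div, norm_mul, Complex.norm_ofNat, norm_pow, norm_pow]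
  rw [norm_one] at hpar
  field_simp
  linear_combination hpar

theorem joukowski_notMem_segment {ζ : ℂ} (hζ : 1 < ‖ζ‖) :
    joukowski ζ ∉ ((↑) : ℝ → ℂ) '' Icc (-1) 1 := by
  rintro ⟨x, ⟨hx₁, hx₂⟩, hx⟩
  have hfoci := norm_joukowski_sub_one_add_norm_joukowski_add_one
    (norm_pos_iff.1 (one_pos.trans hζ))
  have hsub : ‖(x : ℂ) - 1‖ = 1 - x := by
    rw [← Complex.ofReal_one, ← Complex.ofReal_sub, Complex.norm_real, Real.norm_eq_abs,
      abs_sub_comm, abs_of_nonneg (sub_nonneg.2 hx₂)]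
  have hadd : ‖(x : ℂ) + 1‖ = x + 1 := by
    rw [← Complex.ofReal_one, ← Complex.ofReal_add, Complex.norm_real, Real.norm_eq_abs,
      abs_of_nonneg (by linarith)]
  have htwo : ‖ζ‖ * 2 = ‖ζ‖ * ‖ζ‖ + 1 := by
    rw [← hx, hsub, hadd] at hfoci
    rw [← mul_inv_cancel₀ (one_pos.trans hζ).ne', ← mul_add, ← hfoci]
    ring
  nlinarith

end Joukowski

section ExteriorRoots

variable {b ζ : ℂ} {n : ℕ} {p : ℂ[X]}

theorem IsAirfoilFaber.eval_joukowski (hp : IsAirfoilFaber b n p) (hζ : ζ ≠ 0) :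
    p.eval (joukowski ζ) = (ζ - b) ^ n + (ζ⁻¹ - b) ^ n - (-b) ^ n := by
  rw [hp.eval_eq _ ((ζ - ζ⁻¹) / 2)]
  · congr 3 <;> unfold joukowski <;> ring
  · unfold joukowski
    field_simp
    ring

theorem IsAirfoilFaber.eval_derivative_joukowski (hp : IsAirfoilFaber b n p) (hζ : ζ ≠ 0) :
    p.derivative.eval (joukowski ζ) * ((1 - ζ⁻¹ ^ 2) / 2) =
      n * ((ζ - b) ^ (n - 1) - (ζ⁻¹ - b) ^ (n - 1) * ζ⁻¹ ^ 2) := by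
  have hcomp := (p.hasDerivAt (joukowski ζ)).comp ζ (hasDerivAt_joukowski hζ)
  have hinv := (hasDerivAt_inv hζ).sub_const b
  have hclosed := ((((hasDerivAt_id ζ).sub_const b).pow n).add (hinv.pow n)).sub_const ((-b) ^ n)
  refine (hcomp.unique (hclosed.congr_of_eventuallyEq ?_)).trans ?_
  · filter_upwards [eventually_ne_nhds hζ] with w hw
    simpa using hp.eval_joukowski hw
  · simp only [id_eq, inv_pow]
    ring

theorem IsAirfoilFaber.le_norm_eval_derivative_joukowski (hp : IsAirfoilFaber b n p)
    (hζ : 1 ≤ ‖ζ‖) {q : ℝ} (hζb : ‖ζ - b‖ = ‖b‖) (hinv : ‖ζ⁻¹ - b‖ ≤ q * ‖b‖)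
    (hqn : q ^ (n - 1) ≤ 1 / 2) :
    n * (‖b‖ ^ (n - 1) / 2) ≤ ‖p.derivative.eval (joukowski ζ)‖ := by
  have hζinv : ‖ζ⁻¹ ^ 2‖ ≤ 1 := by
    rw [norm_pow, norm_inv]
    exact pow_le_one₀ (by positivity) (inv_le_one_of_one_le₀ hζ)
  have hfactor : ‖(1 - ζ⁻¹ ^ 2) / 2‖ ≤ 1 := by
    have := norm_sub_le 1 (ζ⁻¹ ^ 2)
    rw [norm_one] at this
    rw [norm_div, Complex.norm_ofNat]
    linarith
  have hsecond : ‖(ζ⁻¹ - b) ^ (n - 1) * ζ⁻¹ ^ 2‖ ≤ ‖b‖ ^ (n - 1) / 2 :=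
    calc _ ≤ ‖ζ⁻¹ - b‖ ^ (n - 1) := by
          rw [norm_mul, norm_pow]
          exact mul_le_of_le_one_right (by positivity) hζinv
      _ ≤ (q * ‖b‖) ^ (n - 1) := by gcongr
      _ ≤ 1 / 2 * ‖b‖ ^ (n - 1) := by rw [mul_pow]; gcongr
      _ = ‖b‖ ^ (n - 1) / 2 := by ring
  have hdiff := norm_sub_norm_le ((ζ - b) ^ (n - 1)) ((ζ⁻¹ - b) ^ (n - 1) * ζ⁻¹ ^ 2)
  rw [norm_pow, hζb] at hdiff
  calc n * (‖b‖ ^ (n - 1) / 2)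
      ≤ n * ‖(ζ - b) ^ (n - 1) - (ζ⁻¹ - b) ^ (n - 1) * ζ⁻¹ ^ 2‖ := by gcongr; linarith
    _ = ‖p.derivative.eval (joukowski ζ) * ((1 - ζ⁻¹ ^ 2) / 2)‖ := by
        rw [hp.eval_derivative_joukowski (norm_pos_iff.1 (one_pos.trans_le hζ)), norm_mul,
          Complex.norm_natCast]
    _ ≤ ‖p.derivative.eval (joukowski ζ)‖ := by
        rw [norm_mul]
        exact mul_le_of_le_one_right (norm_nonneg _) hfactor

-- At such a `ζ` only the small term `(ζ⁻¹ - b) ^ n` of `p` survives.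
theorem IsAirfoilFaber.exists_mem_roots_dist_joukowski_le (hp : IsAirfoilFaber b n p) (hb : b ≠ 0)
    (hn : n ≠ 0) (hζ : 1 ≤ ‖ζ‖) {q : ℝ} (hpow : (ζ - b) ^ n = (-b) ^ n)
    (hinv : ‖ζ⁻¹ - b‖ ≤ q * ‖b‖) (hqn : q ^ (n - 1) ≤ 1 / 2) :
    ∃ r ∈ p.roots, dist r (joukowski ζ) ≤ 2 * ‖b‖ * q ^ n := by
  have hζb : ‖ζ - b‖ = ‖b‖ := by
    rw [← norm_neg b]
    exact (pow_left_inj₀ (norm_nonneg _) (norm_nonneg _) hn).1 (by simp only [← norm_pow, hpow])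
  have hval : ‖p.eval (joukowski ζ)‖ ≤ (q * ‖b‖) ^ n := by
    rw [hp.eval_joukowski (norm_pos_iff.1 (one_pos.trans_le hζ)), hpow, add_sub_cancel_left,
      norm_pow]
    gcongr
  have hder := hp.le_norm_eval_derivative_joukowski hζ hζb hinv hqn
  obtain ⟨r, hr, hrle⟩ := exists_mem_roots_norm_sub_mul_le (IsAlgClosed.splits p)
    (hp.natDegree_eq ▸ hn) (joukowski ζ)
  refine ⟨r, hr, ?_⟩
  rw [hp.natDegree_eq] at hrle
  have hn' : (0 : ℝ) < n := Nat.cast_pos.2 hn.pos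
  have hle : ‖joukowski ζ - r‖ * (n * (‖b‖ ^ (n - 1) / 2)) ≤ n * (q * ‖b‖) ^ n :=
    (mul_le_mul_of_nonneg_left hder (norm_nonneg _)).trans
      (hrle.trans (mul_le_mul_of_nonneg_left hval hn'.le))
  rw [mul_pow, ← mul_pow_sub_one hn ‖b‖] at hle
  rw [dist_comm, dist_eq_norm]
  refine le_of_mul_le_mul_right ?_ (show 0 < n * (‖b‖ ^ (n - 1) / 2) by positivity)
  linarith

theorem norm_inv_sub_lt {b : ℝ} {ζ : ℂ} (hζb : ‖ζ - b‖ = |b|) (hζ : 1 < ‖ζ‖) :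
    ‖ζ⁻¹ - b‖ < |b| := by
  have hζ₀ : ζ ≠ 0 := norm_pos_iff.1 (one_pos.trans hζ)
  have hsq : ∀ w : ℂ, ‖w‖ ^ 2 = w.re ^ 2 + w.im ^ 2 := fun w => by
    rw [Complex.sq_norm, Complex.normSq_apply]
    ring
  have hre : ‖ζ‖ ^ 2 = 2 * b * ζ.re := by
    have h := congrArg (· ^ 2) hζb
    simp only [hsq, sq_abs, Complex.sub_re, Complex.sub_im, Complex.ofReal_re,
      Complex.ofReal_im] at h
    rw [hsq]
    linear_combination h
  have hrw : ζ⁻¹ - b = (1 - b * ζ) / ζ := by field_simp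
  rw [hrw, norm_div, div_lt_iff₀ (one_pos.trans hζ)]
  refine lt_of_pow_lt_pow_left₀ 2 (by positivity) ?_
  have hnum : ‖1 - b * ζ‖ ^ 2 = 1 - ‖ζ‖ ^ 2 + b ^ 2 * ‖ζ‖ ^ 2 := by
    rw [hsq, hre]
    simp only [Complex.sub_re, Complex.sub_im, Complex.one_re, Complex.one_im,
      Complex.re_ofReal_mul, Complex.im_ofReal_mul]
    linear_combination -(b ^ 2) * hsq ζ + b ^ 2 * hre
  rw [hnum, mul_pow, sq_abs]
  linarith [one_lt_pow₀ hζ two_ne_zero]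

end ExteriorRoots

section RootsOfUnity

theorem norm_pow_sub_one_le {R : Type*} [SeminormedRing R] [NormOneClass R] {ω : R}
    (hω : ‖ω‖ ≤ 1) (i : ℕ) : ‖ω ^ i - 1‖ ≤ i * ‖ω - 1‖ := by
  rw [← geom_sum_mul]
  refine (norm_mul_le _ _).trans (mul_le_mul_of_nonneg_right ?_ (norm_nonneg _))
  calc _ ≤ ∑ _j ∈ Finset.range i, (1 : ℝ) := norm_sum_le_of_le _ fun j _ =>
        (norm_pow_le ω j).trans (pow_le_one₀ (norm_nonneg ω) hω)
    _ = i := by simp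

theorem one_le_mul_norm_sub_one_of_pow_eq_one {ω : ℂ} {n : ℕ} (hn : n ≠ 0) (hω : ω ^ n = 1)
    (hω₁ : ω ≠ 1) : 1 ≤ n * ‖ω - 1‖ := by
  have hnorm := Complex.norm_eq_one_of_pow_eq_one hω hn
  have hgeom : ∑ i ∈ Finset.range n, ω ^ i = 0 := by
    refine (mul_eq_zero.1 ?_).resolve_right (sub_ne_zero.2 hω₁)
    rw [geom_sum_mul, hω, sub_self]
  have hsum : ‖∑ i ∈ Finset.range n, (ω ^ i - 1)‖ = n := by simp [hgeom]
  have hle : ‖∑ i ∈ Finset.range n, (ω ^ i - 1)‖ ≤ ∑ _i ∈ Finset.range n, n * ‖ω - 1‖ := by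
    refine norm_sum_le_of_le _ fun i hi => (norm_pow_sub_one_le hnorm.le i).trans ?_
    gcongr
    exact (Finset.mem_range.1 hi).le
  rw [hsum, Finset.sum_const, Finset.card_range, nsmul_eq_mul] at hle
  exact le_of_mul_le_mul_left (by linarith) (Nat.cast_pos.2 hn.pos : (0 : ℝ) < n)

theorem exp_meshPoint_two_pi_mul_I (n k : ℕ) :
    Complex.exp (meshPoint (2 * π) n k * Complex.I) =
      Complex.exp (2 * π * Complex.I / n) ^ k := by
  rw [← Complex.exp_nat_mul]
  congr 1
  unfold meshPoint
  push_cast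
  ring

theorem inv_natCast_le_norm_exp_meshPoint_sub {n k m : ℕ} (hk : k < n) (hm : m < n)
    (hkm : k ≠ m) :
    (n : ℝ)⁻¹ ≤ ‖Complex.exp (meshPoint (2 * π) n k * Complex.I) -
      Complex.exp (meshPoint (2 * π) n m * Complex.I)‖ := by
  have hn : n ≠ 0 := (Nat.zero_le k).trans_lt hk |>.ne'
  have hprim := Complex.isPrimitiveRoot_exp n hn
  rw [exp_meshPoint_two_pi_mul_I, exp_meshPoint_two_pi_mul_I]
  set ξ := Complex.exp (2 * π * Complex.I / n)
  have hξm : ‖ξ ^ m‖ = 1 := by rw [norm_pow, hprim.norm'_eq_one hn, one_pow]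
  have hξm₀ : ξ ^ m ≠ 0 := norm_ne_zero_iff.1 (hξm ▸ one_ne_zero)
  have hsep : 1 ≤ n * ‖ξ ^ k / ξ ^ m - 1‖ := by
    refine one_le_mul_norm_sub_one_of_pow_eq_one hn ?_ fun h =>
      hkm (hprim.pow_inj hk hm ((div_eq_one_iff_eq hξm₀).1 h))
    rw [div_pow, ← pow_mul, ← pow_mul, mul_comm k, mul_comm m, pow_mul, pow_mul, hprim.pow_eq_one,
      one_pow, one_pow, div_one]
  rw [div_sub_one hξm₀, norm_div, hξm, div_one] at hsep
  exact (inv_le_iff_one_le_mul₀' (Nat.cast_pos.2 hn.pos)).2 hsep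

end RootsOfUnity

section Arc

/-- The point of the circle with centre `b` and radius `|b|` at angle `θ` from `0`. The images
under `joukowski` of the points outside the closed unit disc form the arc that attracts roots. -/
noncomputable def arcPoint (b θ : ℝ) : ℂ := b * (1 - Complex.exp (θ * Complex.I))

variable {b a c : ℝ}

theorem continuous_arcPoint (b : ℝ) : Continuous (arcPoint b) := by
  unfold arcPoint
  fun_prop

theorem arcPoint_sub (b θ : ℝ) : arcPoint b θ - b = -b * Complex.exp (θ * Complex.I) := by
  unfold arcPoint
  ring

theorem norm_arcPoint_sub (b θ : ℝ) : ‖arcPoint b θ - b‖ = |b| := by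
  rw [arcPoint_sub, norm_mul, norm_neg, Complex.norm_real, Complex.norm_exp_ofReal_mul_I, mul_one,
    Real.norm_eq_abs]

theorem norm_arcPoint_sq (b θ : ℝ) : ‖arcPoint b θ‖ ^ 2 = 2 * b ^ 2 * (1 - Real.cos θ) := by
  rw [arcPoint, Complex.sq_norm, Complex.normSq_apply]
  simp only [Complex.re_ofReal_mul, Complex.im_ofReal_mul, Complex.sub_re, Complex.sub_im,
    Complex.one_re, Complex.one_im, Complex.exp_ofReal_mul_I_re, Complex.exp_ofReal_mul_I_im]
  linear_combination b ^ 2 * Real.sin_sq_add_cos_sq θ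

theorem continuousOn_joukowski_arcPoint {s : Set ℝ} (h : ∀ θ ∈ s, arcPoint b θ ≠ 0) :
    ContinuousOn (fun θ => joukowski (arcPoint b θ)) s := fun θ hθ =>
  (hasDerivAt_joukowski (h θ hθ)).continuousAt.comp_continuousWithinAt
    (continuous_arcPoint b).continuousWithinAt

theorem exists_arcPoint_bounds (hac : a ≤ c) (h : ∀ θ ∈ Icc a c, 1 < ‖arcPoint b θ‖) :
    ∃ m > 1, ∃ q ∈ Ico 0 1, ∀ θ ∈ Icc a c,
      m ≤ ‖arcPoint b θ‖ ∧ ‖(arcPoint b θ)⁻¹ - b‖ ≤ q * |b| := by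
  have hinv : ContinuousOn (fun θ => ‖(arcPoint b θ)⁻¹ - b‖) (Icc a c) :=
    (((continuous_arcPoint b).continuousOn.inv₀ fun θ hθ =>
      norm_pos_iff.1 (one_pos.trans (h θ hθ))).sub continuousOn_const).norm
  obtain ⟨θ₁, hθ₁, hmin⟩ := isCompact_Icc.exists_isMinOn (nonempty_Icc.2 hac)
    (continuous_arcPoint b).norm.continuousOn
  obtain ⟨θ₂, hθ₂, hmax⟩ := isCompact_Icc.exists_isMaxOn (nonempty_Icc.2 hac) hinv
  have hlt := norm_inv_sub_lt (norm_arcPoint_sub b θ₂) (h θ₂ hθ₂)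
  have hb : 0 < |b| := (norm_nonneg _).trans_lt hlt
  refine ⟨_, h θ₁ hθ₁, ‖(arcPoint b θ₂)⁻¹ - b‖ / |b|, ⟨by positivity, (div_lt_one hb).2 hlt⟩,
    fun θ hθ => ⟨hmin hθ, ?_⟩⟩
  rw [div_mul_cancel₀ _ hb.ne']
  exact hmax hθ

theorem lt_of_mem_meshCells_two_pi (hc : c < 2 * π) {n k : ℕ}
    (hk : k ∈ meshCells (2 * π) a c n) : k < n := by
  have hn : (0 : ℝ) < n := Nat.cast_pos.2 (ne_zero_of_mem_meshCells hk).pos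
  have h := (meshPoint_mem_Icc Real.two_pi_pos hk).2.trans_lt hc
  rw [meshPoint, div_lt_iff₀ hn] at h
  exact_mod_cast lt_of_mul_lt_mul_left h Real.two_pi_pos.le

theorem norm_arcPoint_sub_arcPoint (b θ θ' : ℝ) :
    ‖arcPoint b θ - arcPoint b θ'‖ =
      |b| * ‖Complex.exp (θ' * Complex.I) - Complex.exp (θ * Complex.I)‖ := by
  rw [← Real.norm_eq_abs, ← Complex.norm_real, ← norm_mul]
  congr 1
  unfold arcPoint
  ring

theorem le_dist_joukowski_arcPoint_meshPoint {m : ℝ} (hm : 1 < m) {n k j : ℕ} (hk : k < n)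
    (hj : j < n) (hkj : k ≠ j) (hkm : m ≤ ‖arcPoint b (meshPoint (2 * π) n k)‖)
    (hjm : m ≤ ‖arcPoint b (meshPoint (2 * π) n j)‖) :
    |b| * (1 - (m * m)⁻¹) / 2 / n ≤ dist (joukowski (arcPoint b (meshPoint (2 * π) n k)))
      (joukowski (arcPoint b (meshPoint (2 * π) n j))) := by
  have hm' : 0 ≤ 1 - (m * m)⁻¹ :=
    sub_nonneg.2 (inv_le_one_of_one_le₀ (one_le_mul_of_one_le_of_one_le hm.le hm.le))
  rw [dist_eq_norm]
  refine le_trans ?_ (norm_sub_mul_le_norm_joukowski_sub (one_pos.trans hm) hkm hjm)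
  rw [norm_arcPoint_sub_arcPoint]
  calc |b| * (1 - (m * m)⁻¹) / 2 / n = |b| * (n : ℝ)⁻¹ * (1 - (m * m)⁻¹) / 2 := by ring
    _ ≤ _ := by
        gcongr
        exact inv_natCast_le_norm_exp_meshPoint_sub hj hk hkj.symm

theorem eventually_injOn_of_dist_joukowski_arcPoint_le (hb : b ≠ 0) (hc : c < 2 * π) {m q M : ℝ}
    (hm : 1 < m) (hq : q ∈ Ico 0 1) (hnorm : ∀ θ ∈ Icc a c, m ≤ ‖arcPoint b θ‖)
    {z : ℕ → ℕ → ℂ}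
    (hz : ∀ᶠ n in atTop, ∀ k ∈ meshCells (2 * π) a c n,
      dist (z n k) (joukowski (arcPoint b (meshPoint (2 * π) n k))) ≤ M * q ^ n) :
    ∀ᶠ n in atTop, InjOn (z n) (meshCells (2 * π) a c n) := by
  set κ := |b| * (1 - (m * m)⁻¹) / 2
  have hκ : 0 < κ := by
    have := sub_pos.2 (inv_lt_one_of_one_lt₀ (one_lt_mul_of_lt_of_le hm hm.le))
    positivity
  have hsmall : ∀ᶠ n : ℕ in atTop, 2 * M * (n * q ^ n) < κ :=
    ((tendsto_self_mul_const_pow_of_lt_one hq.1 hq.2).const_mul (2 * M)).eventually_lt_const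
      (by rwa [mul_zero])
  filter_upwards [hz, hsmall] with n hzn hn k hk j hj hkj
  by_contra hne
  have hn₀ : (0 : ℝ) < n := Nat.cast_pos.2 (ne_zero_of_mem_meshCells hk).pos
  have hfar : κ / n ≤ _ := le_dist_joukowski_arcPoint_meshPoint hm
    (lt_of_mem_meshCells_two_pi hc hk) (lt_of_mem_meshCells_two_pi hc hj) hne
    (hnorm _ (meshPoint_mem_Icc Real.two_pi_pos hk))
    (hnorm _ (meshPoint_mem_Icc Real.two_pi_pos hj))
  have hnear := hfar.trans (dist_triangle_left _ _ (z n k))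
  rw [div_le_iff₀ hn₀] at hnear
  have hsum : dist (z n k) (joukowski (arcPoint b (meshPoint (2 * π) n k))) +
      dist (z n k) (joukowski (arcPoint b (meshPoint (2 * π) n j))) ≤ 2 * (M * q ^ n) := by
    linarith [hzn k hk, hkj ▸ hzn j hj]
  linarith [mul_le_mul_of_nonneg_right hsum hn₀.le]

theorem eventually_exists_mem_roots_dist_joukowski_arcPoint_le (hb : b ≠ 0) {q : ℝ}
    (hq : q ∈ Ico 0 1)
    (h : ∀ θ ∈ Icc a c, 1 ≤ ‖arcPoint b θ‖ ∧ ‖(arcPoint b θ)⁻¹ - b‖ ≤ q * |b|)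
    {P : ℕ → ℂ[X]} (hP : ∀ n ≠ 0, IsAirfoilFaber b n (P n)) :
    ∀ᶠ n in atTop, ∀ k ∈ meshCells (2 * π) a c n, ∃ r ∈ (P n).roots,
      dist r (joukowski (arcPoint b (meshPoint (2 * π) n k))) ≤ 2 * |b| * q ^ n := by
  have hhalf : ∀ᶠ n : ℕ in atTop, q ^ (n - 1) < 1 / 2 :=
    ((tendsto_pow_atTop_nhds_zero_of_lt_one hq.1 hq.2).comp
      (tendsto_sub_atTop_nat 1)).eventually_lt_const one_half_pos
  filter_upwards [hhalf] with n hn k hk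
  have hn₀ := ne_zero_of_mem_meshCells hk
  obtain ⟨hnorm, hinv⟩ := h _ (meshPoint_mem_Icc Real.two_pi_pos hk)
  have hb' : ‖(b : ℂ)‖ = |b| := Complex.norm_real b
  have hpow : (arcPoint b (meshPoint (2 * π) n k) - b) ^ n = (-b : ℂ) ^ n := by
    rw [arcPoint_sub, mul_pow, exp_meshPoint_two_pi_mul_I, pow_right_comm,
      (Complex.isPrimitiveRoot_exp n hn₀).pow_eq_one, one_pow, mul_one]
  rw [← hb'] at hinv ⊢
  exact (hP n hn₀).exists_mem_roots_dist_joukowski_le (Complex.ofReal_ne_zero.2 hb) hn₀ hnorm hpow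
    hinv hn.le

theorem exists_rootsAlong_arcPoint (hac : a ≤ c) (hc : c < 2 * π)
    (h : ∀ θ ∈ Icc a c, 1 < ‖arcPoint b θ‖) {P : ℕ → ℂ[X]}
    (hP : ∀ n ≠ 0, IsAirfoilFaber b n (P n)) :
    ∃ z : ℕ → ℕ → ℂ, RootsAlong P (fun θ => joukowski (arcPoint b θ)) (2 * π) a c z := by
  have hb : b ≠ 0 := by
    rintro rfl
    have := h a (left_mem_Icc.2 hac)
    norm_num [arcPoint] at this
  obtain ⟨m, hm, q, hq, hmq⟩ := exists_arcPoint_bounds hac h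
  have hex := eventually_exists_mem_roots_dist_joukowski_arcPoint_le hb hq
    (fun θ hθ => ⟨(h θ hθ).le, (hmq θ hθ).2⟩) hP
  obtain ⟨z, hz⟩ := (hex.mono fun n hn => by choose! z hz using hn; exact ⟨z, hz⟩).choice
  have hdist := hz.mono fun n hn k hk => (hn k hk).2
  refine ⟨z, hz.mono fun n hn k hk => (hn k hk).1,
    eventually_injOn_of_dist_joukowski_arcPoint_le hb hc hm hq (fun θ hθ => (hmq θ hθ).1) hdist,
    fun ε hε => ?_⟩
  have hzero : Tendsto (fun n : ℕ => 2 * |b| * q ^ n) atTop (𝓝 0) := by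
    simpa using (tendsto_pow_atTop_nhds_zero_of_lt_one hq.1 hq.2).const_mul (2 * |b|)
  filter_upwards [hdist, hzero.eventually_lt_const hε] with n hn hnε k hk
  exact ⟨_, left_mem_Icc.2 (monotone_meshPoint Real.two_pi_pos.le n k.le_succ),
    (hn k hk).trans_lt hnε⟩

end Arc

/-! ### Equidistribution of the roots -/

section CurveMeasure

/-- The image under the curve `γ` of `1 / l` times the Lebesgue measure on the parameter interval
`[a, c]`. -/
noncomputable def curveMeasure (γ : ℝ → ℂ) (l a c : ℝ) : Measure ℂ :=
  ENNReal.ofReal (1 / l) • (volume.restrict (Ioc a c)).map γ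

variable {γ : ℝ → ℂ} {l a c : ℝ}

instance isFiniteMeasure_curveMeasure : IsFiniteMeasure (curveMeasure γ l a c) := by
  exact Measure.smul_finite _ ENNReal.ofReal_ne_top

theorem integral_curveMeasure (hl : 0 ≤ l) (hac : a ≤ c) (hγ : ContinuousOn γ (Icc a c))
    {f : ℂ → ℝ} (hf : Continuous f) :
    ∫ w, f w ∂curveMeasure γ l a c = 1 / l * ∫ x in a..c, f (γ x) := by
  rw [curveMeasure, integral_smul_measure, ENNReal.toReal_ofReal (one_div_nonneg.2 hl),
    integral_map ((hγ.mono Ioc_subset_Icc_self).aemeasurable measurableSet_Ioc)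
      hf.aestronglyMeasurable, intervalIntegral.integral_of_le hac, smul_eq_mul]

theorem curveMeasure_real_univ (hl : 0 ≤ l) (hac : a ≤ c) (hγ : ContinuousOn γ (Icc a c)) :
    (curveMeasure γ l a c).real univ = (c - a) / l := by
  have h := integral_curveMeasure hl hac hγ (continuous_const (y := 1))
  rwa [integral_const, smul_eq_mul, mul_one, intervalIntegral.integral_const, smul_eq_mul, mul_one,
    one_div_mul_eq_div] at h

end CurveMeasure

section RootsAlong

variable {P : ℕ → ℂ[X]} {γ γ₁ γ₂ : ℝ → ℂ} {l a c l₁ a₁ c₁ l₂ a₂ c₂ : ℝ} {z z₁ z₂ : ℕ → ℕ → ℂ}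

theorem RootsAlong.eventually_notMem (h : RootsAlong P γ l a c z) (hl : 0 < l)
    (hγ : ContinuousOn γ (Icc a c)) {K : Set ℂ} (hK : IsClosed K)
    (hγK : ∀ x ∈ Icc a c, γ x ∉ K) :
    ∀ᶠ n in atTop, ∀ k ∈ meshCells l a c n, z n k ∉ K := by
  obtain ⟨δ, hδ, hsub⟩ := (isCompact_Icc.image_of_continuousOn hγ).exists_thickening_subset_open
    hK.isOpen_compl (image_subset_iff.2 hγK)
  filter_upwards [h.eventually_dist_lt δ hδ] with n hn k hk
  obtain ⟨t, ht, hzt⟩ := hn k hk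
  exact hsub (Metric.mem_thickening_iff.2
    ⟨γ t, mem_image_of_mem γ (Icc_meshPoint_subset hl hk ht), hzt⟩)

theorem RootsAlong.tendsto_sum (h : RootsAlong P γ l a c z) (hl : 0 < l) (ha : 0 ≤ a)
    (hac : a < c) (hγ : ContinuousOn γ (Icc a c)) {f : ℂ → ℝ} (hf : Continuous f) :
    Tendsto (fun n : ℕ => 1 / (n : ℝ) * ∑ k ∈ meshCells l a c n, f (z n k)) atTop
      (𝓝 (∫ w, f w ∂curveMeasure γ l a c)) := by
  rw [integral_curveMeasure hl.le hac.le hγ hf]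
  exact tendsto_sum_comp_meshCells hl ha hac hγ hf h.eventually_dist_lt

theorem RootsAlong.eventually_sum_add_sum_le (h₁ : RootsAlong P γ₁ l₁ a₁ c₁ z₁)
    (h₂ : RootsAlong P γ₂ l₂ a₂ c₂ z₂)
    (hne : ∀ᶠ n in atTop, ∀ k ∈ meshCells l₁ a₁ c₁ n, ∀ j ∈ meshCells l₂ a₂ c₂ n,
      z₁ n k ≠ z₂ n j) {f : ℂ → ℝ} (hf : ∀ w, 0 ≤ f w) :
    ∀ᶠ n in atTop, ∑ k ∈ meshCells l₁ a₁ c₁ n, f (z₁ n k) +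
      ∑ j ∈ meshCells l₂ a₂ c₂ n, f (z₂ n j) ≤ ((P n).roots.map f).sum := by
  filter_upwards [hne, h₁.eventually_mem_roots, h₂.eventually_mem_roots, h₁.eventually_injOn,
    h₂.eventually_injOn] with n hn hmem₁ hmem₂ hinj₁ hinj₂
  have hsum := sum_le_sum_map_of_injOn (s := (meshCells l₁ a₁ c₁ n).disjSum (meshCells l₂ a₂ c₂ n))
    (m := (P n).roots) (u := Sum.elim (z₁ n) (z₂ n)) ?_ ?_ hf
  · simpa only [Finset.sum_disjSum, Sum.elim_inl, Sum.elim_inr] using hsum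
  · rintro (k | k) hk (j | j) hj hkj <;>
      simp only [SetLike.mem_coe, Finset.inl_mem_disjSum, Finset.inr_mem_disjSum] at hk hj
    · exact congrArg Sum.inl (hinj₁ hk hj hkj)
    · exact absurd hkj (hn k hk j hj)
    · exact absurd hkj.symm (hn j hj k hk)
    · exact congrArg Sum.inr (hinj₂ hk hj hkj)
  · rintro (k | k) hk <;>
      simp only [Finset.inl_mem_disjSum, Finset.inr_mem_disjSum] at hk
    · exact hmem₁ k hk
    · exact hmem₂ k hk

end RootsAlong

section Airfoil

variable {b α : ℝ}

theorem cos_lt_cos_of_mem_Ioo (hα : 0 ≤ α) {θ : ℝ} (hθ : θ ∈ Ioo α (2 * π - α)) :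
    Real.cos θ < Real.cos α := by
  obtain hθπ | hθπ := le_total θ π
  · exact Real.cos_lt_cos_of_nonneg_of_le_pi hα hθπ hθ.1
  · rw [← Real.cos_two_pi_sub θ]
    exact Real.cos_lt_cos_of_nonneg_of_le_pi hα (by linarith) (by linarith [hθ.2])

theorem arcPoint_ne_zero (hb : b ≠ 0) {θ : ℝ} (hθ : θ ∈ Ioo 0 (2 * π)) : arcPoint b θ ≠ 0 := by
  have hcos := cos_lt_cos_of_mem_Ioo le_rfl (by rwa [sub_zero])
  rw [Real.cos_zero] at hcos
  have hsq : ‖arcPoint b θ‖ ^ 2 ≠ 0 := by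
    rw [norm_arcPoint_sq]
    have := sub_pos.2 hcos
    positivity
  rwa [Ne, sq_eq_zero_iff, norm_eq_zero] at hsq

theorem one_lt_norm_arcPoint (hα₀ : 0 ≤ α) (hα : 2 * b ^ 2 * (1 - Real.cos α) = 1) {θ : ℝ}
    (hθ : θ ∈ Ioo α (2 * π - α)) : 1 < ‖arcPoint b θ‖ := by
  have hb : 0 < 2 * b ^ 2 := (by positivity : 0 ≤ 2 * b ^ 2).lt_of_ne fun h => by simp [← h] at hα
  rw [← one_lt_sq_iff₀ (norm_nonneg _), norm_arcPoint_sq]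
  refine hα.symm.trans_lt ?_
  exact mul_lt_mul_of_pos_left (sub_lt_sub_left (cos_lt_cos_of_mem_Ioo hα₀ hθ) 1) hb

/-- The limit distribution of the roots: the part on the real segment is parametrized by the angle
`φ = arccos t` instead of `t`. -/
noncomputable def airfoilMeasure (b α : ℝ) : Measure ℂ :=
  curveMeasure (fun φ => segmentPoint b (Real.cos φ)) π 0 α +
    curveMeasure (fun θ => joukowski (arcPoint b θ)) (2 * π) α (2 * π - α)

theorem continuousOn_segmentPoint_cos (b : ℝ) (s : Set ℝ) :
    ContinuousOn (fun φ => (segmentPoint b (Real.cos φ) : ℂ)) s :=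
  (Complex.continuous_ofReal.comp
    ((continuous_segmentPoint b).comp Real.continuous_cos)).continuousOn

theorem continuousOn_joukowski_arcPoint_Icc (hb : b ≠ 0) (hα : 0 < α) :
    ContinuousOn (fun θ => joukowski (arcPoint b θ)) (Icc α (2 * π - α)) :=
  continuousOn_joukowski_arcPoint fun _ hθ =>
    arcPoint_ne_zero hb ⟨hα.trans_le hθ.1, by linarith [hθ.2]⟩

theorem integral_airfoilMeasure (hb : b ≠ 0) (hα₀ : 0 < α) (hαπ : α ≤ π) (f : ℂ →ᵇ ℝ) :
    ∫ w, f w ∂airfoilMeasure b α =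
      1 / π * (∫ φ in 0..α, f (segmentPoint b (Real.cos φ))) +
        1 / (2 * π) * ∫ θ in α..2 * π - α, f (joukowski (arcPoint b θ)) := by
  rw [airfoilMeasure, integral_add_measure (f.integrable _) (f.integrable _),
    integral_curveMeasure Real.pi_nonneg hα₀.le (continuousOn_segmentPoint_cos b _) f.continuous,
    integral_curveMeasure Real.two_pi_pos.le (by linarith)
      (continuousOn_joukowski_arcPoint_Icc hb hα₀) f.continuous]

theorem isProbabilityMeasure_airfoilMeasure (hb : b ≠ 0) (hα₀ : 0 < α) (hαπ : α ≤ π) :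
    IsProbabilityMeasure (airfoilMeasure b α) := by
  have : IsFiniteMeasure (airfoilMeasure b α) := by unfold airfoilMeasure; infer_instance
  rw [isProbabilityMeasure_iff_real, airfoilMeasure, measureReal_add_apply,
    curveMeasure_real_univ Real.pi_nonneg hα₀.le (continuousOn_segmentPoint_cos b _),
    curveMeasure_real_univ Real.two_pi_pos.le (by linarith)
      (continuousOn_joukowski_arcPoint_Icc hb hα₀)]
  field_simp
  ring

end Airfoil

section Limit

variable {b α : ℝ} {P : ℕ → ℂ[X]}

theorem exists_tendsto_sum_le_roots (hb : b < 0) (hα₀ : 0 < α)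
    (hα : 2 * b ^ 2 * (1 - Real.cos α) = 1) (hP : ∀ n ≠ 0, IsAirfoilFaber b n (P n)) {α' : ℝ}
    (hα' : α' ∈ Ioo α π) {f : ℂ → ℝ} (hf : Continuous f) (hf₀ : ∀ w, 0 ≤ f w) :
    ∃ S : ℕ → ℝ, (∀ᶠ n in atTop, S n ≤ ((P n).roots.map f).sum) ∧
      Tendsto (fun n : ℕ => 1 / (n : ℝ) * S n) atTop
        (𝓝 (1 / π * (∫ φ in 0..α, f (segmentPoint b (Real.cos φ))) +
          1 / (2 * π) * ∫ θ in α'..2 * π - α', f (joukowski (arcPoint b θ)))) := by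
  have hα'₀ : 0 < α' := hα₀.trans hα'.1
  have hlt : α' < 2 * π - α' := by linarith [hα'.2]
  have hnorm : ∀ θ ∈ Icc α' (2 * π - α'), 1 < ‖arcPoint b θ‖ := fun θ hθ =>
    one_lt_norm_arcPoint hα₀.le hα ⟨hα'.1.trans_le hθ.1, by linarith [hθ.2, hα'.1]⟩
  obtain ⟨z₁, hz₁, h₁⟩ := exists_rootsAlong_segmentPoint hb (hα'.1.trans hα'.2).le hα.le hP
  obtain ⟨z₂, h₂⟩ := exists_rootsAlong_arcPoint hlt.le (by linarith) hnorm hP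
  have hcont₂ := continuousOn_joukowski_arcPoint_Icc hb.ne hα'₀
  have hne := h₂.eventually_notMem Real.two_pi_pos hcont₂
    (isCompact_Icc.image Complex.continuous_ofReal).isClosed
    fun θ hθ => joukowski_notMem_segment (hnorm θ hθ)
  refine ⟨_, h₁.eventually_sum_add_sum_le h₂ (hne.mono fun n hn k hk j hj hkj =>
    hn j hj (hkj ▸ hz₁ n k hk)) hf₀, ?_⟩
  have hlim := (h₁.tendsto_sum Real.pi_pos le_rfl hα₀ (continuousOn_segmentPoint_cos b _) hf).add
    (h₂.tendsto_sum Real.two_pi_pos hα'₀.le hlt hcont₂ hf)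
  rw [integral_curveMeasure Real.pi_nonneg hα₀.le (continuousOn_segmentPoint_cos b _) hf,
    integral_curveMeasure Real.two_pi_pos.le hlt.le hcont₂ hf] at hlim
  simpa only [mul_add] using hlim

theorem exists_lt_integral_arc (hb : b ≠ 0) (hα₀ : 0 < α) (hαπ : α < π) (f : ℂ →ᵇ ℝ) {x : ℝ}
    (hx : x < ∫ w, f w ∂airfoilMeasure b α) :
    ∃ α' ∈ Ioo α π, x < 1 / π * (∫ φ in 0..α, f (segmentPoint b (Real.cos φ))) +
      1 / (2 * π) * ∫ θ in α'..2 * π - α', f (joukowski (arcPoint b θ)) := by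
  rw [integral_airfoilMeasure hb hα₀ hαπ.le] at hx
  obtain ⟨u, -, hu, hlim⟩ := exists_seq_strictAnti_tendsto' hαπ
  have hle : α ≤ 2 * π - α := by linarith
  have hint := (f.continuous.comp_continuousOn
    (continuousOn_joukowski_arcPoint_Icc hb hα₀)).intervalIntegrable_of_Icc (μ := volume) hle
  have harc := tendsto_intervalIntegral_endpoints hle hint hlim (hlim.const_sub (2 * π))
    (.of_forall fun n => ⟨(hu n).1.le, by linarith [(hu n).2]⟩)
    (.of_forall fun n => ⟨by linarith [(hu n).2], by linarith [(hu n).1]⟩)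
  obtain ⟨n, hn⟩ := (((harc.const_mul (1 / (2 * π))).const_add
    (1 / π * ∫ φ in 0..α, f (segmentPoint b (Real.cos φ)))).eventually_const_lt hx).exists
  exact ⟨u n, hu n, hn⟩

theorem eventually_lt_average_roots (hb : b < 0) (hα₀ : 0 < α) (hαπ : α < π)
    (hα : 2 * b ^ 2 * (1 - Real.cos α) = 1) (hP : ∀ n ≠ 0, IsAirfoilFaber b n (P n))
    {f : ℂ →ᵇ ℝ} (hf : 0 ≤ f) {x : ℝ} (hx : x < ∫ w, f w ∂airfoilMeasure b α) :
    ∀ᶠ n : ℕ in atTop, x < 1 / (n : ℝ) * ((P n).roots.map f).sum := by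
  obtain ⟨α', hα', hxα'⟩ := exists_lt_integral_arc hb.ne hα₀ hαπ f hx
  obtain ⟨S, hS, hlim⟩ := exists_tendsto_sum_le_roots hb hα₀ hα hP hα' f.continuous hf
  filter_upwards [hS, hlim.eventually_const_lt hxα'] with n hn hxn
  exact hxn.trans_le (by gcongr)

theorem IsAirfoilFaber.card_roots_eq {b : ℂ} {n : ℕ} {p : ℂ[X]} (hp : IsAirfoilFaber b n p) :
    p.roots.card = n := by
  rw [← (IsAlgClosed.splits p).natDegree_eq_card_roots, hp.natDegree_eq]

theorem tendsto_average_roots (hb : b < 0) (hα₀ : 0 < α) (hαπ : α < π)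
    (hα : 2 * b ^ 2 * (1 - Real.cos α) = 1) (hP : ∀ n ≠ 0, IsAirfoilFaber b n (P n))
    (f : ℂ →ᵇ ℝ) :
    Tendsto (fun n : ℕ => 1 / (n : ℝ) * ((P n).roots.map f).sum) atTop
      (𝓝 (∫ w, f w ∂airfoilMeasure b α)) := by
  have hprob := isProbabilityMeasure_airfoilMeasure hb.ne hα₀ hαπ.le
  have hcard : ∀ n, (P (n + 1)).roots.card = n + 1 := fun n => (hP _ n.succ_ne_zero).card_roots_eq
  have hroots : ∀ n, (P (n + 1)).roots ≠ 0 := fun n =>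
    Multiset.card_pos.1 ((hcard n).symm ▸ n.succ_pos)
  let μ : ℕ → Measure ℂ := fun n => (PMF.ofMultiset _ (hroots n)).toMeasure
  have hμ : ∀ (g : ℂ →ᵇ ℝ) n,
      ∫ w, g w ∂μ n = 1 / ((n + 1 : ℕ) : ℝ) * ((P (n + 1)).roots.map g).sum := fun g n => by
    rw [integral_toMeasure_ofMultiset _ _ (g.integrable _), hcard]
  have hliminf : ∀ g : ℂ →ᵇ ℝ, 0 ≤ g →
      ∫ w, g w ∂airfoilMeasure b α ≤ liminf (fun n => ∫ w, g w ∂μ n) atTop := fun g hg => by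
    have hbdd := BoundedContinuousFunction.isBounded_range_integral μ g
    refine (le_liminf_iff (hbdd.bddAbove.isBoundedUnder_of_range.isCoboundedUnder_ge)
      hbdd.bddBelow.isBoundedUnder_of_range).2 fun x hx => ?_
    simp only [hμ]
    exact (tendsto_add_atTop_nat 1).eventually (eventually_lt_average_roots hb hα₀ hαπ hα hP hg hx)
  refine (tendsto_add_atTop_iff_nat 1).1 ?_
  simpa only [hμ] using
    BoundedContinuousFunction.tendsto_integral_of_forall_integral_le_liminf_integral hliminf f

end Limit

theorem integral_div_sqrt_one_sub_sq_eq_integral_cos {β : ℝ} (hβ₁ : -1 ≤ β) (hβ₂ : β ≤ 1)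
    (g : ℝ → ℝ) :
    ∫ t in β..1, g t / √(1 - t ^ 2) = ∫ φ in 0..Real.arccos β, g (Real.cos φ) := by
  have hIoo : ∀ t ∈ Ioo (min β 1) (max β 1), HasDerivAt Real.arccos (-(1 / √(1 - t ^ 2))) t := by
    rw [min_eq_left hβ₂, max_eq_right hβ₂]
    exact fun t ht => Real.hasDerivAt_arccos (hβ₁.trans_lt ht.1).ne' ht.2.ne
  have hsubst := intervalIntegral.integral_comp_mul_deriv_of_deriv_nonpos
    (g := fun φ => g (Real.cos φ)) Real.continuous_arccos.continuousOn hIoo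
    fun t _ => neg_nonpos.2 (by positivity)
  rw [Real.arccos_one] at hsubst
  calc ∫ t in β..1, g t / √(1 - t ^ 2)
      = -∫ t in β..1, ((fun φ => g (Real.cos φ)) ∘ Real.arccos) t * -(1 / √(1 - t ^ 2)) := by
        rw [← intervalIntegral.integral_neg]
        refine intervalIntegral.integral_congr fun t ht => ?_
        rw [uIcc_of_le hβ₂] at ht
        simp only [Function.comp_apply, Real.cos_arccos (hβ₁.trans ht.1) ht.2]
        ring
    _ = ∫ φ in 0..Real.arccos β, g (Real.cos φ) := by
        rw [hsubst, ← intervalIntegral.integral_symm]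

theorem one_sub_one_div_two_mul_sq_mem_Ioo {b : ℝ} (hb : b < -1 / 2) :
    1 - 1 / (2 * b ^ 2) ∈ Ioo (-1) 1 := by
  have hsq : 1 / 2 < 2 * b ^ 2 := by nlinarith
  have hpos : 0 < 2 * b ^ 2 := one_half_pos.trans hsq
  have hlt : 1 / (2 * b ^ 2) < 2 := by rw [div_lt_iff₀ hpos]; linarith
  exact ⟨by linarith, by linarith [one_div_pos.2 hpos]⟩

end

/-- Let `b` be real with `b < −1/2`, `β = 1 − 1/(2b²)`, `α = arccos β`.
For `n ≥ 1` let `P n` be the unique polynomial of degree `n` with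
`P_n(z) = (z − b + s)ⁿ + (z − b − s)ⁿ − (−b)ⁿ` (`s² = z² − 1`). Then for every bounded
continuous `f : ℂ → ℝ`, the averages `(1/n) Σ f(z)` over the roots of `P n` (with
multiplicity) converge to
`(1/π) ∫_β^1 f(b(1 − t²) + t√(1 − b²(1 − t²))) dt/√(1 − t²)
  + (1/(2π)) ∫_α^{2π−α} f((ζ(θ) + 1/ζ(θ))/2) dθ`, where `ζ(θ) = b(1 − e^{iθ})`. -/
theorem stmt_14 (b : ℝ) (hb : b < -1/2)
    (β : ℝ) (hβ : β = 1 - 1 / (2 * b ^ 2))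
    (α : ℝ) (hα : α = Real.arccos β)
    (P : ℕ → Polynomial ℂ)
    (hP : ∀ n, 1 ≤ n → (P n).degree = n ∧
      ∀ z s : ℂ, s ^ 2 = z ^ 2 - 1 →
        (P n).eval z = (z - (b : ℂ) + s) ^ n + (z - (b : ℂ) - s) ^ n - (-(b : ℂ)) ^ n) :
    ∀ f : BoundedContinuousFunction ℂ ℝ,
      Tendsto (fun n : ℕ => (1 / (n : ℝ)) * ((P n).roots.map (fun z => f z)).sum) atTop
        (nhds
          ((1 / Real.pi) *
            (∫ t in β..1,
              f (((b * (1 - t ^ 2) + t * Real.sqrt (1 - b ^ 2 * (1 - t ^ 2)) : ℝ) : ℂ)) /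
                Real.sqrt (1 - t ^ 2)) +
          (1 / (2 * Real.pi)) *
            (∫ θ in α..(2 * Real.pi - α),
              f (((b : ℂ) * (1 - Complex.exp (θ * Complex.I)) +
                  1 / ((b : ℂ) * (1 - Complex.exp (θ * Complex.I)))) / 2)))) := by
  intro f
  have hb₀ : b < 0 := by linarith
  have hβ' : β ∈ Set.Ioo (-1) 1 := hβ ▸ one_sub_one_div_two_mul_sq_mem_Ioo hb
  have hα₀ : 0 < α := hα ▸ Real.arccos_pos.2 hβ'.2
  have hαπ : α < Real.pi := hα ▸ Real.arccos_lt_pi.2 hβ'.1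
  have hcos : 2 * b ^ 2 * (1 - Real.cos α) = 1 := by
    rw [hα, Real.cos_arccos hβ'.1.le hβ'.2.le, hβ, sub_sub_cancel]
    exact mul_one_div_cancel (by simp [hb₀.ne])
  have hFaber : ∀ n ≠ 0, IsAirfoilFaber b n (P n) := fun n hn =>
    have h := hP n (Nat.one_le_iff_ne_zero.2 hn)
    ⟨h.1, h.2⟩
  have hlim := tendsto_average_roots hb₀ hα₀ hαπ hcos hFaber f
  have hsubst := integral_div_sqrt_one_sub_sq_eq_integral_cos hβ'.1.le hβ'.2.le
    fun t => f (segmentPoint b t)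
  rw [integral_airfoilMeasure hb₀.ne hα₀ hαπ.le, hα, ← hsubst, ← hα] at hlim
  exact hlim
end

section
/- Let b ∈ ℂ with −1/2 ≤ Re b < 0 (corresponding to 1 < R cos θ ≤ 3/2). Then all zeros of f_n approach the arc 𝒜 as n → ∞: for every ε > 0 there exists N such that for all n ≥ N, every zero of f_n lies within distance ε of 𝒜. -/
/-!
Write `z = (w + w') / 2` with `w * w' = 1` and `‖w' - b‖ ≤ ‖w - b‖`, so that
`f_n z = (w - b) ^ n + (w' - b) ^ n - (-b) ^ n`. The arc is where the first two bases have the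
same modulus. Inversion maps the disc `‖ζ - b‖ ≤ ‖b‖` into the half-plane `1 / 2 ≤ re (b * ζ)`,
which for `|re b| ≤ 1 / 2` misses the open disc; hence off the arc `w - b` strictly dominates both
`w' - b` and `-b`. By compactness, away from the arc it dominates by a uniform factor `q < 1`, and
there `f_n` has no zeros as soon as `2 * q ^ n < 1`.
-/

open Filter Metric Set

lemma eventually_pow_add_pow_ne_pow {𝕜 : Type*} [NormedDivisionRing 𝕜] {q : ℝ} (hq₀ : 0 ≤ q)
    (hq₁ : q < 1) :
    ∀ᶠ n in atTop, ∀ u v c : 𝕜, u ≠ 0 → ‖v‖ ≤ q * ‖u‖ → ‖c‖ ≤ q * ‖u‖ → u ^ n + v ^ n ≠ c ^ n := by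
  filter_upwards [(tendsto_pow_atTop_nhds_zero_of_lt_one hq₀ hq₁).eventually_lt_const one_half_pos]
    with n hn u v c hu hv hc heq
  have hu_pow : 0 < ‖u‖ ^ n := pow_pos (norm_pos_iff.2 hu) n
  have : ‖u‖ ^ n < ‖u‖ ^ n := calc
    ‖u‖ ^ n = ‖c ^ n - v ^ n‖ := by rw [← heq, add_sub_cancel_right, norm_pow]
    _ ≤ ‖c‖ ^ n + ‖v‖ ^ n := by simpa only [norm_pow] using norm_sub_le (c ^ n) (v ^ n)
    _ ≤ (q * ‖u‖) ^ n + (q * ‖u‖) ^ n := by gcongr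
    _ = 2 * q ^ n * ‖u‖ ^ n := by ring
    _ < ‖u‖ ^ n := mul_lt_of_lt_one_left hu_pow (by linarith)
  exact this.false

lemma max_norm_sub_le_half_mul_of_le_norm {𝕜 : Type*} [NormedDivisionRing 𝕜] {b w w' : 𝕜}
    (hw : w * w' = 1) (h : 3 * (1 + ‖b‖) ≤ ‖w‖) :
    max ‖w' - b‖ ‖b‖ ≤ 1 / 2 * ‖w - b‖ := by
  have hb := norm_nonneg b
  have hw'_le : ‖w'‖ ≤ 1 := by
    have hnorm : ‖w‖ * ‖w'‖ = 1 := by rw [← norm_mul, hw, norm_one]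
    nlinarith [norm_nonneg w']
  have hlower := norm_sub_norm_le w b
  have hupper := norm_sub_le w' b
  exact max_le (by linarith) (by linarith)

lemma exists_lt_one_forall_le_mul_of_isCompact {X : Type*} [TopologicalSpace X] {K : Set X}
    (hK : IsCompact K) {f g : X → ℝ} (hf : ContinuousOn f K) (hg : ContinuousOn g K)
    (hg_pos : ∀ x ∈ K, 0 < g x) (hfg : ∀ x ∈ K, f x < g x) :
    ∃ q < 1, ∀ x ∈ K, f x ≤ q * g x := by
  rcases K.eq_empty_or_nonempty with rfl | hne
  · exact ⟨0, one_pos, by simp⟩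
  · obtain ⟨x₀, hx₀, hmax⟩ := hK.exists_isMaxOn hne (hf.div hg fun x hx ↦ (hg_pos x hx).ne')
    exact ⟨f x₀ / g x₀, (div_lt_one (hg_pos x₀ hx₀)).2 (hfg x₀ hx₀),
      fun x hx ↦ (div_le_iff₀ (hg_pos x hx)).1 (hmax hx)⟩

lemma exists_add_sq_eq_four_mul_of_norm_eq {u v : ℂ} (h : ‖u‖ = ‖v‖) :
    ∃ ρ ∈ Icc (0 : ℝ) 1, (u + v) ^ 2 = 4 * ρ * (u * v) := by
  rcases eq_or_ne u 0 with rfl | hu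
  · obtain rfl : v = 0 := by simpa using h.symm
    exact ⟨0, by simp, by simp⟩
  have hu_pos : 0 < ‖u‖ := norm_pos_iff.2 hu
  have key : (u + v) ^ 2 * (‖u‖ : ℂ) ^ 2 = (‖u + v‖ : ℂ) ^ 2 * (u * v) := by
    have hvv : starRingEnd ℂ v * v = (‖u‖ : ℂ) ^ 2 := h ▸ Complex.conj_mul' v
    rw [← Complex.conj_mul' (u + v), map_add]
    linear_combination (-(u + v) * v) * Complex.conj_mul' u - (u + v) * u * hvv
  refine ⟨‖u + v‖ ^ 2 / (4 * ‖u‖ ^ 2), ⟨by positivity, (div_le_one (by positivity)).2 ?_⟩, ?_⟩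
  · calc
      ‖u + v‖ ^ 2 ≤ (‖u‖ + ‖v‖) ^ 2 := by gcongr; exact norm_add_le u v
      _ = 4 * ‖u‖ ^ 2 := by rw [← h]; ring
  · have : (‖u‖ : ℂ) ≠ 0 := mod_cast hu_pos.ne'
    push_cast
    field_simp
    linear_combination key

/-- The arc `𝒜` that attracts the zeros of the Faber polynomials of the Joukowski airfoil with
parameter `b`, where `s` runs over both square roots of `ρ * (1 - b ^ 2 + b ^ 2 * ρ)`. -/
def faberArc (b : ℂ) : Set ℂ :=
  {z | ∃ ρ : ℝ, ρ ∈ Icc (0 : ℝ) 1 ∧ ∃ s : ℂ,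
    s ^ 2 = (ρ : ℂ) * (1 - b ^ 2 + b ^ 2 * (ρ : ℂ)) ∧ z = b * (1 - (ρ : ℂ)) + s}

/-- The pairs of Joukowski preimages `w`, `w'` of the points `z = (w + w') / 2` at distance at
least `ε` from the arc, ordered so that `w - b` is the larger base in the Faber polynomial. -/
def preimagesOffArc (b : ℂ) (ε : ℝ) : Set (ℂ × ℂ) :=
  {p | p.1 * p.2 = 1 ∧ ‖p.2 - b‖ ≤ ‖p.1 - b‖ ∧ (p.1 + p.2) / 2 ∉ thickening ε (faberArc b)}

section

variable {b w w' z : ℂ} {ε : ℝ}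

lemma mem_faberArc_iff :
    z ∈ faberArc b ↔ ∃ ρ ∈ Icc (0 : ℝ) 1, (z - b) ^ 2 = ρ * (b ^ 2 + 1 - 2 * b * z) := by
  refine exists_congr fun ρ ↦ and_congr_right fun _ ↦ ⟨?_, fun h ↦ ?_⟩
  · rintro ⟨s, hs, rfl⟩
    linear_combination hs
  · exact ⟨z - b * (1 - ρ), by linear_combination h, by ring⟩

lemma half_add_mem_faberArc (hw : w * w' = 1) (h : ‖w - b‖ = ‖w' - b‖) :
    (w + w') / 2 ∈ faberArc b := by
  obtain ⟨ρ, hρ, hsq⟩ := exists_add_sq_eq_four_mul_of_norm_eq h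
  exact mem_faberArc_iff.2 ⟨ρ, hρ, by linear_combination hsq / 4 + ρ * hw⟩

lemma half_le_re_mul_of_norm_sub_le (hw : w * w' = 1) (h : ‖w' - b‖ ≤ ‖b‖) :
    1 / 2 ≤ (b * w).re := by
  have hnorm : ‖1 - b * w‖ ≤ ‖b * w‖ := calc
    ‖1 - b * w‖ = ‖w' - b‖ * ‖w‖ := by rw [← norm_mul, ← hw]; ring_nf
    _ ≤ ‖b * w‖ := by rw [norm_mul]; gcongr
  have hsq : ‖1 - b * w‖ ^ 2 ≤ ‖b * w‖ ^ 2 := by gcongr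
  simp only [Complex.sq_norm, Complex.normSq_apply, Complex.sub_re, Complex.sub_im, Complex.one_re,
    Complex.one_im] at hsq
  linarith

lemma norm_le_norm_sub_of_half_le_re_mul (hb : |b.re| ≤ 1 / 2) (hw : 1 / 2 ≤ (b * w).re) :
    ‖b‖ ≤ ‖w - b‖ := by
  have hb₀ : b ≠ 0 := by rintro rfl; norm_num at hw
  have hb_sq : b.re ^ 2 ≤ 1 / 4 := by nlinarith [sq_abs b.re, abs_nonneg b.re]
  refine le_of_mul_le_mul_left ?_ (norm_pos_iff.2 hb₀)
  calc
    ‖b‖ * ‖b‖ = b.re * b.re + b.im * b.im := Complex.norm_mul_self_eq_normSq b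
    _ ≤ (b * w).re - (b.re * b.re - b.im * b.im) := by linarith
    _ = (b * (w - b)).re := by rw [mul_sub, Complex.sub_re, Complex.mul_re b b]
    _ ≤ ‖b * (w - b)‖ := Complex.re_le_norm _
    _ = ‖b‖ * ‖w - b‖ := norm_mul _ _

lemma norm_lt_norm_sub_of_norm_sub_lt (hb : |b.re| ≤ 1 / 2) (hw : w * w' = 1)
    (h : ‖w' - b‖ < ‖w - b‖) : ‖b‖ < ‖w - b‖ := by
  by_contra! hle
  have hre : 1 / 2 ≤ (b * w').re := half_le_re_mul_of_norm_sub_le (mul_comm w w' ▸ hw) hle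
  exact ((norm_le_norm_sub_of_half_le_re_mul hb hre).trans_lt (h.trans_le hle)).false

lemma max_norm_sub_lt_of_mem_preimagesOffArc (hb : |b.re| ≤ 1 / 2) (hε : 0 < ε) {p : ℂ × ℂ}
    (hp : p ∈ preimagesOffArc b ε) : max ‖p.2 - b‖ ‖b‖ < ‖p.1 - b‖ := by
  obtain ⟨hmul, hle, hoff⟩ := hp
  have hlt : ‖p.2 - b‖ < ‖p.1 - b‖ := hle.lt_of_ne fun heq ↦
    hoff (self_subset_thickening hε _ (half_add_mem_faberArc hmul heq.symm))
  exact max_lt hlt (norm_lt_norm_sub_of_norm_sub_lt hb hmul hlt)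

lemma isClosed_preimagesOffArc : IsClosed (preimagesOffArc b ε) := by
  have hmul : IsClosed {p : ℂ × ℂ | p.1 * p.2 = 1} := isClosed_eq (by fun_prop) continuous_const
  have hle : IsClosed {p : ℂ × ℂ | ‖p.2 - b‖ ≤ ‖p.1 - b‖} :=
    isClosed_le (by fun_prop) (by fun_prop)
  have hoff : IsClosed {p : ℂ × ℂ | (p.1 + p.2) / 2 ∉ thickening ε (faberArc b)} :=
    isOpen_thickening.isClosed_compl.preimage (f := fun p : ℂ × ℂ ↦ (p.1 + p.2) / 2) (by fun_prop)
  exact hmul.inter (hle.inter hoff)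

lemma isCompact_preimagesOffArc_inter_norm_le (R : ℝ) :
    IsCompact (preimagesOffArc b ε ∩ {p | ‖p.1‖ ≤ R}) := by
  refine isCompact_of_isClosed_isBounded
    (isClosed_preimagesOffArc.inter (isClosed_le (by fun_prop) continuous_const)) ?_
  refine isBounded_iff_forall_norm_le.2 ⟨R + 2 * ‖b‖, ?_⟩
  rintro p ⟨⟨-, hle, -⟩, hR : ‖p.1‖ ≤ R⟩
  have hb := norm_nonneg b
  have h₁ := norm_sub_le p.1 b
  have h₂ := norm_sub_norm_le p.2 b
  exact max_le (by linarith) (by linarith)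

lemma exists_lt_one_forall_max_norm_sub_le_mul (hb : |b.re| ≤ 1 / 2) (hε : 0 < ε) :
    ∃ q : ℝ, 0 ≤ q ∧ q < 1 ∧
      ∀ p ∈ preimagesOffArc b ε, max ‖p.2 - b‖ ‖b‖ ≤ q * ‖p.1 - b‖ := by
  have hlt {p : ℂ × ℂ} := max_norm_sub_lt_of_mem_preimagesOffArc (p := p) hb hε
  obtain ⟨q, hq₁, hq⟩ := exists_lt_one_forall_le_mul_of_isCompact
    (isCompact_preimagesOffArc_inter_norm_le (3 * (1 + ‖b‖)))
    (f := fun p ↦ max ‖p.2 - b‖ ‖b‖) (g := fun p ↦ ‖p.1 - b‖) (by fun_prop) (by fun_prop)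
    (fun p hp ↦ (norm_nonneg b).trans_lt ((le_max_right _ _).trans_lt (hlt hp.1)))
    (fun p hp ↦ hlt hp.1)
  refine ⟨max q (1 / 2), by positivity, max_lt hq₁ one_half_lt_one, fun p hp ↦ ?_⟩
  rcases le_total ‖p.1‖ (3 * (1 + ‖b‖)) with hnear | hfar
  · exact (hq p ⟨hp, hnear⟩).trans (by gcongr; exact le_max_left _ _)
  · exact (max_norm_sub_le_half_mul_of_le_norm hp.1 hfar).trans (by gcongr; exact le_max_right _ _)

end

lemma exists_mul_eq_one_and_half_add_eq (b z : ℂ) :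
    ∃ w w' : ℂ, w * w' = 1 ∧ (w + w') / 2 = z ∧ ‖w' - b‖ ≤ ‖w - b‖ := by
  obtain ⟨s, hs⟩ := IsAlgClosed.exists_pow_nat_eq (z ^ 2 - 1) two_pos
  rcases le_total ‖z - s - b‖ ‖z + s - b‖ with h | h
  · exact ⟨z + s, z - s, by linear_combination -hs, by ring, h⟩
  · exact ⟨z - s, z + s, by linear_combination -hs, by ring, h⟩

theorem stmt_16_general (b : ℂ) (hb : |b.re| ≤ 1 / 2) :
    ∀ ε > (0 : ℝ), ∃ N : ℕ, ∀ n : ℕ, N ≤ n →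
      ∀ z : ℂ, (∀ s : ℂ, s ^ 2 = z ^ 2 - 1 →
          (z - b + s) ^ n + (z - b - s) ^ n - (-b) ^ n = 0) →
        ∃ w ∈ faberArc b, dist z w ≤ ε := by
  intro ε hε
  obtain ⟨q, hq₀, hq₁, hgap⟩ := exists_lt_one_forall_max_norm_sub_le_mul hb hε
  obtain ⟨N, hN⟩ := eventually_atTop.1 (eventually_pow_add_pow_ne_pow (𝕜 := ℂ) hq₀ hq₁)
  refine ⟨N, fun n hn z hz ↦ ?_⟩
  obtain ⟨w, w', hmul, rfl, hle⟩ := exists_mul_eq_one_and_half_add_eq b z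
  suffices h : (w + w') / 2 ∈ thickening ε (faberArc b) by
    obtain ⟨a, ha, hdist⟩ := mem_thickening_iff.1 h
    exact ⟨a, ha, hdist.le⟩
  by_contra hoff
  have hp : (w, w') ∈ preimagesOffArc b ε := ⟨hmul, hle, hoff⟩
  have hne : w - b ≠ 0 := norm_pos_iff.1 <| (norm_nonneg b).trans_lt <|
    (le_max_right _ _).trans_lt (max_norm_sub_lt_of_mem_preimagesOffArc hb hε hp)
  have hzero : (w - b) ^ n + (w' - b) ^ n - (-b) ^ n = 0 := by
    convert hz ((w - w') / 2) (by linear_combination -hmul) using 4 <;> ring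
  obtain ⟨hw', hc⟩ := max_le_iff.1 (hgap _ hp)
  exact hN n hn _ _ _ hne hw' ((norm_neg b).trans_le hc) (sub_eq_zero.1 hzero)

/-- Let `b ∈ ℂ` with `−1/2 ≤ Re b < 0` (i.e. `1 < R cos θ ≤ 3/2`). Then all
zeros of `f_n` approach the arc `𝒜` as `n → ∞`: for every `ε > 0` there exists `N` such
that for all `n ≥ N`, every zero of `f_n` lies within distance `ε` of `𝒜`. -/
theorem stmt_16 (b : ℂ) (hb₁ : -1/2 ≤ b.re) (hb₂ : b.re < 0)
    (A : Set ℂ)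
    (hA : A = {z : ℂ | ∃ ρ : ℝ, ρ ∈ Set.Icc (0 : ℝ) 1 ∧ ∃ s : ℂ,
      s ^ 2 = (ρ : ℂ) * (1 - b ^ 2 + b ^ 2 * (ρ : ℂ)) ∧ z = b * (1 - (ρ : ℂ)) + s}) :
    ∀ ε > (0 : ℝ), ∃ N : ℕ, ∀ n : ℕ, N ≤ n →
      ∀ z : ℂ, (∀ s : ℂ, s ^ 2 = z ^ 2 - 1 →
          (z - b + s) ^ n + (z - b - s) ^ n - (-b) ^ n = 0) →
        ∃ w ∈ A, dist z w ≤ ε := by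
  subst hA
  exact stmt_16_general b (abs_le.2 ⟨by linarith, by linarith⟩)
end

section
/- Let b ∈ ℂ with −1/2 ≤ Re b < 0. For n ≥ 1 let P_n be the unique polynomial (of degree n) with P_n(z) = (z − b + s)^n + (z − b − s)^n − (−b)^n for all z (s² = z² − 1). Define g(t) = b(1 − t²) + t·(1 − b²(1 − t²))^{1/2} for t ∈ [−1, 1], where (·)^{1/2} is the principal complex square root (for such b the argument 1 − b²(1 − t²) never lies on (−∞, 0]). Then for every bounded continuous f : ℂ → ℝ, (1/n) Σ f(z) over the roots z of P_n counted with multiplicity converges, as n → ∞, to (1/π) ∫_{−1}^{1} f(g(t)) dt/√(1 − t²); i.e., the normalized zero counting measures of the Faber polynomials converge weak-* to the push-forward (U^{−1})_*(μ_{[−1,1]}) of the arcsine measure under the inverse of U. -/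
open Filter

/-!
Parametrize the arc by `z = b + d cos θ`, where `d = d(θ)` is a branch of `(b² + 1 - 2bz)^{1/2}`.
Then `z - b ± s = d exp (± iθ)` for `s = i d sin θ = (z² - 1)^{1/2}`, so the Faber polynomial
becomes `P_n(z) = dⁿ (2 cos nθ - (-b / d)ⁿ)`. Now `d² + 2bd cos θ + b² = 1` says that
`w = b + d exp (iθ)` and `w' = b + d exp (-iθ)` are inverse to each other, and for
`|Re b| ≤ 1 / 2` this prevents both from lying in the disc of radius `‖b‖` about `b` unless
`w = w' = ±1`; hence `‖b‖ < ‖d‖` on `(0, π)`. On compact subsets of `(0, π)` the term `(-b / d)ⁿ`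
is therefore exponentially small, and by the minimum modulus principle `P_n` has a zero at an
angle within `1 / n` of each zero of `cos nθ` there. These account for all but a small proportion
of the `n` roots, so the averages over the roots behave like Riemann sums in `θ`, and `t = cos θ`
turns `dθ / π` into the arcsine measure.
-/

namespace Joukowski

open Set MeasureTheory
open scoped Topology Polynomial

section RiemannSums

variable {E : Type*} [NormedAddCommGroup E] [NormedSpace ℝ E] [CompleteSpace E] {F : ℝ → E}

lemma norm_smul_sub_integral_le {u v : ℝ} (huv : u ≤ v) (hF : ContinuousOn F (Icc u v))
    {y : E} {C : ℝ} (hC : ∀ t ∈ Icc u v, ‖y - F t‖ ≤ C) :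
    ‖(v - u) • y - ∫ t in u..v, F t‖ ≤ C * (v - u) := by
  have hint : IntervalIntegrable F volume u v := hF.intervalIntegrable_of_Icc huv
  rw [← intervalIntegral.integral_const, ← intervalIntegral.integral_sub (by simp) hint,
    ← abs_of_nonneg (sub_nonneg.2 huv)]
  refine intervalIntegral.norm_integral_le_of_norm_le_const fun t ht => hC t ?_
  rw [uIoc_of_le huv] at ht
  exact Ioc_subset_Icc_self ht

lemma Icc_cell_subset {a h : ℝ} (hh : 0 ≤ h) {k n : ℕ} (hk : k < n) :
    Icc (a + k * h) (a + (k + 1) * h) ⊆ Icc a (a + n * h) := by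
  have hkn : (k + 1 : ℝ) ≤ n := mod_cast hk
  exact Icc_subset_Icc (le_add_of_nonneg_right (by positivity)) (by gcongr)

lemma norm_riemannSum_sub_integral_le {h C : ℝ} (hh : 0 ≤ h) {a : ℝ} {n : ℕ}
    (hF : ContinuousOn F (Icc a (a + n * h))) {ξ : ℕ → ℝ}
    (hC : ∀ k < n, ∀ t ∈ Icc (a + k * h) (a + (k + 1) * h), ‖F (ξ k) - F t‖ ≤ C) :
    ‖h • ∑ k ∈ Finset.range n, F (ξ k) - ∫ t in a..(a + n * h), F t‖ ≤ C * (n * h) := by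
  have hle : ∀ k : ℕ, a + k * h ≤ a + (k + 1) * h := fun k => by linarith
  have hsum : ∫ t in a..(a + n * h), F t =
      ∑ k ∈ Finset.range n, ∫ t in (a + k * h)..(a + (k + 1) * h), F t := by
    have := intervalIntegral.sum_integral_adjacent_intervals (f := F) (μ := volume) (n := n)
      (a := fun k : ℕ => a + k * h) fun k hk => by
        push_cast
        exact (hF.mono (Icc_cell_subset hh hk)).intervalIntegrable_of_Icc (hle k)
    simpa using this.symm
  rw [hsum, Finset.smul_sum, ← Finset.sum_sub_distrib]
  calc _ ≤ ∑ _k ∈ Finset.range n, C * h := by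
        refine norm_sum_le_of_le _ fun k hk => ?_
        have hk := Finset.mem_range.1 hk
        have hlen : a + (k + 1) * h - (a + k * h) = h := by ring
        simpa only [hlen] using
          norm_smul_sub_integral_le (hle k) (hF.mono (Icc_cell_subset hh hk)) (hC k hk)
    _ = C * (n * h) := by
        rw [Finset.sum_const, Finset.card_range, nsmul_eq_mul]
        ring

theorem tendsto_riemannSum {a b : ℝ} (hab : a ≤ b) (hF : ContinuousOn F (Icc a b))
    {ξ : ℕ → ℕ → ℝ} (hξ : ∀ n : ℕ, ∀ k < n,
      ξ n k ∈ Icc (a + k * ((b - a) / n)) (a + (k + 1) * ((b - a) / n))) :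
    Tendsto (fun n : ℕ => ((b - a) / n) • ∑ k ∈ Finset.range n, F (ξ n k)) atTop
      (𝓝 (∫ t in a..b, F t)) := by
  rw [Metric.tendsto_nhds]
  intro ε hε
  have : 0 ≤ b - a := sub_nonneg.2 hab
  obtain ⟨δ, hδ, hFδ⟩ := Metric.uniformContinuousOn_iff_le.1
    (isCompact_Icc.uniformContinuousOn_of_continuous hF) (ε / (b - a + 1)) (by positivity)
  filter_upwards [eventually_gt_atTop 0,
    (tendsto_const_div_atTop_nhds_zero_nat (b - a)).eventually (gt_mem_nhds hδ)] with n hn hmesh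
  set h := (b - a) / n
  have hh : 0 ≤ h := by positivity
  have hnh : a + n * h = b := by simp only [h]; field_simp; ring
  have hsub : ∀ k < n, Icc (a + k * h) (a + (k + 1) * h) ⊆ Icc a b :=
    fun k hk => hnh ▸ Icc_cell_subset hh hk
  have hbound := norm_riemannSum_sub_integral_le hh (hnh ▸ hF) (ξ := ξ n)
    fun k hk t ht => by
      rw [← dist_eq_norm]
      refine hFδ _ (hsub k hk (hξ n k hk)) t (hsub k hk ht) ?_
      refine (Real.dist_le_of_mem_Icc (hξ n k hk) ht).trans ?_
      linarith
  rw [hnh] at hbound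
  rw [dist_eq_norm]
  calc _ ≤ ε / (b - a + 1) * (n * h) := hbound
    _ = ε * ((b - a) / (b - a + 1)) := by rw [← eq_sub_iff_add_eq'.2 hnh]; ring
    _ < ε := mul_lt_of_lt_one_right hε ((div_lt_one (by positivity)).2 (by linarith))

end RiemannSums

section Matching

variable {α E : Type*} [SeminormedAddCommGroup E] {f : α → E} {M : ℝ}

lemma norm_sum_map_le_card_mul (hf : ∀ x, ‖f x‖ ≤ M) (s : Multiset α) :
    ‖(s.map f).sum‖ ≤ s.card * M := by
  refine (norm_multiset_sum_le _).trans ?_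
  rw [Multiset.map_map, ← nsmul_eq_mul, ← Multiset.card_map (fun x => ‖f x‖) s]
  refine Multiset.sum_le_card_nsmul _ _ fun r hr => ?_
  obtain ⟨x, -, rfl⟩ := Multiset.mem_map.1 hr
  exact hf x

lemma norm_sum_map_sub_sum_le {ι : Type*} (hf : ∀ x, ‖f x‖ ≤ M) {s : Multiset α}
    {I S : Finset ι} (hSI : S ⊆ I) (hcard : s.card = I.card) {x : ι → α} (hx : InjOn x S)
    (hxs : ∀ k ∈ S, x k ∈ s) (y : ι → α) :
    ‖(s.map f).sum - ∑ k ∈ I, f (y k)‖ ≤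
      ∑ k ∈ S, ‖f (x k) - f (y k)‖ + 2 * M * (I.card - S.card) := by
  classical
  obtain ⟨u, rfl⟩ : ∃ u, s = S.val.map x + u := by
    refine Multiset.le_iff_exists_add.1 ((Multiset.le_iff_subset ?_).2 fun z hz => ?_)
    · exact S.nodup.map_on fun i hi j hj => hx hi hj
    · obtain ⟨k, hk, rfl⟩ := Multiset.mem_map.1 hz
      exact hxs k hk
  have hu : (u.card : ℝ) = I.card - S.card := by
    rw [← hcard]; simp
  have hI : ((I \ S).card : ℝ) = I.card - S.card := Finset.cast_card_sdiff hSI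
  have hrest : ‖∑ k ∈ I \ S, f (y k)‖ ≤ (I \ S).card * M :=
    norm_sum_map_le_card_mul (fun k => hf (y k)) (I \ S).val
  have hsplit : ((S.val.map x + u).map f).sum - ∑ k ∈ I, f (y k) =
      ∑ k ∈ S, (f (x k) - f (y k)) + ((u.map f).sum - ∑ k ∈ I \ S, f (y k)) := by
    rw [← Finset.sum_sdiff hSI, Finset.sum_sub_distrib, Multiset.map_add, Multiset.sum_add,
      Multiset.map_map]
    simp only [Finset.sum_eq_multiset_sum, Function.comp_apply]
    abel
  rw [hsplit]
  calc _ ≤ ∑ k ∈ S, ‖f (x k) - f (y k)‖ + (u.card * M + (I \ S).card * M) :=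
        norm_add_le_of_le (norm_sum_le _ _)
          (norm_sub_le_of_le (norm_sum_map_le_card_mul hf u) hrest)
    _ = _ := by rw [hu, hI]; ring

theorem tendsto_average_sub_of_matching [NormedSpace ℝ E] (hf : ∀ x, ‖f x‖ ≤ M)
    {s : ℕ → Multiset α}
    (hs : ∀ᶠ n in atTop, (s n).card = n) {y : ℕ → ℕ → α}
    (hmatch : ∀ ε > 0, ∀ᶠ n : ℕ in atTop, ∃ S ⊆ Finset.range n, (n - S.card : ℝ) ≤ ε * n ∧
      ∃ x : ℕ → α, InjOn x S ∧ ∀ k ∈ S, x k ∈ s n ∧ ‖f (x k) - f (y n k)‖ ≤ ε) :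
    Tendsto (fun n : ℕ => (1 / n : ℝ) • ((s n).map f).sum -
      (1 / n : ℝ) • ∑ k ∈ Finset.range n, f (y n k)) atTop (𝓝 0) := by
  rw [Metric.tendsto_nhds]
  intro ε hε
  have hden : 0 < 2 * (1 + 2 * |M|) := by positivity
  filter_upwards [hs, hmatch _ (div_pos hε hden), eventually_gt_atTop 0] with
    n hcard ⟨S, hS, hScard, x, hx, hxS⟩ hn
  set η := ε / (2 * (1 + 2 * |M|))
  have : 0 < η := div_pos hε hden
  have hSn : (S.card : ℝ) ≤ n := by
    simpa using Finset.card_le_card hS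
  have hsum : ‖((s n).map f).sum - ∑ k ∈ Finset.range n, f (y n k)‖ ≤ n * (ε / 2) := by
    calc _ ≤ ∑ k ∈ S, ‖f (x k) - f (y n k)‖ + 2 * |M| * ((Finset.range n).card - S.card) :=
          norm_sum_map_sub_sum_le (fun z => (hf z).trans (le_abs_self M)) hS
            (by rw [hcard, Finset.card_range]) hx (fun k hk => (hxS k hk).1) _
      _ ≤ n * η + 2 * |M| * (η * n) := by
          rw [Finset.card_range]
          gcongr
          calc _ ≤ S.card * η := by
                rw [← nsmul_eq_mul]
                exact Finset.sum_le_card_nsmul _ _ _ fun k hk => (hxS k hk).2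
            _ ≤ n * η := by gcongr
      _ = n * (ε / 2) := by simp only [η]; field_simp
  rw [dist_zero_right, ← smul_sub, norm_smul, Real.norm_of_nonneg (by positivity)]
  calc _ ≤ 1 / n * (n * (ε / 2)) := by gcongr
    _ = ε / 2 := by field_simp
    _ < ε := half_lt_self hε

end Matching

section PerturbedCosine

theorem exists_mem_closure_eq_zero_of_norm_lt {E : Type*} [NormedAddCommGroup E]
    [NormedSpace ℂ E] [Nontrivial E] {U : Set E} (hU : Bornology.IsBounded U) {f : E → ℂ}
    (hf : DiffContOnCl ℂ f U) {c : ℝ} (hc : ∀ z ∈ frontier U, c ≤ ‖f z‖) {z₀ : E}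
    (hz₀ : z₀ ∈ closure U) (hlt : ‖f z₀‖ < c) : ∃ z ∈ closure U, f z = 0 := by
  by_contra! hne
  have hpos : 0 < ‖f z₀‖ := norm_pos_iff.2 (hne z₀ hz₀)
  have hinv : ‖(f z₀)⁻¹‖ ≤ c⁻¹ :=
    Complex.norm_le_of_forall_mem_frontier_norm_le hU (hf.inv hne)
      (fun z hz => by
        rw [Pi.inv_apply, norm_inv]
        exact inv_anti₀ (hpos.trans hlt) (hc z hz)) hz₀
  rw [norm_inv, inv_le_inv₀ hpos (hpos.trans hlt)] at hinv
  exact hlt.not_ge hinv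

lemma four_fifths_mul_norm_le_norm_sin {w : ℂ} (hw : ‖w‖ ≤ 1) :
    4 / 5 * ‖w‖ ≤ ‖Complex.sin w‖ := by
  have htaylor := Complex.sin_bound hw
  have hsplit : ‖w‖ ≤ ‖Complex.sin w‖ + ‖Complex.sin w - (w - w ^ 3 / 6)‖ + ‖w ^ 3 / 6‖ :=
    calc ‖w‖ = ‖Complex.sin w - (Complex.sin w - (w - w ^ 3 / 6)) + w ^ 3 / 6‖ := by
          congr 1; ring
      _ ≤ _ := norm_add_le_of_le (norm_sub_le _ _) le_rfl
  have hcube : ‖w ^ 3 / 6‖ = ‖w‖ ^ 3 / 6 := by simp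
  have h3 : ‖w‖ ^ 3 ≤ ‖w‖ := pow_le_of_le_one (norm_nonneg w) hw (by norm_num)
  have h5 : ‖w‖ ^ 5 ≤ ‖w‖ := pow_le_of_le_one (norm_nonneg w) hw (by norm_num)
  linarith [norm_nonneg w]

lemma norm_cos_add_of_cos_eq_zero {x : ℂ} (hx : Complex.cos x = 0) (w : ℂ) :
    ‖Complex.cos (x + w)‖ = ‖Complex.sin w‖ := by
  have hsin : ‖Complex.sin x‖ = 1 := by
    have hsq : Complex.sin x ^ 2 = 1 := by simpa [hx] using Complex.sin_sq_add_cos_sq x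
    rw [← pow_eq_one_iff_of_nonneg (norm_nonneg _) two_ne_zero, ← norm_pow, hsq, norm_one]
  rw [Complex.cos_add, hx, zero_mul, zero_sub, norm_neg, norm_mul, hsin, one_mul]

lemma exists_two_mul_cos_eq {ω z₀ : ℂ} (hω : ω ≠ 0) (hz₀ : Complex.cos (ω * z₀) = 0) {h : ℂ → ℂ}
    (hd : DiffContOnCl ℂ h (Metric.ball z₀ (1 / ‖ω‖)))
    (hh : ∀ z ∈ Metric.closedBall z₀ (1 / ‖ω‖), ‖h z‖ < 4 / 5) :
    ∃ z ∈ Metric.closedBall z₀ (1 / ‖ω‖), 2 * Complex.cos (ω * z) = h z := by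
  have hω' : 0 < ‖ω‖ := norm_pos_iff.2 hω
  have hr : 0 < 1 / ‖ω‖ := by positivity
  have hcos : DiffContOnCl ℂ (fun z => 2 * Complex.cos (ω * z)) (Metric.ball z₀ (1 / ‖ω‖)) :=
    Differentiable.diffContOnCl (by fun_prop)
  have hfrontier : ∀ z ∈ frontier (Metric.ball z₀ (1 / ‖ω‖)),
      4 / 5 ≤ ‖2 * Complex.cos (ω * z) - h z‖ := by
    rw [frontier_ball z₀ hr.ne']
    intro z hz
    have hw : ‖ω * (z - z₀)‖ = 1 := by
      rw [norm_mul, mem_sphere_iff_norm.1 hz, mul_one_div_cancel hω'.ne']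
    have hsin := four_fifths_mul_norm_le_norm_sin hw.le
    rw [← norm_cos_add_of_cos_eq_zero hz₀, ← mul_add, add_sub_cancel, hw] at hsin
    have hhz := hh z (Metric.sphere_subset_closedBall hz)
    have htri := norm_sub_norm_le (2 * Complex.cos (ω * z)) (h z)
    rw [norm_mul, Complex.norm_two] at htri
    linarith
  obtain ⟨z, hz, hzero⟩ := exists_mem_closure_eq_zero_of_norm_lt Metric.isBounded_ball
    (hcos.sub hd) hfrontier (subset_closure (Metric.mem_ball_self hr))
    (by simpa [hz₀] using hh z₀ (Metric.mem_closedBall_self hr.le))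
  rw [closure_ball z₀ hr.ne'] at hz
  exact ⟨z, hz, sub_eq_zero.1 hzero⟩

theorem eventually_exists_two_mul_cos_eq_pow {Ω K : Set ℂ} (hΩ : IsOpen Ω) (hK : IsCompact K)
    (hKΩ : K ⊆ Ω) {u : ℂ → ℂ} (hu : DifferentiableOn ℂ u Ω) (hu₁ : ∀ z ∈ Ω, ‖u z‖ < 1) :
    ∀ᶠ n : ℕ in atTop, ∀ z₀ ∈ K, Complex.cos (n * z₀) = 0 →
      ∃ z ∈ Ω, ‖z - z₀‖ ≤ 1 / n ∧ 2 * Complex.cos (n * z) = u z ^ n := by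
  obtain ⟨r, hr, hrΩ⟩ := hK.exists_cthickening_subset_open hΩ hKΩ
  obtain ⟨q, hq₁, hq⟩ : ∃ q < 1, ∀ z ∈ Metric.cthickening r K, ‖u z‖ ≤ q :=
    IsCompact.exists_forall_le' (α := ℝᵒᵈ) hK.cthickening (hu.continuousOn.mono hrΩ).norm
      fun z hz => hu₁ z (hrΩ hz)
  have hpow := (tendsto_pow_atTop_nhds_zero_of_lt_one (le_max_right q 0)
    (max_lt hq₁ one_pos)).eventually (gt_mem_nhds (show (0 : ℝ) < 4 / 5 by norm_num))
  have hradius := (tendsto_one_div_atTop_nhds_zero_nat (𝕜 := ℝ)).eventually (gt_mem_nhds hr)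
  filter_upwards [hpow, hradius, eventually_ne_atTop 0] with n hpow hradius hn z₀ hz₀ hcos
  have hball : Metric.closedBall z₀ (1 / n) ⊆ Metric.cthickening r K :=
    (Metric.closedBall_subset_closedBall hradius.le).trans
      (Metric.closedBall_subset_cthickening hz₀ r)
  have hsmall : ∀ z ∈ Metric.closedBall z₀ (1 / n), ‖u z ^ n‖ < 4 / 5 := fun z hz => by
    rw [norm_pow]
    refine lt_of_le_of_lt ?_ hpow
    gcongr
    exact (hq z (hball hz)).trans (le_max_left q 0)
  have hdiff : DiffContOnCl ℂ (fun z => u z ^ n) (Metric.ball z₀ (1 / n)) :=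
    ((hu.fun_pow n).mono (hball.trans hrΩ)).diffContOnCl_ball Subset.rfl
  obtain ⟨z, hz, hzero⟩ := exists_two_mul_cos_eq (Nat.cast_ne_zero.2 hn) hcos
    (by rwa [Complex.norm_natCast]) (by rwa [Complex.norm_natCast])
  rw [Complex.norm_natCast] at hz
  exact ⟨z, hrΩ (hball hz), mem_closedBall_iff_norm.1 hz, hzero⟩

end PerturbedCosine

section Airfoil

variable {b θ : ℂ}

/-- The quantity `1 - b² (1 - t²)` under the square root in `g`, at `t = cos θ`. -/
noncomputable def radicand (b θ : ℂ) : ℂ := 1 - b ^ 2 * Complex.sin θ ^ 2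

/-- The denominator `(b² + 1 - 2bz)^{1/2}` of `U` at `z = arc b θ`. -/
noncomputable def denom (b θ : ℂ) : ℂ := (radicand b θ).sqrt - b * Complex.cos θ

/-- The parametrization of the arc `𝒜` by the angle `θ`: `arc b θ = g (cos θ)`, that is,
`U (arc b θ) = cos θ`. Complex angles are allowed, as zeros of the Faber polynomials are located
at angles near the real axis. -/
noncomputable def arc (b θ : ℂ) : ℂ := b + Complex.cos θ * denom b θ

lemma denom_sq_add (b θ : ℂ) :
    denom b θ ^ 2 + 2 * b * Complex.cos θ * denom b θ + b ^ 2 = 1 := by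
  have hsqrt : (radicand b θ).sqrt ^ 2 = 1 - b ^ 2 * Complex.sin θ ^ 2 :=
    Complex.cpow_ofNat_inv_pow _ 2
  rw [denom]
  linear_combination hsqrt - b ^ 2 * Complex.sin_sq_add_cos_sq θ

lemma denom_sq (b θ : ℂ) : denom b θ ^ 2 = 1 + b ^ 2 - 2 * b * arc b θ := by
  rw [arc]
  linear_combination denom_sq_add b θ

lemma add_denom_mul_exp_mul_add_denom_mul_exp_neg (b θ : ℂ) :
    (b + denom b θ * Complex.exp (θ * Complex.I)) *
      (b + denom b θ * Complex.exp (-θ * Complex.I)) = 1 := by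
  have hexp : Complex.exp (θ * Complex.I) * Complex.exp (-θ * Complex.I) = 1 := by
    rw [← Complex.exp_add, neg_mul, add_neg_cancel, Complex.exp_zero]
  linear_combination denom_sq_add b θ + denom b θ ^ 2 * hexp - b * denom b θ * Complex.two_cos θ

lemma sqrt_re_le_re_sqrt (w : ℂ) : √w.re ≤ w.sqrt.re := by
  rw [Complex.sqrt, Complex.cpow_inv_two_re]
  exact Real.sqrt_le_sqrt (by linarith [w.re_le_norm])

lemma three_fourths_le_re_radicand (hb : |b.re| ≤ 1 / 2) (θ : ℝ) :
    3 / 4 ≤ (radicand b θ).re := by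
  have hsq : (b ^ 2).re ≤ 1 / 4 := by
    rw [pow_two, Complex.mul_re]
    nlinarith [sq_le_sq.2 (hb.trans (le_abs_self _)), sq_nonneg b.im]
  have hre : (radicand b θ).re = 1 - (b ^ 2).re * Real.sin θ ^ 2 := by
    rw [radicand, ← Complex.ofReal_sin, ← Complex.ofReal_pow, Complex.sub_re, Complex.re_mul_ofReal,
      Complex.one_re]
  rw [hre]
  nlinarith [Real.sin_sq_le_one θ, sq_nonneg (Real.sin θ)]

lemma radicand_mem_slitPlane (hb : |b.re| ≤ 1 / 2) (θ : ℝ) : radicand b θ ∈ Complex.slitPlane :=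
  Or.inl <| lt_of_lt_of_le (by norm_num) (three_fourths_le_re_radicand hb θ)

lemma re_denom_pos (hb : |b.re| ≤ 1 / 2) (θ : ℝ) : 0 < (denom b θ).re := by
  have hsqrt : 1 / 2 < (radicand b θ).sqrt.re :=
    calc (1 / 2 : ℝ) < √(3 / 4) := Real.lt_sqrt_of_sq_lt (by norm_num)
      _ ≤ √(radicand b θ).re := Real.sqrt_le_sqrt (three_fourths_le_re_radicand hb θ)
      _ ≤ _ := sqrt_re_le_re_sqrt _
  have hcos : b.re * Real.cos θ ≤ 1 / 2 :=
    calc b.re * Real.cos θ ≤ |b.re| * |Real.cos θ| := by rw [← abs_mul]; exact le_abs_self _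
      _ ≤ 1 / 2 * 1 := by gcongr; exact Real.abs_cos_le_one θ
      _ = 1 / 2 := mul_one _
  rw [denom, ← Complex.ofReal_cos, Complex.sub_re, Complex.re_mul_ofReal]
  linarith

/- Inversion fixes `±1` and sends the disc of radius `‖b‖` about `b`, which has `0` on its boundary,
to the half-plane `1 ≤ 2 * Re (b * w)`; for `|Re b| ≤ 1 / 2` the disc and its image meet only
in `±1`. -/
lemma eq_of_mul_eq_one_of_norm_sub_le {w w' : ℂ} (hb : |b.re| ≤ 1 / 2) (hw : ‖w - b‖ ≤ ‖b‖)
    (hw' : ‖w' - b‖ ≤ ‖b‖) (hmul : w * w' = 1) : w = w' := by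
  have hdisc : w.re ^ 2 + w.im ^ 2 ≤ 2 * (b.re * w.re + b.im * w.im) := by
    have := pow_le_pow_left₀ (norm_nonneg _) hw 2
    simp only [Complex.sq_norm, Complex.normSq_apply, Complex.sub_re, Complex.sub_im] at this
    linarith
  have hhalfplane : 1 ≤ 2 * (b.re * w.re - b.im * w.im) := by
    have hscale : ‖1 - b * w‖ ≤ ‖b * w‖ := by
      calc ‖1 - b * w‖ = ‖w‖ * ‖w' - b‖ := by rw [← norm_mul, mul_sub, hmul, mul_comm b]
        _ ≤ ‖w‖ * ‖b‖ := by gcongr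
        _ = ‖b * w‖ := by rw [norm_mul, mul_comm]
    have := pow_le_pow_left₀ (norm_nonneg _) hscale 2
    simp only [Complex.sq_norm, Complex.normSq_apply, Complex.sub_re, Complex.sub_im,
      Complex.one_re, Complex.one_im, Complex.mul_re, Complex.mul_im] at this
    linarith
  have hsum : 1 + w.re ^ 2 + w.im ^ 2 ≤ 2 * |w.re| :=
    calc 1 + w.re ^ 2 + w.im ^ 2 ≤ 4 * (b.re * w.re) := by linarith
      _ ≤ 4 * (|b.re| * |w.re|) := by rw [← abs_mul]; gcongr; exact le_abs_self _
      _ ≤ 4 * (1 / 2 * |w.re|) := by gcongr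
      _ = 2 * |w.re| := by ring
  rw [← sq_abs w.re] at hsum
  have him : w.im = 0 := by nlinarith [sq_nonneg (|w.re| - 1)]
  have habs : |w.re| - 1 = 0 := by nlinarith [sq_nonneg w.im]
  have hre : w.re ^ 2 = 1 := by rw [← sq_abs, sub_eq_zero.1 habs, one_pow]
  have hsq : w * w = 1 := Complex.ext (by simp [him, ← hre, pow_two]) (by simp [him])
  exact mul_left_cancel₀ (left_ne_zero_of_mul_eq_one hmul) (hsq.trans hmul.symm)

lemma norm_lt_norm_denom (hb : |b.re| ≤ 1 / 2) {θ : ℝ} (hθ : θ ∈ Ioo 0 Real.pi) :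
    ‖b‖ < ‖denom b θ‖ := by
  by_contra! hle
  have hd : denom b θ ≠ 0 := fun h => by simpa [h] using re_denom_pos hb θ
  have heq := eq_of_mul_eq_one_of_norm_sub_le hb
    (w := b + denom b θ * Complex.exp (θ * Complex.I))
    (w' := b + denom b θ * Complex.exp (-θ * Complex.I))
    (by simpa [Complex.norm_exp_ofReal_mul_I] using hle)
    (by simpa [Complex.norm_exp] using hle)
    (add_denom_mul_exp_mul_add_denom_mul_exp_neg b θ)
  have hsin : Complex.sin θ = 0 := by
    have hexp := mul_left_cancel₀ hd (add_left_cancel heq)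
    rw [Complex.sin, hexp, sub_self, zero_mul, zero_div]
  exact (Real.sin_pos_of_mem_Ioo hθ).ne' (mod_cast hsin)

/-- An open set of complex angles, containing `(0, π)` when `|Re b| ≤ 1 / 2`, on which `arc b` is
injective and the term `(-b / denom b θ) ^ n` of `IsFaberPolynomial.eval_arc` is negligible. -/
def angleDomain (b : ℂ) : Set ℂ :=
  {θ | (0 < θ.re ∧ θ.re < Real.pi) ∧ radicand b θ ∈ Complex.slitPlane ∧
    0 < (denom b θ).re ∧ ‖b‖ < ‖denom b θ‖}

lemma ofReal_mem_angleDomain (hb : |b.re| ≤ 1 / 2) {θ : ℝ} (hθ : θ ∈ Ioo 0 Real.pi) :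
    (θ : ℂ) ∈ angleDomain b :=
  ⟨hθ, radicand_mem_slitPlane hb θ, re_denom_pos hb θ, norm_lt_norm_denom hb hθ⟩

lemma denom_ne_zero (hθ : θ ∈ angleDomain b) : denom b θ ≠ 0 :=
  norm_pos_iff.1 ((norm_nonneg b).trans_lt hθ.2.2.2)

lemma differentiable_radicand (b : ℂ) : Differentiable ℂ (radicand b) := by
  unfold radicand
  fun_prop

lemma differentiableAt_denom (hθ : radicand b θ ∈ Complex.slitPlane) :
    DifferentiableAt ℂ (denom b) θ :=
  ((Complex.differentiableAt_sqrt hθ).comp θ (differentiable_radicand b θ)).sub (by fun_prop)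

lemma continuousAt_arc (hθ : radicand b θ ∈ Complex.slitPlane) : ContinuousAt (arc b) θ :=
  continuousAt_const.add (Complex.continuous_cos.continuousAt.mul
    (differentiableAt_denom hθ).continuousAt)

lemma isOpen_angleDomain (b : ℂ) : IsOpen (angleDomain b) := by
  refine isOpen_iff_mem_nhds.2 fun θ ⟨⟨h0, hpi⟩, hslit, hre, hnorm⟩ => ?_
  have hdenom := (differentiableAt_denom hslit).continuousAt
  filter_upwards [Complex.continuous_re.continuousAt.eventually_const_lt h0,
    Complex.continuous_re.continuousAt.eventually_lt_const hpi,
    (differentiable_radicand b).continuous.continuousAt.preimage_mem_nhds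
      (Complex.isOpen_slitPlane.mem_nhds hslit),
    (Complex.continuous_re.continuousAt.comp hdenom).eventually_const_lt hre,
    hdenom.norm.eventually_const_lt hnorm] with τ h0 hpi hslit hre hnorm
  exact ⟨⟨h0, hpi⟩, hslit, hre, hnorm⟩

lemma injOn_cos_strip : InjOn Complex.cos {θ | 0 < θ.re ∧ θ.re < Real.pi} := by
  rintro x ⟨hx₀, hx⟩ y ⟨hy₀, hy⟩ hxy
  have := Real.pi_pos
  obtain ⟨k, hk | hk⟩ := Complex.cos_eq_cos_iff.1 hxy
  · have hre : y.re = 2 * k * Real.pi + x.re := by simpa using congrArg Complex.re hk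
    have hk₀ : k = 0 := by
      have : (-1 : ℝ) < k := by nlinarith
      have : (k : ℝ) < 1 := by nlinarith
      have : -1 < k := by exact_mod_cast ‹(-1 : ℝ) < k›
      have : k < 1 := by exact_mod_cast ‹(k : ℝ) < 1›
      lia
    simpa [hk₀] using hk.symm
  · have hre : y.re = 2 * k * Real.pi - x.re := by simpa using congrArg Complex.re hk
    have : (0 : ℝ) < k := by nlinarith
    have : (k : ℝ) < 1 := by nlinarith
    have : 0 < k := by exact_mod_cast ‹(0 : ℝ) < k›
    have : k < 1 := by exact_mod_cast ‹(k : ℝ) < 1›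
    lia

lemma injOn_arc (b : ℂ) : InjOn (arc b) (angleDomain b) := by
  intro x hx y hy hxy
  have hdenom : denom b x = denom b y := by
    have hsq : denom b x ^ 2 = denom b y ^ 2 := by rw [denom_sq, denom_sq, hxy]
    refine (sq_eq_sq_iff_eq_or_eq_neg.1 hsq).resolve_right fun hneg => ?_
    have hre := hx.2.2.1
    rw [hneg, Complex.neg_re] at hre
    linarith [hy.2.2.1]
  have hcos : Complex.cos x = Complex.cos y := by
    rw [arc, arc, hdenom] at hxy
    exact mul_right_cancel₀ (denom_ne_zero hy) (add_left_cancel hxy)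
  exact injOn_cos_strip hx.1 hy.1 hcos

/-- `p` is, up to normalization, the `n`-th Faber polynomial of the airfoil with parameter `b`:
the two determinations of `s = √(z² - 1)` both give `p z = (z - b + s)ⁿ + (z - b - s)ⁿ - (-b)ⁿ`. -/
def IsFaberPolynomial (b : ℂ) (n : ℕ) (p : ℂ[X]) : Prop :=
  p.degree = n ∧ ∀ z s : ℂ, s ^ 2 = z ^ 2 - 1 →
    p.eval z = (z - b + s) ^ n + (z - b - s) ^ n - (-b) ^ n

namespace IsFaberPolynomial

variable {n : ℕ} {p : ℂ[X]}

lemma ne_zero (hp : IsFaberPolynomial b n p) : p ≠ 0 := by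
  rintro rfl
  simpa using hp.1

lemma card_roots (hp : IsFaberPolynomial b n p) : p.roots.card = n :=
  IsAlgClosed.card_roots_eq_natDegree.trans (Polynomial.natDegree_eq_of_degree_eq_some hp.1)

lemma eval_arc (hp : IsFaberPolynomial b n p) (hd : denom b θ ≠ 0) :
    p.eval (arc b θ) =
      denom b θ ^ n * (2 * Complex.cos (n * θ) - (-b / denom b θ) ^ n) := by
  have hs : (denom b θ * Complex.sin θ * Complex.I) ^ 2 = arc b θ ^ 2 - 1 := by
    rw [arc]
    linear_combination denom b θ ^ 2 * Complex.sin θ ^ 2 * Complex.I_sq - denom_sq_add b θ -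
      denom b θ ^ 2 * Complex.sin_sq_add_cos_sq θ
  have hadd : arc b θ - b + denom b θ * Complex.sin θ * Complex.I =
      denom b θ * (Complex.cos θ + Complex.sin θ * Complex.I) := by rw [arc]; ring
  have hsub : arc b θ - b - denom b θ * Complex.sin θ * Complex.I =
      denom b θ * (Complex.cos θ - Complex.sin θ * Complex.I) := by rw [arc]; ring
  have hneg : (Complex.cos θ - Complex.sin θ * Complex.I) ^ n =
      Complex.cos (n * θ) - Complex.sin (n * θ) * Complex.I := by
    simpa [← sub_eq_add_neg] using Complex.cos_add_sin_mul_I_pow n (-θ)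
  rw [hp.2 _ _ hs, hadd, hsub, mul_pow, mul_pow, Complex.cos_add_sin_mul_I_pow, hneg, div_pow]
  field_simp
  ring

end IsFaberPolynomial

end Airfoil

section Nodes

/-- The Chebyshev angle `(2k + 1)π / (2n)`; for `k < n` these are the zeros of `cos (n θ)` in
`(0, π)`. -/
noncomputable def node (n k : ℕ) : ℝ := (k + 1 / 2) * (Real.pi / n)

lemma node_mem_cell (n k : ℕ) : node n k ∈ Icc (k * (Real.pi / n)) ((k + 1) * (Real.pi / n)) := by
  have : 0 ≤ Real.pi / n := by positivity
  constructor <;> simp only [node] <;> gcongr <;> linarith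

lemma cos_natCast_mul_node {n : ℕ} (hn : n ≠ 0) (k : ℕ) :
    Complex.cos (n * (node n k : ℂ)) = 0 := by
  rw [Complex.cos_eq_zero_iff]
  refine ⟨k, ?_⟩
  rw [node]
  push_cast
  field_simp

lemma eq_of_abs_node_sub_node_le {n i j : ℕ} (hn : n ≠ 0)
    (h : |node n i - node n j| ≤ 2 / n) : i = j := by
  have hn₀ : (0 : ℝ) < n := by positivity
  have hdiff : node n i - node n j = (i - j) * Real.pi / n := by rw [node, node]; ring
  rw [hdiff, abs_div, abs_mul, abs_of_pos Real.pi_pos, Nat.abs_cast,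
    div_le_div_iff_of_pos_right hn₀] at h
  have hlt : |(i - j : ℝ)| < 1 := by nlinarith [Real.pi_gt_three, abs_nonneg (i - j : ℝ)]
  have hlt' : |(i - j : ℤ)| < 1 := by exact_mod_cast hlt
  rw [Int.abs_lt_one_iff] at hlt'
  lia

lemma eventually_exists_node_mem_Icc {δ : ℝ} (hδ : 0 < δ) :
    ∀ᶠ n : ℕ in atTop, ∃ S ⊆ Finset.range n, (n - S.card : ℝ) ≤ δ * n ∧
      ∀ k ∈ S, node n k ∈ Icc δ (Real.pi - δ) := by
  filter_upwards [eventually_gt_atTop 0,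
    (tendsto_natCast_atTop_atTop (R := ℝ)).eventually_ge_atTop (6 / δ)] with n hn hlarge
  rw [div_le_iff₀' hδ] at hlarge
  have := Real.pi_pos
  set m := ⌈δ * n / Real.pi⌉₊
  have hδm : δ ≤ m * (Real.pi / n) := by
    have := Nat.le_ceil (δ * n / Real.pi)
    rw [div_le_iff₀ Real.pi_pos] at this
    rw [← mul_div_assoc, le_div_iff₀ (by positivity)]
    exact this
  refine ⟨Finset.Ico m (n - m), fun k hk => ?_, ?_, fun k hk => ?_⟩
  · rw [Finset.mem_Ico] at hk
    exact Finset.mem_range.2 (by lia)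
  · have hm : (m : ℝ) < δ * n / Real.pi + 1 := Nat.ceil_lt_add_one (by positivity)
    have hthird : δ * n / Real.pi ≤ δ * n / 3 := by gcongr; exact Real.pi_gt_three.le
    have hcard : (n : ℝ) ≤ (n - m - m : ℕ) + 2 * m := by norm_cast; lia
    rw [Nat.card_Ico]
    linarith
  · obtain ⟨hmk, hkm⟩ := Finset.mem_Ico.1 hk
    have hkm' : (k + 1 + m : ℝ) ≤ n := by norm_cast; lia
    have hn_pi : n * (Real.pi / n) = Real.pi := by field_simp
    obtain ⟨hle, hge⟩ := node_mem_cell n k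
    constructor
    · calc δ ≤ m * (Real.pi / n) := hδm
        _ ≤ k * (Real.pi / n) := by gcongr
        _ ≤ node n k := hle
    · calc node n k ≤ (k + 1) * (Real.pi / n) := hge
        _ ≤ (n - m) * (Real.pi / n) := by gcongr; linarith
        _ = Real.pi - m * (Real.pi / n) := by rw [sub_mul, hn_pi]
        _ ≤ Real.pi - δ := by gcongr

end Nodes

section Zeros

variable {b : ℂ} {P : ℕ → ℂ[X]}

lemma ofReal_image_Icc_subset_angleDomain (hb : |b.re| ≤ 1 / 2) {δ : ℝ} (hδ : 0 < δ) :
    Complex.ofReal '' Icc δ (Real.pi - δ) ⊆ angleDomain b := by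
  rintro _ ⟨θ, hθ, rfl⟩
  exact ofReal_mem_angleDomain hb ⟨hδ.trans_le hθ.1, hθ.2.trans_lt (sub_lt_self _ hδ)⟩

lemma eventually_exists_eval_arc_eq_zero {K : Set ℂ} (hK : IsCompact K) (hKb : K ⊆ angleDomain b)
    (hP : ∀ n, 1 ≤ n → IsFaberPolynomial b n (P n)) :
    ∀ᶠ n : ℕ in atTop, ∀ θ ∈ K, Complex.cos (n * θ) = 0 →
      ∃ τ ∈ angleDomain b, ‖τ - θ‖ ≤ 1 / n ∧ (P n).eval (arc b τ) = 0 := by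
  have hdiff : DifferentiableOn ℂ (fun θ => -b / denom b θ) (angleDomain b) := fun θ hθ =>
    ((differentiableAt_const _).div (differentiableAt_denom hθ.2.1)
      (denom_ne_zero hθ)).differentiableWithinAt
  have hlt : ∀ θ ∈ angleDomain b, ‖-b / denom b θ‖ < 1 := fun θ hθ => by
    rw [norm_div, norm_neg, div_lt_one (norm_pos_iff.2 (denom_ne_zero hθ))]
    exact hθ.2.2.2
  filter_upwards [eventually_exists_two_mul_cos_eq_pow (isOpen_angleDomain b) hK hKb hdiff hlt,
    eventually_ge_atTop 1] with n hn hn₁ θ hθ hcos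
  obtain ⟨τ, hτ, hclose, hzero⟩ := hn θ hθ hcos
  refine ⟨τ, hτ, hclose, ?_⟩
  rw [(hP n hn₁).eval_arc (denom_ne_zero hτ), hzero, sub_self, mul_zero]

lemma eventually_dist_comp_arc_le {α : Type*} [PseudoMetricSpace α] {f : ℂ → α} (hf : Continuous f)
    {K : Set ℂ} (hK : IsCompact K) (hKb : K ⊆ angleDomain b) {ε : ℝ} (hε : 0 < ε) :
    ∀ᶠ r in 𝓝 (0 : ℝ), ∀ θ ∈ K, ∀ τ, dist τ θ ≤ r → dist (f (arc b τ)) (f (arc b θ)) ≤ ε := by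
  have huc := hK.uniformContinuousAt_of_continuousAt (fun θ => f (arc b θ))
    (fun θ hθ => hf.continuousAt.comp (continuousAt_arc (hKb hθ).2.1))
    (Metric.dist_mem_uniformity hε)
  obtain ⟨r₀, hr₀, huc⟩ := Metric.mem_uniformity_dist.1 huc
  filter_upwards [gt_mem_nhds hr₀] with r hr θ hθ τ hτ
  rw [dist_comm]
  exact (huc (dist_comm θ τ ▸ hτ.trans_lt hr) hθ).le

/- Two nodes sharing the same zero would be within `2 / n` of each other, closer than any two
distinct nodes. -/
theorem eventually_exists_matching_roots (hb : |b.re| ≤ 1 / 2)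
    (hP : ∀ n, 1 ≤ n → IsFaberPolynomial b n (P n)) {α : Type*} [PseudoMetricSpace α] {f : ℂ → α}
    (hf : Continuous f) {ε : ℝ} (hε : 0 < ε) :
    ∀ᶠ n : ℕ in atTop, ∃ S ⊆ Finset.range n, (n - S.card : ℝ) ≤ ε * n ∧
      ∃ x : ℕ → ℂ, InjOn x S ∧
        ∀ k ∈ S, x k ∈ (P n).roots ∧ dist (f (x k)) (f (arc b (node n k))) ≤ ε := by
  have hK : IsCompact (Complex.ofReal '' Icc ε (Real.pi - ε)) :=
    isCompact_Icc.image Complex.continuous_ofReal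
  have hKb := ofReal_image_Icc_subset_angleDomain hb hε
  filter_upwards [eventually_exists_node_mem_Icc hε, eventually_exists_eval_arc_eq_zero hK hKb hP,
    tendsto_one_div_atTop_nhds_zero_nat.eventually (eventually_dist_comp_arc_le hf hK hKb hε),
    eventually_ge_atTop 1] with n ⟨S, hS, hScard, hnode⟩ hzero hfε hn
  have hn₀ : n ≠ 0 := Nat.one_le_iff_ne_zero.1 hn
  have hnodeK : ∀ k ∈ S, (node n k : ℂ) ∈ Complex.ofReal '' Icc ε (Real.pi - ε) :=
    fun k hk => mem_image_of_mem _ (hnode k hk)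
  choose! τ hτ hclose hroot using fun k (hk : k ∈ S) =>
    hzero _ (hnodeK k hk) (cos_natCast_mul_node hn₀ k)
  refine ⟨S, hS, hScard, fun k => arc b (τ k), fun i hi j hj hij => ?_, fun k hk => ⟨?_, ?_⟩⟩
  · have hτij : τ i = τ j := injOn_arc b (hτ i hi) (hτ j hj) hij
    refine eq_of_abs_node_sub_node_le hn₀ ?_
    calc |node n i - node n j| = ‖(τ j - node n j) - (τ i - node n i)‖ := by
          rw [hτij, sub_sub_sub_cancel_left, ← Complex.ofReal_sub, Complex.norm_real,
            Real.norm_eq_abs]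
      _ ≤ 1 / n + 1 / n := norm_sub_le_of_le (hclose j hj) (hclose i hi)
      _ = 2 / n := by ring
  · exact (Polynomial.mem_roots (hP n hn).ne_zero).2 (hroot k hk)
  · exact hfε _ (hnodeK k hk) _ ((dist_eq_norm _ _).trans_le (hclose k hk))

end Zeros

section Limit

variable {b : ℂ}

lemma continuous_arc_ofReal (hb : |b.re| ≤ 1 / 2) : Continuous fun θ : ℝ => arc b θ :=
  continuous_iff_continuousAt.2 fun θ =>
    (continuousAt_arc (radicand_mem_slitPlane hb θ)).comp_of_eq
      Complex.continuous_ofReal.continuousAt rfl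

lemma tendsto_average_arc_node (hb : |b.re| ≤ 1 / 2) {E : Type*} [NormedAddCommGroup E]
    [NormedSpace ℝ E] [CompleteSpace E] {f : ℂ → E} (hf : Continuous f) :
    Tendsto (fun n : ℕ => (1 / n : ℝ) • ∑ k ∈ Finset.range n, f (arc b (node n k))) atTop
      (𝓝 ((1 / Real.pi) • ∫ θ in (0 : ℝ)..Real.pi, f (arc b θ))) := by
  have hsum := tendsto_riemannSum (F := fun θ : ℝ => f (arc b θ)) (ξ := node) Real.pi_pos.le
    (hf.comp (continuous_arc_ofReal hb)).continuousOn
    (fun n k _ => by simpa using node_mem_cell n k)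
  refine (hsum.const_smul (1 / Real.pi)).congr fun n => ?_
  rw [smul_smul]
  congr 1
  field_simp
  simp

lemma arc_eq (b θ : ℂ) : arc b θ = b * (1 - Complex.cos θ ^ 2) + Complex.cos θ *
    (1 - b ^ 2 * (1 - Complex.cos θ ^ 2)) ^ ((1 : ℂ) / 2) := by
  rw [arc, denom, radicand, Complex.sin_sq, Complex.sqrt, one_div]
  ring

lemma integral_div_sqrt_one_sub_sq (F : ℝ → ℝ) :
    ∫ t in (-1 : ℝ)..1, F t / √(1 - t ^ 2) = ∫ θ in (0 : ℝ)..Real.pi, F (Real.cos θ) := by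
  rw [← Polynomial.Chebyshev.integral_measureT_eq_integral_cos,
    Polynomial.Chebyshev.integral_measureT]
  simp only [div_eq_mul_inv, Real.sqrt_inv]

end Limit

end Joukowski

theorem stmt_17_general (b : ℂ) (hb : |b.re| ≤ 1 / 2) (P : ℕ → Polynomial ℂ)
    (hP : ∀ n, 1 ≤ n → Joukowski.IsFaberPolynomial b n (P n))
    (g : ℝ → ℂ)
    (hg : ∀ t : ℝ, g t = b * (1 - (t : ℂ) ^ 2) +
      (t : ℂ) * (1 - b ^ 2 * (1 - (t : ℂ) ^ 2)) ^ ((1 : ℂ) / 2))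
    (f : BoundedContinuousFunction ℂ ℝ) :
    Tendsto (fun n : ℕ => (1 / (n : ℝ)) * ((P n).roots.map (fun z => f z)).sum) atTop
      (nhds ((1 / Real.pi) * ∫ t in (-1 : ℝ)..1, f (g t) / Real.sqrt (1 - t ^ 2))) := by
  have hgarc : ∀ θ : ℝ, g (Real.cos θ) = Joukowski.arc b θ := fun θ => by
    rw [hg, Joukowski.arc_eq, Complex.ofReal_cos]
  have hmatching := Joukowski.tendsto_average_sub_of_matching f.norm_coe_le_norm
    (eventually_atTop.2 ⟨1, fun n hn => (hP n hn).card_roots⟩)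
    (fun ε hε => Joukowski.eventually_exists_matching_roots hb hP f.continuous hε)
  have haverage := Joukowski.tendsto_average_arc_node hb f.continuous
  simp only [Joukowski.integral_div_sqrt_one_sub_sq fun t => f (g t), hgarc]
  simpa using hmatching.add haverage

/-- Let `b ∈ ℂ` with `−1/2 ≤ Re b < 0`. For `n ≥ 1` let `P n` be the unique
polynomial of degree `n` with `P_n(z) = (z − b + s)ⁿ + (z − b − s)ⁿ − (−b)ⁿ` (`s² = z² − 1`).
With `g(t) = b(1 − t²) + t·(1 − b²(1 − t²))^{1/2}` (principal complex square root), for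
every bounded continuous `f : ℂ → ℝ`, the averages `(1/n) Σ f(z)` over the roots of `P n`
(with multiplicity) converge to `(1/π) ∫_{−1}^1 f(g(t)) dt/√(1 − t²)`; i.e. the normalized
zero counting measures converge weak-* to `(U⁻¹)_*(μ_{[−1,1]})`. -/
theorem stmt_17 (b : ℂ) (hb₁ : -1/2 ≤ b.re) (hb₂ : b.re < 0)
    (P : ℕ → Polynomial ℂ)
    (hP : ∀ n, 1 ≤ n → (P n).degree = n ∧
      ∀ z s : ℂ, s ^ 2 = z ^ 2 - 1 →
        (P n).eval z = (z - b + s) ^ n + (z - b - s) ^ n - (-b) ^ n)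
    (g : ℝ → ℂ)
    (hg : ∀ t : ℝ, g t = b * (1 - (t : ℂ) ^ 2) +
      (t : ℂ) * (1 - b ^ 2 * (1 - (t : ℂ) ^ 2)) ^ ((1 : ℂ) / 2)) :
    ∀ f : BoundedContinuousFunction ℂ ℝ,
      Tendsto (fun n : ℕ => (1 / (n : ℝ)) * ((P n).roots.map (fun z => f z)).sum) atTop
        (nhds ((1 / Real.pi) * ∫ t in (-1 : ℝ)..1, f (g t) / Real.sqrt (1 - t ^ 2))) :=
  stmt_17_general b (abs_le.2 ⟨by linarith, by linarith⟩) P hP g hg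
end

section
/- Let b ∈ ℂ with Re b < −1/2 (corresponding to R cos θ > 3/2). Set c = (b + 1/b)/2, 𝒜_b = 𝒜 ∩ {z : |z − c| ≥ |b|/2} (the portion of the arc 𝒜 from the intersection point i_b to the point 1), and L_b^+ = {z ∈ ℂ : ∃s ∈ ℂ, s² = z² − 1, |b − z − s| = |b| and |z − c| ≤ |b|/2}. Then the zeros of f_n accumulate on 𝒜_b ∪ L_b^+: for every ε > 0 there exists N such that for all n ≥ N, every zero of f_n lies within distance ε of 𝒜_b ∪ L_b^+. -/
/-! With `u = z - b + s` and `v = z - b - s`, the points `z` correspond to the pairs on the curve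
`(u + b) * (v + b) = 1`, and `f_n(z) = 0` says `u ^ n + v ^ n = (-b) ^ n`. For large `n` this forces
the largest two of `‖u‖`, `‖v‖`, `‖b‖` to agree up to a factor `t` close to `1`. On the curve this
condition is compact in `(u, v)`, and as `t` decreases to `1` it becomes an exact tie for the
maximum: either `‖u‖ = ‖v‖ ≥ ‖b‖`, which is the arc, or one of `‖u‖`, `‖v‖` equals `‖b‖` and the
other is smaller, which is the level curve. -/

open Filter Topology

/-- The arc `𝒜`, the locus of the points `z = b + (u + v) / 2` with `(u + b) * (v + b) = 1` and
`‖u‖ = ‖v‖`. The parameter satisfies `(u + v) ^ 2 = 4 * ρ * (u * v)`, and `s` is not a square root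
of `z ^ 2 - 1` here. -/
def equimodularArc (b : ℂ) : Set ℂ :=
  {z | ∃ ρ : ℝ, ρ ∈ Set.Icc (0 : ℝ) 1 ∧ ∃ s : ℂ,
    s ^ 2 = (ρ : ℂ) * (1 - b ^ 2 + b ^ 2 * (ρ : ℂ)) ∧ z = b * (1 - (ρ : ℂ)) + s}

/-- The centre `c` of the circle `C_b`, of radius `‖b‖ / 2`, that separates the two parts of
`zeroLimitSet`. -/
noncomputable def separatingCenter (b : ℂ) : ℂ :=
  (b + 1 / b) / 2

/-- The curve `L_b⁺`: the part inside `C_b` of the level curve on which one of `‖z - b + s‖`,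
`‖z - b - s‖` equals `‖b‖`. Since `-s` is a square root whenever `s` is, one equation covers both
cases. -/
def innerLevelCurve (b : ℂ) : Set ℂ :=
  {z | ∃ s : ℂ, s ^ 2 = z ^ 2 - 1 ∧ ‖b - z - s‖ = ‖b‖ ∧ ‖z - separatingCenter b‖ ≤ ‖b‖ / 2}

/-- The set `𝒜_b ∪ L_b⁺` on which the zeros of the Faber polynomials accumulate. -/
def zeroLimitSet (b : ℂ) : Set ℂ :=
  equimodularArc b ∩ {z | ‖b‖ / 2 ≤ ‖z - separatingCenter b‖} ∪ innerLevelCurve b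

/-- The pairs `(u, v)` on the curve `(u + b) * (v + b) = 1` for which each of `‖u‖`, `‖v‖`, `‖b‖`
is at most `t` times the larger of the other two. For `t = 1` the maximum of the three is attained
at least twice; the slack `t > 1` makes room for the zeros of `f_n` with `n` finite. -/
def balancedPairs {𝕜 : Type*} [NormedField 𝕜] (b : 𝕜) (t : ℝ) : Set (𝕜 × 𝕜) :=
  {p | (p.1 + b) * (p.2 + b) = 1 ∧ ‖p.1‖ ≤ max ‖p.2‖ ‖b‖ * t ∧ ‖p.2‖ ≤ max ‖p.1‖ ‖b‖ * t ∧
    ‖b‖ ≤ max ‖p.1‖ ‖p.2‖ * t}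

theorem le_max_mul_of_pow_le_pow_add_pow {R : Type*} [CommSemiring R] [LinearOrder R]
    [IsStrictOrderedRing R] {x y w t : R} {n : ℕ} (hy : 0 ≤ y) (hw : 0 ≤ w) (ht : 0 ≤ t)
    (htn : 2 ≤ t ^ n) (h : x ^ n ≤ y ^ n + w ^ n) : x ≤ max y w * t := by
  have hn : n ≠ 0 := by
    rintro rfl
    exact absurd htn (by simp)
  have hm : 0 ≤ max y w := le_max_of_le_left hy
  refine le_of_pow_le_pow_left₀ hn (mul_nonneg hm ht) ?_
  calc x ^ n ≤ y ^ n + w ^ n := h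
    _ ≤ max y w ^ n + max y w ^ n := by gcongr <;> simp
    _ = max y w ^ n * 2 := (mul_two _).symm
    _ ≤ max y w ^ n * t ^ n := by gcongr
    _ = (max y w * t) ^ n := (mul_pow _ _ _).symm

theorem exists_add_sq_eq_four_mul_mul_mul_of_norm_eq {𝕜 : Type*} [RCLike 𝕜] {u v : 𝕜}
    (h : ‖u‖ = ‖v‖) : ∃ ρ ∈ Set.Icc (0 : ℝ) 1, (u + v) ^ 2 = 4 * (ρ : 𝕜) * (u * v) := by
  rcases eq_or_ne v 0 with rfl | hv
  · have hu : u = 0 := by simpa using h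
    exact ⟨0, by simp, by simp [hu]⟩
  -- `(u + v) ^ 2 / (u * v) = w + w⁻¹ + 2` for the unimodular `w = u / v`, and `w⁻¹ = conj w`.
  obtain ⟨w, rfl⟩ : ∃ w, u = w * v := ⟨u / v, (div_mul_cancel₀ u hv).symm⟩
  have hw : ‖w‖ = 1 := by
    rw [norm_mul] at h
    exact mul_eq_right₀ (norm_ne_zero_iff.2 hv) |>.1 h
  have hre : |RCLike.re w| ≤ 1 := hw ▸ RCLike.abs_re_le_norm w
  have hw0 : w ≠ 0 := norm_ne_zero_iff.1 (by simp [hw])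
  have hadd : w + w⁻¹ = 2 * (RCLike.re w : 𝕜) := by
    rw [RCLike.inv_eq_conj hw, RCLike.add_conj]
  refine ⟨(1 + RCLike.re w) / 2, ⟨by linarith [abs_le.1 hre], by linarith [abs_le.1 hre]⟩, ?_⟩
  push_cast
  linear_combination w * v ^ 2 * hadd - v ^ 2 * mul_inv_cancel₀ hw0

section BalancedPairs

variable {𝕜 : Type*} [NormedField 𝕜] {b : 𝕜} {p : 𝕜 × 𝕜} {t : ℝ}

theorem swap_mem_balancedPairs (hp : p ∈ balancedPairs b t) : p.swap ∈ balancedPairs b t := by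
  obtain ⟨hcurve, h₁, h₂, h₃⟩ := hp
  exact ⟨mul_comm (p.1 + b) _ ▸ hcurve, h₂, h₁, max_comm ‖p.1‖ _ ▸ h₃⟩

theorem balancedPairs_mono (b : 𝕜) : Monotone (balancedPairs b) := by
  rintro t t' htt p ⟨hcurve, h₁, h₂, h₃⟩
  exact ⟨hcurve, h₁.trans (by gcongr), h₂.trans (by gcongr), h₃.trans (by gcongr)⟩

theorem iInter_balancedPairs (b : 𝕜) :
    ⋂ t : Set.Ioi (1 : ℝ), balancedPairs b t = balancedPairs b 1 := by
  refine subset_antisymm (fun p hp => ?_)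
    (Set.subset_iInter fun t => balancedPairs_mono b (Set.mem_Ioi.1 t.2).le)
  have hmem : ∀ t > (1 : ℝ), p ∈ balancedPairs b t := fun t ht => Set.mem_iInter.1 hp ⟨t, ht⟩
  have le_of_slack : ∀ {x y : ℝ}, 0 ≤ y → (∀ t > 1, x ≤ y * t) → x ≤ y * 1 := fun hy h =>
    ((le_iff_forall_one_lt_le_mul₀ hy).2 h).trans_eq (mul_one _).symm
  exact ⟨(hmem 2 one_lt_two).1,
    le_of_slack (by positivity) fun t ht => (hmem t ht).2.1,
    le_of_slack (by positivity) fun t ht => (hmem t ht).2.2.1,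
    le_of_slack (by positivity) fun t ht => (hmem t ht).2.2.2⟩

theorem norm_fst_le_of_mem_balancedPairs (hp : p ∈ balancedPairs b t) :
    ‖p.1‖ ≤ (1 + ‖b‖) * max 1 |t| := by
  obtain ⟨hcurve, hfst, -, -⟩ := hp
  have norm_le_of_norm_add_le : ∀ {x : 𝕜}, ‖x + b‖ ≤ 1 → ‖x‖ ≤ 1 + ‖b‖ := fun {x} hx => by
    simpa using (norm_sub_le (x + b) b).trans (by gcongr)
  have hprod : ‖p.1 + b‖ * ‖p.2 + b‖ = 1 := by rw [← norm_mul, hcurve, norm_one]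
  rcases le_total ‖p.1 + b‖ 1 with h | h
  · exact (norm_le_of_norm_add_le h).trans
      (le_mul_of_one_le_right (by positivity) (le_max_left _ _))
  · have hsnd : ‖p.2 + b‖ ≤ 1 := hprod ▸ le_mul_of_one_le_left (norm_nonneg _) h
    have hmax : max ‖p.2‖ ‖b‖ ≤ 1 + ‖b‖ :=
      max_le (norm_le_of_norm_add_le hsnd) (le_add_of_nonneg_left zero_le_one)
    calc ‖p.1‖ ≤ max ‖p.2‖ ‖b‖ * t := hfst
      _ ≤ max ‖p.2‖ ‖b‖ * max 1 |t| := by gcongr; exact (le_abs_self t).trans (le_max_right _ _)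
      _ ≤ (1 + ‖b‖) * max 1 |t| := by gcongr

theorem isClosed_balancedPairs (b : 𝕜) (t : ℝ) : IsClosed (balancedPairs b t) := by
  refine IsClosed.and (isClosed_eq ?_ ?_) <| IsClosed.and (isClosed_le ?_ ?_) <|
    IsClosed.and (isClosed_le ?_ ?_) (isClosed_le ?_ ?_)
  all_goals fun_prop

theorem isCompact_balancedPairs [ProperSpace 𝕜] (b : 𝕜) (t : ℝ) :
    IsCompact (balancedPairs b t) := by
  refine (isCompact_closedBall (0 : 𝕜 × 𝕜) ((1 + ‖b‖) * max 1 |t|)).of_isClosed_subset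
    (isClosed_balancedPairs b t) fun p hp => ?_
  rw [mem_closedBall_zero_iff]
  exact max_le (norm_fst_le_of_mem_balancedPairs hp)
    (norm_fst_le_of_mem_balancedPairs (swap_mem_balancedPairs hp))

theorem exists_balancedPairs_subset [ProperSpace 𝕜] {U : Set (𝕜 × 𝕜)} (hU : IsOpen U)
    (h : balancedPairs b 1 ⊆ U) : ∃ t > 1, balancedPairs b t ⊆ U := by
  have hdir : Directed (· ⊇ ·) fun t : Set.Ioi (1 : ℝ) => balancedPairs b t :=
    Monotone.directed_ge fun _ _ hst => balancedPairs_mono b hst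
  obtain ⟨⟨t, ht⟩, htU⟩ := exists_subset_nhds_of_isCompact hdir
    (fun t => isCompact_balancedPairs b t)
    (fun p hp => hU.mem_nhds (h (iInter_balancedPairs b ▸ hp)))
  exact ⟨t, ht, htU⟩

theorem mk_mem_balancedPairs_of_pow_add_pow_eq {u v : 𝕜} {n : ℕ} (ht : 0 ≤ t) (htn : 2 ≤ t ^ n)
    (hcurve : (u + b) * (v + b) = 1) (h : u ^ n + v ^ n = (-b) ^ n) :
    (u, v) ∈ balancedPairs b t := by
  have hb : ‖(-b) ^ n‖ = ‖b‖ ^ n := by rw [norm_pow, norm_neg]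
  have hu : ‖u‖ ^ n ≤ ‖v‖ ^ n + ‖b‖ ^ n := by
    rw [← hb, ← norm_pow, ← norm_pow, ← h]
    simpa using norm_sub_le (u ^ n + v ^ n) (v ^ n) |>.trans_eq (add_comm _ _)
  have hv : ‖v‖ ^ n ≤ ‖u‖ ^ n + ‖b‖ ^ n := by
    rw [← hb, ← norm_pow, ← norm_pow, ← h]
    simpa using norm_sub_le (u ^ n + v ^ n) (u ^ n) |>.trans_eq (add_comm _ _)
  have hb' : ‖b‖ ^ n ≤ ‖u‖ ^ n + ‖v‖ ^ n := by
    rw [← hb, ← norm_pow, ← norm_pow, ← h]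
    exact norm_add_le _ _
  exact ⟨hcurve,
    le_max_mul_of_pow_le_pow_add_pow (norm_nonneg v) (norm_nonneg b) ht htn hu,
    le_max_mul_of_pow_le_pow_add_pow (norm_nonneg u) (norm_nonneg b) ht htn hv,
    le_max_mul_of_pow_le_pow_add_pow (norm_nonneg u) (norm_nonneg v) ht htn hb'⟩

end BalancedPairs

section LimitPoints

variable {b u v : ℂ}

theorem mem_equimodularArc_of_norm_eq (hcurve : (u + b) * (v + b) = 1) (h : ‖u‖ = ‖v‖) :
    b + (u + v) / 2 ∈ equimodularArc b := by
  obtain ⟨ρ, hρ, hsq⟩ := exists_add_sq_eq_four_mul_mul_mul_of_norm_eq h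
  refine ⟨ρ, hρ, (u + v) / 2 + b * ρ, ?_, by ring⟩
  linear_combination hsq / 4 + ρ * hcurve

theorem norm_sub_separatingCenter (hb : b ≠ 0) (hcurve : (u + b) * (v + b) = 1) :
    ‖b + (u + v) / 2 - separatingCenter b‖ = ‖u‖ * ‖v‖ / (2 * ‖b‖) := by
  have hsub : b + (u + v) / 2 - separatingCenter b = -(u * v / (2 * b)) := by
    rw [separatingCenter]
    field_simp
    linear_combination hcurve
  rw [hsub, norm_neg, norm_div, norm_mul, norm_mul, Complex.norm_two]

theorem mem_innerLevelCurve_of_norm_eq (hb : b ≠ 0) (hcurve : (u + b) * (v + b) = 1)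
    (hu : ‖u‖ = ‖b‖) (hv : ‖v‖ ≤ ‖b‖) : b + (u + v) / 2 ∈ innerLevelCurve b := by
  refine ⟨(u - v) / 2, by linear_combination -hcurve, ?_, ?_⟩
  · rw [← hu, ← norm_neg u]
    congr 1
    ring
  · have : 0 < ‖b‖ := norm_pos_iff.2 hb
    calc ‖b + (u + v) / 2 - separatingCenter b‖ = ‖u‖ * ‖v‖ / (2 * ‖b‖) :=
          norm_sub_separatingCenter hb hcurve
      _ ≤ ‖b‖ * ‖b‖ / (2 * ‖b‖) := by rw [hu]; gcongr
      _ = ‖b‖ / 2 := by field_simp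

theorem mem_innerLevelCurve_of_norm_lt (hb : b ≠ 0) (h : (u, v) ∈ balancedPairs b 1)
    (hlt : ‖v‖ < ‖u‖) : b + (u + v) / 2 ∈ innerLevelCurve b := by
  obtain ⟨hcurve, hu, -, hb'⟩ := h
  simp only [mul_one, max_eq_left hlt.le] at hu hb'
  have hub : ‖u‖ = ‖b‖ := (le_max_iff.1 hu |>.resolve_left hlt.not_ge).antisymm hb'
  exact mem_innerLevelCurve_of_norm_eq hb hcurve hub (hub ▸ hlt.le)

theorem mem_zeroLimitSet_of_mem_balancedPairs (hb : b ≠ 0) (h : (u, v) ∈ balancedPairs b 1) :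
    b + (u + v) / 2 ∈ zeroLimitSet b := by
  rcases lt_trichotomy ‖u‖ ‖v‖ with hlt | heq | hgt
  · exact Or.inr (add_comm v u ▸
      mem_innerLevelCurve_of_norm_lt hb (swap_mem_balancedPairs h) hlt)
  · obtain ⟨hcurve, -, -, hbu⟩ := h
    replace hbu : ‖b‖ ≤ ‖u‖ := by simpa [← heq] using hbu
    refine Or.inl ⟨mem_equimodularArc_of_norm_eq hcurve heq, ?_⟩
    have : 0 < ‖b‖ := norm_pos_iff.2 hb
    calc ‖b‖ / 2 = ‖b‖ * ‖b‖ / (2 * ‖b‖) := by field_simp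
      _ ≤ ‖u‖ * ‖v‖ / (2 * ‖b‖) := by rw [← heq]; gcongr
      _ = ‖b + (u + v) / 2 - separatingCenter b‖ := (norm_sub_separatingCenter hb hcurve).symm
  · exact Or.inr (mem_innerLevelCurve_of_norm_lt hb h hgt)

theorem exists_balancedPairs_subset_thickening (hb : b ≠ 0) {ε : ℝ} (hε : 0 < ε) :
    ∃ t > 1, ∀ p ∈ balancedPairs b t,
      b + (p.1 + p.2) / 2 ∈ Metric.thickening ε (zeroLimitSet b) := by
  have hcont : Continuous fun p : ℂ × ℂ => b + (p.1 + p.2) / 2 := by fun_prop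
  exact exists_balancedPairs_subset (Metric.isOpen_thickening.preimage hcont) fun _ hp =>
    Metric.self_subset_thickening hε _ (mem_zeroLimitSet_of_mem_balancedPairs hb hp)

end LimitPoints

theorem stmt_18_general {b : ℂ} (hb : b ≠ 0) :
    ∀ ε > (0 : ℝ), ∃ N : ℕ, ∀ n : ℕ, N ≤ n →
      ∀ z : ℂ, (∀ s : ℂ, s ^ 2 = z ^ 2 - 1 →
          (z - b + s) ^ n + (z - b - s) ^ n - (-b) ^ n = 0) →
        ∃ w ∈ zeroLimitSet b, dist z w ≤ ε := by
  intro ε hε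
  obtain ⟨t, ht, hnear⟩ := exists_balancedPairs_subset_thickening hb hε
  obtain ⟨N, hN⟩ := eventually_atTop.1
    ((tendsto_pow_atTop_atTop_of_one_lt ht).eventually_ge_atTop 2)
  refine ⟨N, fun n hn z hz => ?_⟩
  obtain ⟨s, hs⟩ := IsAlgClosed.exists_pow_nat_eq (z ^ 2 - 1) two_pos
  have hcurve : (z - b + s + b) * (z - b - s + b) = 1 := by linear_combination -hs
  have hmem : (z - b + s, z - b - s) ∈ balancedPairs b t :=
    mk_mem_balancedPairs_of_pow_add_pow_eq (by linarith) (hN n hn) hcurve (sub_eq_zero.1 (hz s hs))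
  have hz_eq : b + ((z - b + s) + (z - b - s)) / 2 = z := by ring
  obtain ⟨w, hw, hdist⟩ := Metric.mem_thickening_iff.1 (hz_eq ▸ hnear _ hmem)
  exact ⟨w, hw, hdist.le⟩

/-- Let `b ∈ ℂ` with `Re b < −1/2` (i.e. `R cos θ > 3/2`). Set
`c = (b + 1/b)/2`, `𝒜_b = 𝒜 ∩ {z : |z − c| ≥ |b|/2}` and
`L_b⁺ = {z : ∃ s, s² = z² − 1 ∧ |b − z − s| = |b| ∧ |z − c| ≤ |b|/2}`. Then the zeros of
`f_n` accumulate on `𝒜_b ∪ L_b⁺`: for every `ε > 0` there exists `N` such that for all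
`n ≥ N`, every zero of `f_n` lies within distance `ε` of `𝒜_b ∪ L_b⁺`. -/
theorem stmt_18 (b : ℂ) (hb : b.re < -1/2)
    (c : ℂ) (hc : c = (b + 1 / b) / 2)
    (A : Set ℂ)
    (hA : A = {z : ℂ | ∃ ρ : ℝ, ρ ∈ Set.Icc (0 : ℝ) 1 ∧ ∃ s : ℂ,
      s ^ 2 = (ρ : ℂ) * (1 - b ^ 2 + b ^ 2 * (ρ : ℂ)) ∧ z = b * (1 - (ρ : ℂ)) + s})
    (Ab : Set ℂ)
    (hAb : Ab = A ∩ {z : ℂ | ‖b‖ / 2 ≤ ‖z - c‖})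
    (Lb : Set ℂ)
    (hLb : Lb = {z : ℂ | ∃ s : ℂ, s ^ 2 = z ^ 2 - 1 ∧
      ‖b - z - s‖ = ‖b‖ ∧
      ‖z - c‖ ≤ ‖b‖ / 2}) :
    ∀ ε > (0 : ℝ), ∃ N : ℕ, ∀ n : ℕ, N ≤ n →
      ∀ z : ℂ, (∀ s : ℂ, s ^ 2 = z ^ 2 - 1 →
          (z - b + s) ^ n + (z - b - s) ^ n - (-b) ^ n = 0) →
        ∃ w ∈ Ab ∪ Lb, dist z w ≤ ε := by
  subst hc hA hAb hLb
  exact stmt_18_general (by rintro rfl; norm_num at hb)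
end

section
/- Let α ∈ (0, 1/4]. For each n ≥ 1, the function p_n(z) = (z + 2α + s)^n + (z + 2α − s)^n − (2α)^n, where s is either complex square root of z² − 1 (the value is independent of the choice), has exactly n zeros z_1, …, z_n; they are pairwise distinct and lie in [−1, 1], and they are Chebyshev quadrature nodes of order n for the measure dμ(x) = (1/π)·(1/√(1 − x²))·(1 + 2αx)/(1 + 4α² + 4αx) dx on [−1,1]: for every polynomial p of degree at most n, ∫_{−1}^{1} p(x) dμ(x) = (1/n) Σ_{j=1}^{n} p(z_j). -/
/-!
Write `a = 2α`. In the Joukowski coordinate `z = (w + w⁻¹) / 2`, where `s = (w - w⁻¹) / 2`, the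
function `w ^ n * p_n(z)` becomes a polynomial of degree at most `2 * n` congruent to
`(1 + a * w) ^ n` modulo `w ^ (n + 1)`. If `z₁, …, zₙ` are distinct zeros other than `±1`, this
polynomial is the product of the quadratics `1 - 2 * zⱼ * w + w ^ 2`. Comparing logarithmic
derivatives up to order `n` yields `2 * ∑ⱼ T_k(zⱼ) = n * (-a) ^ k` for `1 ≤ k ≤ n`. These are the
Chebyshev moments of Ullman's measure, because
`(1 + a * x) / (1 + a ^ 2 + 2 * a * x) = ∑ₖ (-a) ^ k * T_k(x)`.

For the zeros, parametrize the unit circle `x + s` with `|x| ≤ 1`, `s ∈ iℝ` by the polar angle `φ`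
around `-a`: if `x + a + s = r * exp (i * φ)`, then `p_n = 2 * r ^ n * cos (n * φ) - a ^ n`. Since
`r ≥ 1 - |a|`, the cosine term dominates and `p_n` changes sign between consecutive multiples of
`π / n`.
-/

section JoukowskiPullback

open Polynomial

variable {R : Type*} [CommRing R]

/-- The function `p_n` of the real Joukowski airfoil with `a = 2α`, viewed as a function on the
curve `s² = z² - 1` so that no branch of the square root has to be chosen. -/
def airfoilFaber (a : R) (n : ℕ) (z s : R) : R :=
  (z + a + s) ^ n + (z + a - s) ^ n - a ^ n

/-- The pullback of `airfoilFaber a n` along the Joukowski map `z = (w + w⁻¹) / 2`,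
multiplied by `w ^ n` to clear denominators. -/
noncomputable def airfoilFaberPullback (a : R) (n : ℕ) : R[X] :=
  (1 + C a * X) ^ n + X ^ n * ((X + C a) ^ n - C (a ^ n))

/-- The quadratic whose roots are the two preimages `z ± s`, `s² = z² - 1`, of `z` under the
Joukowski map. -/
noncomputable def joukowskiQuadratic (z : R) : R[X] :=
  1 - C (2 * z) * X + X ^ 2

lemma airfoilFaber_neg_right (a : R) (n : ℕ) (z s : R) :
    airfoilFaber a n z (-s) = airfoilFaber a n z s := by
  simp only [airfoilFaber]
  ring

lemma add_mul_sub_eq_one_of_sq_eq {z s : R} (hs : s ^ 2 = z ^ 2 - 1) : (z + s) * (z - s) = 1 := by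
  linear_combination -hs

lemma eval_airfoilFaberPullback (a : R) (n : ℕ) {z s : R} (hs : s ^ 2 = z ^ 2 - 1) :
    (airfoilFaberPullback a n).eval (z + s) = (z + s) ^ n * airfoilFaber a n z s := by
  have h : 1 + a * (z + s) = (z + s) * (z + a - s) := by linear_combination hs
  simp only [airfoilFaberPullback, airfoilFaber, eval_add, eval_sub, eval_mul, eval_pow, eval_one,
    eval_C, eval_X, h, mul_pow]
  ring

lemma eval_airfoilFaberPullback_eq_zero_iff (a : R) (n : ℕ) {z s : R} (hs : s ^ 2 = z ^ 2 - 1) :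
    (airfoilFaberPullback a n).eval (z + s) = 0 ↔ airfoilFaber a n z s = 0 := by
  have hunit : IsUnit ((z + s) ^ n) :=
    (IsUnit.of_mul_eq_one _ (add_mul_sub_eq_one_of_sq_eq hs)).pow n
  rw [eval_airfoilFaberPullback a n hs, hunit.mul_right_eq_zero]

lemma joukowskiQuadratic_eq_mul {z s : R} (hs : s ^ 2 = z ^ 2 - 1) :
    joukowskiQuadratic z = (X - C (z + s)) * (X - C (z - s)) := by
  have hC := congrArg C (add_mul_sub_eq_one_of_sq_eq hs)
  simp only [joukowskiQuadratic, C_mul, C_add, C_sub, C_1, C_ofNat] at hC ⊢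
  linear_combination -hC

lemma eval_joukowskiQuadratic_add (z : R) {z' s : R} (hs : s ^ 2 = z' ^ 2 - 1) :
    (joukowskiQuadratic z).eval (z' + s) = 2 * (z' - z) * (z' + s) := by
  simp only [joukowskiQuadratic, eval_add, eval_sub, eval_mul, eval_pow, eval_one, eval_C, eval_X]
  linear_combination hs

lemma X_pow_succ_dvd_airfoilFaberPullback_sub (a : R) (n : ℕ) :
    X ^ (n + 1) ∣ airfoilFaberPullback a n - (1 + C a * X) ^ n := by
  rw [airfoilFaberPullback, add_sub_cancel_left, pow_succ]
  exact mul_dvd_mul_left _ (X_dvd_iff.2 (by simp [coeff_zero_eq_eval_zero]))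

lemma natDegree_airfoilFaberPullback_le (a : R) (n : ℕ) :
    (airfoilFaberPullback a n).natDegree ≤ 2 * n := by
  rw [airfoilFaberPullback]
  compute_degree
  omega

lemma natDegree_joukowskiQuadratic [Nontrivial R] (z : R) :
    (joukowskiQuadratic z).natDegree = 2 := by
  rw [joukowskiQuadratic]
  compute_degree!

lemma monic_joukowskiQuadratic (z : R) : (joukowskiQuadratic z).Monic := by
  rw [joukowskiQuadratic]
  monicity!

section Field

variable {K : Type*} [Field K] [NeZero (2 : K)] {a : K} {n : ℕ}

lemma isCoprime_joukowskiQuadratic {z z' : K} (h : z ≠ z') :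
    IsCoprime (joukowskiQuadratic z) (joukowskiQuadratic z') := by
  have hX : IsCoprime (joukowskiQuadratic z) X :=
    ⟨1, C (2 * z) - X, by rw [joukowskiQuadratic]; ring⟩
  have hC : IsUnit (C (2 * (z - z'))) :=
    isUnit_C.2 (mul_ne_zero two_ne_zero (sub_ne_zero.2 h)).isUnit
  have hdiff : joukowskiQuadratic z' = C (2 * (z - z')) * X + joukowskiQuadratic z * 1 := by
    simp only [joukowskiQuadratic, C_mul, C_sub]
    ring
  rw [hdiff]
  exact IsCoprime.add_mul_left_right ((isCoprime_mul_unit_left_right hC _ _).2 hX) 1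

lemma joukowskiQuadratic_dvd_airfoilFaberPullback {z s : K} (hs : s ^ 2 = z ^ 2 - 1) (hs0 : s ≠ 0)
    (hz : airfoilFaber a n z s = 0) : joukowskiQuadratic z ∣ airfoilFaberPullback a n := by
  have hs' : (-s) ^ 2 = z ^ 2 - 1 := by rw [neg_sq, hs]
  have hroot : (airfoilFaberPullback a n).eval (z + s) = 0 :=
    (eval_airfoilFaberPullback_eq_zero_iff a n hs).2 hz
  have hroot' : (airfoilFaberPullback a n).eval (z - s) = 0 := by
    rw [sub_eq_add_neg, eval_airfoilFaberPullback_eq_zero_iff a n hs', airfoilFaber_neg_right, hz]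
  have hne : z + s ≠ z - s := by
    intro h
    have : 2 * s = 0 := by linear_combination h
    exact (mul_ne_zero two_ne_zero hs0) this
  rw [joukowskiQuadratic_eq_mul hs]
  exact (isCoprime_X_sub_C_of_isUnit_sub (sub_ne_zero.2 hne).isUnit).mul_dvd
    (dvd_iff_isRoot.2 hroot) (dvd_iff_isRoot.2 hroot')

variable {Z : Finset K}

theorem prod_joukowskiQuadratic_eq_airfoilFaberPullback (hn : n ≠ 0) (hcard : Z.card = n)
    (hZ : ∀ z ∈ Z, ∃ s, s ^ 2 = z ^ 2 - 1 ∧ s ≠ 0 ∧ airfoilFaber a n z s = 0) :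
    ∏ z ∈ Z, joukowskiQuadratic z = airfoilFaberPullback a n := by
  have hdvd : ∏ z ∈ Z, joukowskiQuadratic z ∣ airfoilFaberPullback a n := by
    refine Finset.prod_dvd_of_coprime (fun z _ z' _ h ↦ isCoprime_joukowskiQuadratic h) ?_
    intro z hz
    obtain ⟨s, hs, hs0, h⟩ := hZ z hz
    exact joukowskiQuadratic_dvd_airfoilFaberPullback hs hs0 h
  have hmonic : (∏ z ∈ Z, joukowskiQuadratic z).Monic :=
    monic_prod_of_monic _ _ fun z _ ↦ monic_joukowskiQuadratic z
  have hdeg : (∏ z ∈ Z, joukowskiQuadratic z).natDegree = 2 * n := by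
    simp [natDegree_prod_of_monic _ _ fun z _ ↦ monic_joukowskiQuadratic z,
      natDegree_joukowskiQuadratic, hcard, mul_comm]
  have heq := eq_leadingCoeff_mul_of_monic_of_dvd_of_natDegree_le hmonic hdvd
    (hdeg ▸ natDegree_airfoilFaberPullback_le a n)
  have hlead : (airfoilFaberPullback a n).leadingCoeff = 1 := by
    have h0 := congrArg (eval 0) heq
    simpa [airfoilFaberPullback, joukowskiQuadratic, eval_prod, hn] using h0.symm
  rw [heq, hlead, C_1, one_mul]

theorem mem_iff_forall_airfoilFaber_eq_zero [IsAlgClosed K]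
    (hprod : ∏ z ∈ Z, joukowskiQuadratic z = airfoilFaberPullback a n) (z : K) :
    z ∈ Z ↔ ∀ s, s ^ 2 = z ^ 2 - 1 → airfoilFaber a n z s = 0 := by
  have hmem : ∀ s, s ^ 2 = z ^ 2 - 1 → (airfoilFaber a n z s = 0 ↔ z ∈ Z) := by
    intro s hs
    have hw : z + s ≠ 0 := left_ne_zero_of_mul_eq_one (add_mul_sub_eq_one_of_sq_eq hs)
    rw [← eval_airfoilFaberPullback_eq_zero_iff a n hs, ← hprod, eval_prod,
      Finset.prod_eq_zero_iff]
    simp [eval_joukowskiQuadratic_add _ hs, hw, two_ne_zero, sub_eq_zero]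
  obtain ⟨s₀, hs₀⟩ := IsAlgClosed.exists_pow_nat_eq (z ^ 2 - 1) two_pos
  exact ⟨fun hz s hs ↦ (hmem s hs).2 hz, fun h ↦ (hmem s₀ hs₀).1 (h s₀ hs₀)⟩

end Field

end JoukowskiPullback

section LogDerivative

open PowerSeries
open Polynomial.Chebyshev (T)

variable {R : Type*} [CommRing R]

lemma X_mul_derivative_prod {ι : Type*} (S : Finset ι) {F A : ι → R⟦X⟧}
    (h : ∀ i ∈ S, X * d⁄dX R (F i) = F i * A i) :
    X * d⁄dX R (∏ i ∈ S, F i) = (∏ i ∈ S, F i) * ∑ i ∈ S, A i := by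
  classical
  induction S using Finset.induction_on with
  | empty => simp
  | insert i S hi ih =>
    have hF := h i (Finset.mem_insert_self i S)
    have hS := ih fun j hj ↦ h j (Finset.mem_insert_of_mem hj)
    rw [Finset.prod_insert hi, Finset.sum_insert hi, Derivation.leibniz, smul_eq_mul, smul_eq_mul]
    linear_combination F i * hS + (∏ j ∈ S, F j) * hF

lemma X_pow_dvd_X_mul_derivative {N : ℕ} {F : R⟦X⟧} (h : X ^ N ∣ F) : X ^ N ∣ X * d⁄dX R F := by
  rw [X_pow_dvd_iff] at h ⊢
  rintro (_ | m) hm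
  · simp
  · rw [coeff_succ_X_mul, coeff_derivative, h _ hm, zero_mul]

lemma X_pow_dvd_sub_of_X_mul_derivative_eq {N : ℕ} {F G A B : R⟦X⟧} (hF : IsUnit F)
    (hFA : X * d⁄dX R F = F * A) (hGB : X * d⁄dX R G = G * B) (h : X ^ N ∣ F - G) :
    X ^ N ∣ A - B := by
  have hFG : F * (A - B) = X * d⁄dX R (F - G) - (F - G) * B := by
    rw [map_sub]
    linear_combination hGB - hFA
  rw [← hF.dvd_mul_left, hFG]
  exact dvd_sub (X_pow_dvd_X_mul_derivative h) (dvd_mul_of_dvd_left h B)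

lemma one_sub_C_mul_X_mul_mk_pow (t : R) : (1 - C t * X) * mk (t ^ ·) = 1 := by
  ext m
  rw [sub_mul, one_mul, mul_assoc]
  cases m with
  | zero => simp
  | succ m => simp [coeff_succ_X_mul, pow_succ', coeff_one]

lemma coe_joukowskiQuadratic (z : R) :
    (joukowskiQuadratic z : R⟦X⟧) = 1 - C (2 * z) * X + X ^ 2 := by
  simp [joukowskiQuadratic]

lemma joukowskiQuadratic_mul_mk_eval_T (z : R) :
    (joukowskiQuadratic z : R⟦X⟧) * mk (fun k : ℕ ↦ (T R k).eval z) = 1 - C z * X := by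
  ext m
  rw [coe_joukowskiQuadratic, pow_two, add_mul, sub_mul, one_mul, mul_assoc, mul_assoc]
  match m with
  | 0 => simp
  | 1 =>
    have hz : z - 2 * z = -z := by ring
    simp [-map_mul, -coeff_zero_eq_constantCoeff, coeff_succ_X_mul, coeff_zero_X_mul, coeff_one, hz]
  | m + 2 => simp [-map_mul, coeff_succ_X_mul, coeff_one]

lemma X_mul_derivative_joukowskiQuadratic (z : R) :
    X * d⁄dX R (joukowskiQuadratic z : R⟦X⟧) =
      (joukowskiQuadratic z : R⟦X⟧) * (C 2 * (1 - mk fun k : ℕ ↦ (T R k).eval z)) := by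
  have hd : d⁄dX R (joukowskiQuadratic z : R⟦X⟧) = -C (2 * z) + 2 * X := by
    simp [-map_mul, coe_joukowskiQuadratic]
  have hT := joukowskiQuadratic_mul_mk_eval_T z
  have hq := coe_joukowskiQuadratic z
  rw [map_mul, map_ofNat] at hq hd
  rw [hd, map_ofNat]
  linear_combination 2 * hT - 2 * hq

lemma X_mul_derivative_one_sub_C_mul_X (t : R) :
    X * d⁄dX R (1 - C t * X) = (1 - C t * X) * (1 - mk (t ^ ·)) := by
  have hd : d⁄dX R (1 - C t * X) = - C t := by simp
  rw [hd]
  linear_combination one_sub_C_mul_X_mul_mk_pow t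

theorem two_mul_sum_eval_T_eq_of_X_pow_dvd {N m : ℕ} {t : R} {ι : Type*} {S : Finset ι} {z : ι → R}
    (h : Polynomial.X ^ N ∣
      ∏ i ∈ S, joukowskiQuadratic (z i) - (1 - Polynomial.C t * Polynomial.X) ^ m)
    {k : ℕ} (hk : k ≠ 0) (hkN : k < N) :
    2 * ∑ i ∈ S, (T R k).eval (z i) = m * t ^ k := by
  have hcoe : X ^ N ∣ ∏ i ∈ S, (joukowskiQuadratic (z i) : R⟦X⟧) - ∏ _j : Fin m, (1 - C t * X) := by
    have := map_dvd Polynomial.coeToPowerSeries.ringHom h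
    rw [map_sub, map_prod] at this
    simpa using this
  have hunit : IsUnit (∏ i ∈ S, (joukowskiQuadratic (z i) : R⟦X⟧)) := by
    simp [PowerSeries.isUnit_iff_constantCoeff, joukowskiQuadratic]
  have hlog := X_pow_dvd_sub_of_X_mul_derivative_eq hunit
    (X_mul_derivative_prod S fun i _ ↦ X_mul_derivative_joukowskiQuadratic (z i))
    (X_mul_derivative_prod Finset.univ fun _ _ ↦ X_mul_derivative_one_sub_C_mul_X t) hcoe
  have hcoeff := X_pow_dvd_iff.1 hlog k hkN
  rw [map_sub, map_sum, map_sum] at hcoeff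
  simp only [coeff_C_mul, map_sub, coeff_one, if_neg hk, coeff_mk, zero_sub, mul_neg,
    Finset.sum_neg_distrib, ← Finset.mul_sum, Fin.sum_const, nsmul_eq_mul] at hcoeff
  linear_combination -hcoeff

end LogDerivative

section ZerosOnSegment

open Real

lemma exists_mem_Ioo_mul_cos_eq {h : ℝ → ℝ} (hcont : Continuous h) {c : ℝ} (hc : ∀ t, |c| < h t)
    (k : ℕ) : ∃ t ∈ Set.Ioo (k * π) ((k + 1) * π), h t * cos t = c := by
  let F : ℝ → ℝ := fun t ↦ (-1) ^ k * (h t * cos t - c)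
  have hsq : ((-1 : ℝ) ^ k) * (-1) ^ k = 1 := by rw [← mul_pow]; norm_num
  have hsign : |(-1) ^ k * c| = |c| := by simp [abs_mul]
  have hleft : 0 < F (k * π) := by
    have hF : F (k * π) = h (k * π) - (-1) ^ k * c := by
      simp only [F, cos_nat_mul_pi]
      linear_combination h (k * π) * hsq
    rw [hF, sub_pos]
    exact (le_abs_self _).trans_lt (hsign ▸ hc _)
  have hright : F ((k + 1) * π) < 0 := by
    have hcos : cos ((k + 1) * π) = -(-1) ^ k := by
      rw [add_mul, one_mul, cos_add_pi, cos_nat_mul_pi]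
    have hF : F ((k + 1) * π) = -h ((k + 1) * π) - (-1) ^ k * c := by
      simp only [F, hcos]
      linear_combination -h ((k + 1) * π) * hsq
    rw [hF, sub_neg]
    exact (abs_lt.1 (hsign ▸ hc _)).1
  have hle : (k : ℝ) * π ≤ (k + 1) * π := by gcongr; linarith
  obtain ⟨t, ht, hFt⟩ := intermediate_value_Ioo' hle (by fun_prop : Continuous F).continuousOn
    ⟨hright, hleft⟩
  exact ⟨t, ht, sub_eq_zero.1 ((mul_eq_zero.1 hFt).resolve_left (by simp))⟩

lemma injective_of_mem_Ioo_nat_mul {R : Type*} [Semiring R] [LinearOrder R]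
    [IsStrictOrderedRing R] {c : R} (hc : 0 < c) {t : ℕ → R}
    (ht : ∀ k : ℕ, t k ∈ Set.Ioo (k * c) ((k + 1) * c)) : Function.Injective t := by
  have hlt : ∀ {i j : ℕ}, t i = t j → i < j + 1 := by
    intro i j hij
    have : (i : R) * c < (j + 1) * c := (ht i).1.trans (hij ▸ (ht j).2)
    exact_mod_cast lt_of_mul_lt_mul_right this hc.le
  intro i j hij
  have := hlt hij
  have := hlt hij.symm
  omega

theorem exists_finset_mul_cos_nat_mul_eq {h : ℝ → ℝ} (hcont : Continuous h) {c : ℝ}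
    (hc : ∀ φ, |c| < h φ) {n : ℕ} (hn : n ≠ 0) :
    ∃ Φ : Finset ℝ, Φ.card = n ∧ ∀ φ ∈ Φ, φ ∈ Set.Ioo 0 π ∧ h φ * cos (n * φ) = c := by
  choose t ht hzero using
    exists_mem_Ioo_mul_cos_eq (h := fun t ↦ h (t / n)) (by fun_prop) fun t ↦ hc (t / n)
  have hn_pos : (0 : ℝ) < n := by positivity
  have hinj : Function.Injective fun k ↦ t k / n :=
    fun _ _ h ↦ injective_of_mem_Ioo_nat_mul pi_pos ht ((div_left_inj' hn_pos.ne').1 h)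
  refine ⟨(Finset.range n).image fun k ↦ t k / n, ?_, ?_⟩
  · rw [Finset.card_image_of_injective _ hinj, Finset.card_range]
  · simp only [Finset.forall_mem_image, Finset.mem_range]
    intro k hk
    have hk' : (k : ℝ) + 1 ≤ n := by exact_mod_cast hk
    refine ⟨⟨div_pos ((by positivity : (0 : ℝ) ≤ k * π).trans_lt (ht k).1) hn_pos, ?_⟩, ?_⟩
    · rw [div_lt_iff₀' hn_pos]
      exact (ht k).2.trans_le (by gcongr)
    · rw [mul_div_cancel₀ _ hn_pos.ne', hzero]

/-- The radius `r` at polar angle `φ` of the circle `a + exp (iθ)`, for `|a| < 1`. -/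
noncomputable def shiftedCircleRadius (a φ : ℝ) : ℝ := a * cos φ + √(1 - (a * sin φ) ^ 2)

variable {a : ℝ}

lemma continuous_shiftedCircleRadius (a : ℝ) : Continuous (shiftedCircleRadius a) := by
  unfold shiftedCircleRadius
  fun_prop

lemma shiftedCircleRadius_sq (ha : |a| ≤ 1) (φ : ℝ) :
    shiftedCircleRadius a φ ^ 2 = 1 - a ^ 2 + 2 * a * (shiftedCircleRadius a φ * cos φ) := by
  have habs : |a * sin φ| ≤ 1 := by
    rw [abs_mul]
    exact mul_le_one₀ ha (abs_nonneg _) (abs_sin_le_one φ)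
  have hsqrt := sq_sqrt (sub_nonneg.2 ((sq_le_one_iff_abs_le_one _).2 habs))
  simp only [shiftedCircleRadius]
  linear_combination hsqrt - a ^ 2 * sin_sq_add_cos_sq φ

lemma sq_add_sq_shiftedCircleRadius (ha : |a| ≤ 1) (φ : ℝ) :
    (shiftedCircleRadius a φ * cos φ - a) ^ 2 + (shiftedCircleRadius a φ * sin φ) ^ 2 = 1 := by
  linear_combination shiftedCircleRadius_sq ha φ
    + shiftedCircleRadius a φ ^ 2 * sin_sq_add_cos_sq φ

lemma one_sub_abs_le_shiftedCircleRadius (ha : |a| ≤ 1) (φ : ℝ) :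
    1 - |a| ≤ shiftedCircleRadius a φ := by
  have hcos : |a * cos φ| ≤ |a| := by
    rw [abs_mul]
    exact mul_le_of_le_one_right (abs_nonneg a) (abs_cos_le_one φ)
  have hlow : 0 ≤ |a| + a * cos φ := by linarith [neg_le_of_abs_le hcos]
  have hsqrt : 1 - |a| - a * cos φ ≤ √(1 - (a * sin φ) ^ 2) := by
    apply le_sqrt_of_sq_le
    nlinarith [sq_abs a, sin_sq_add_cos_sq φ]
  rw [shiftedCircleRadius]
  linarith

lemma injOn_shiftedCircleRadius_mul_cos (ha : |a| < 1) :
    Set.InjOn (fun φ ↦ shiftedCircleRadius a φ * cos φ - a) (Set.Icc 0 π) := by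
  intro φ hφ ψ hψ h
  have hpos : ∀ θ, 0 < shiftedCircleRadius a θ := fun θ ↦
    (sub_pos.2 ha).trans_le (one_sub_abs_le_shiftedCircleRadius ha.le θ)
  have hx : shiftedCircleRadius a φ * cos φ = shiftedCircleRadius a ψ * cos ψ := sub_left_inj.1 h
  have hr : shiftedCircleRadius a φ = shiftedCircleRadius a ψ := by
    rw [← pow_left_inj₀ (hpos φ).le (hpos ψ).le two_ne_zero, shiftedCircleRadius_sq ha.le,
      shiftedCircleRadius_sq ha.le, hx]
  rw [hr] at hx
  exact injOn_cos hφ hψ (mul_left_cancel₀ (hpos ψ).ne' hx)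

lemma airfoilFaber_polar (a r φ : ℝ) (n : ℕ) :
    airfoilFaber (a : ℂ) n (r * cos φ - a : ℝ) (r * sin φ * Complex.I) =
      (2 * r ^ n * cos (n * φ) - a ^ n : ℝ) := by
  have hadd : ((r * cos φ - a : ℝ) : ℂ) + a + r * sin φ * Complex.I =
      r * (Complex.cos φ + Complex.sin φ * Complex.I) := by
    push_cast
    ring
  have hsub : ((r * cos φ - a : ℝ) : ℂ) + a - r * sin φ * Complex.I =
      r * (Complex.cos (-φ) + Complex.sin (-φ) * Complex.I) := by
    rw [Complex.cos_neg, Complex.sin_neg]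
    push_cast
    ring
  rw [airfoilFaber, hadd, hsub, mul_pow, mul_pow, Complex.cos_add_sin_mul_I_pow,
    Complex.cos_add_sin_mul_I_pow, mul_neg, Complex.cos_neg, Complex.sin_neg]
  push_cast
  ring

theorem exists_finset_airfoilFaber_eq_zero (ha : |a| < 1) {n : ℕ} (hn : n ≠ 0)
    (han : |a| ^ n < 2 * (1 - |a|) ^ n) :
    ∃ Z : Finset ℂ, Z.card = n ∧ ∀ z ∈ Z, (∃ x : ℝ, x ∈ Set.Icc (-1 : ℝ) 1 ∧ z = x) ∧
      ∃ s : ℂ, s ^ 2 = z ^ 2 - 1 ∧ s ≠ 0 ∧ airfoilFaber (a : ℂ) n z s = 0 := by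
  let r : ℝ → ℝ := shiftedCircleRadius a
  have hr_low : ∀ φ, 1 - |a| ≤ r φ := one_sub_abs_le_shiftedCircleRadius ha.le
  have hr_cont : Continuous r := continuous_shiftedCircleRadius a
  have hdom : ∀ φ, |a ^ n| < 2 * r φ ^ n := by
    intro φ
    rw [abs_pow]
    refine han.trans_le ?_
    gcongr
    exact hr_low _
  obtain ⟨Φ, hcard, hΦ⟩ := exists_finset_mul_cos_nat_mul_eq (by fun_prop) hdom hn
  have hinj : Set.InjOn (fun φ ↦ ((r φ * cos φ - a : ℝ) : ℂ)) Φ :=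
    Complex.ofReal_injective.comp_injOn <|
      (injOn_shiftedCircleRadius_mul_cos ha).mono fun φ hφ ↦ Set.Ioo_subset_Icc_self (hΦ φ hφ).1
  refine ⟨Φ.image _, by rw [Finset.card_image_of_injOn hinj, hcard], ?_⟩
  simp only [Finset.forall_mem_image]
  intro φ hφ
  obtain ⟨hφ_mem, hφ_eq⟩ := hΦ φ hφ
  have hcirc := sq_add_sq_shiftedCircleRadius ha.le φ
  refine ⟨⟨_, ?_, rfl⟩, r φ * sin φ * Complex.I, ?_, ?_, ?_⟩
  · rw [Set.mem_Icc, ← abs_le, ← sq_le_one_iff_abs_le_one]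
    exact (le_add_of_nonneg_right (sq_nonneg _)).trans_eq hcirc
  · have : ((r φ * cos φ - a : ℝ) : ℂ) ^ 2 + (r φ * sin φ) ^ 2 = 1 := by exact_mod_cast hcirc
    linear_combination (r φ * sin φ) ^ 2 * Complex.I_sq - this
  · have hr_pos : 0 < r φ := (sub_pos.2 ha).trans_le (hr_low φ)
    have hsin := sin_pos_of_mem_Ioo hφ_mem
    exact mul_ne_zero (by exact_mod_cast (mul_pos hr_pos hsin).ne') Complex.I_ne_zero
  · rw [airfoilFaber_polar, hφ_eq, sub_self, Complex.ofReal_zero]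

end ZerosOnSegment

section Integrals

open Real MeasureTheory Polynomial
open Polynomial.Chebyshev (T measureT)

/-- The density of Ullman's measure with respect to the arcsine law `dx / (π √(1 - x²))`; the
parameter `a` is `2α`. -/
noncomputable def ullmanDensity (a x : ℝ) : ℝ := (1 + a * x) / (1 + a ^ 2 + 2 * a * x)

lemma hasSum_pow_mul_cos {t : ℝ} (ht : |t| < 1) (θ : ℝ) :
    HasSum (fun k : ℕ ↦ t ^ k * cos (k * θ)) ((1 - t * cos θ) / (1 + t ^ 2 - 2 * t * cos θ)) := by
  let w : ℂ := t * (Complex.cos θ + Complex.sin θ * Complex.I)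
  have hw : ‖w‖ < 1 := by
    simpa [w, ← Complex.exp_mul_I] using ht
  have hterm : ∀ k : ℕ, (w ^ k).re = t ^ k * cos (k * θ) := by
    intro k
    have hk : w ^ k = (t ^ k * cos (k * θ) : ℝ) + (t ^ k * sin (k * θ) : ℝ) * Complex.I := by
      simp only [w, mul_pow, Complex.cos_add_sin_mul_I_pow]
      push_cast
      ring
    simp [hk, -Complex.ofReal_mul, -Complex.ofReal_pow]
  have hlim : ((1 - w)⁻¹).re = (1 - t * cos θ) / (1 + t ^ 2 - 2 * t * cos θ) := by
    have hre : (1 - w).re = 1 - t * cos θ := by simp [w, Complex.cos_ofReal_re]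
    have him : (1 - w).im = -(t * sin θ) := by simp [w, Complex.sin_ofReal_re]
    rw [Complex.inv_re, Complex.normSq_apply, hre, him]
    congr 1
    linear_combination t ^ 2 * sin_sq_add_cos_sq θ
  simpa only [hterm, hlim] using Complex.hasSum_re (hasSum_geometric_of_norm_lt_one hw)

lemma hasSum_ullmanDensity_cos {a : ℝ} (ha : |a| < 1) (θ : ℝ) :
    HasSum (fun k : ℕ ↦ (-a) ^ k * (T ℝ k).eval (cos θ)) (ullmanDensity a (cos θ)) := by
  have h := hasSum_pow_mul_cos (by rwa [abs_neg] : |-a| < 1) θ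
  simpa [ullmanDensity, Chebyshev.T_real_cos] using h

lemma one_add_sq_add_two_mul_mul_pos {a x : ℝ} (ha : |a| < 1) (hx : x ∈ Set.Icc (-1) 1) :
    0 < 1 + a ^ 2 + 2 * a * x := by
  have h : |a * x| ≤ |a| := by
    rw [abs_mul]
    exact mul_le_of_le_one_right (abs_nonneg a) (abs_le.2 hx)
  nlinarith [neg_le_of_abs_le h, sq_abs a, sq_pos_of_pos (sub_pos.2 ha)]

lemma continuousOn_ullmanDensity {a : ℝ} (ha : |a| < 1) :
    ContinuousOn (ullmanDensity a) (Set.Icc (-1) 1) :=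
  ContinuousOn.div (by fun_prop) (by fun_prop)
    fun _ hx ↦ (one_add_sq_add_two_mul_mul_pos ha hx).ne'

theorem hasSum_integral_mul_eval_T_measureT {a : ℝ} (ha : |a| < 1) {f : ℝ → ℝ}
    (hf : Continuous f) :
    HasSum (fun k : ℕ ↦ (-a) ^ k * ∫ x, f x * (T ℝ k).eval x ∂measureT)
      (∫ x, f x * ullmanDensity a x ∂measureT) := by
  simp_rw [Chebyshev.integral_measureT_eq_integral_cos, ← intervalIntegral.integral_const_mul]
  have hgeom : Summable fun k : ℕ ↦ |a| ^ k := summable_geometric_of_abs_lt_one (by simpa using ha)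
  refine intervalIntegral.hasSum_integral_of_dominated_convergence
    (fun k θ ↦ |a| ^ k * |f (cos θ)|) (fun k ↦ ?_) (fun k ↦ .of_forall fun θ _ ↦ ?_)
    (.of_forall fun θ _ ↦ hgeom.mul_right _) ?_ (.of_forall fun θ _ ↦ ?_)
  · exact (by fun_prop : Continuous _).aestronglyMeasurable
  · rw [norm_mul, norm_mul, norm_pow, norm_neg, norm_eq_abs, norm_eq_abs, norm_eq_abs]
    gcongr
    exact mul_le_of_le_one_right (abs_nonneg _)
      (Chebyshev.abs_eval_T_real_le_one k (abs_cos_le_one θ))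
  · simp_rw [tsum_mul_right]
    exact (by fun_prop : Continuous _).intervalIntegrable _ _
  · simpa only [mul_left_comm] using (hasSum_ullmanDensity_cos ha θ).mul_left (f (cos θ))

theorem integral_eval_T_mul_ullmanDensity_measureT {a : ℝ} (ha : |a| < 1) (k : ℕ) :
    ∫ x, (T ℝ k).eval x * ullmanDensity a x ∂measureT =
      (-a) ^ k * ∫ x, (T ℝ k).eval x * (T ℝ k).eval x ∂measureT := by
  refine (hasSum_integral_mul_eval_T_measureT ha (by fun_prop)).unique (hasSum_single k ?_)
  intro j hj
  rw [Chebyshev.integral_eval_T_real_mul_eval_T_real_measureT_of_ne hj.symm, mul_zero]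

lemma intervalIntegrable_eval_mul_ullmanDensity {a : ℝ} (ha : |a| < 1) (p : ℂ[X]) :
    IntervalIntegrable (fun x : ℝ ↦ p.eval (x : ℂ) * ((√(1 - x ^ 2))⁻¹ * ullmanDensity a x : ℝ))
      volume (-1) 1 := by
  have hcont : ContinuousOn (fun x : ℝ ↦ p.eval (x : ℂ) * ullmanDensity a x)
      (Set.uIcc (-1) 1) := by
    rw [Set.uIcc_of_le (by norm_num)]
    have := continuousOn_ullmanDensity ha
    fun_prop
  have hw : IntervalIntegrable (fun x : ℝ ↦ ((√(1 - x ^ 2)⁻¹ : ℝ) : ℂ)) volume (-1) 1 :=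
    ⟨Chebyshev.intervalIntegrable_sqrt_one_sub_sq_inv.1.ofReal,
      Chebyshev.intervalIntegrable_sqrt_one_sub_sq_inv.2.ofReal⟩
  refine (hw.continuousOn_mul hcont).congr fun x _ ↦ ?_
  simp only [sqrt_inv]
  push_cast
  ring

lemma integral_eval_T_mul_ullmanDensity {a : ℝ} (ha : |a| < 1) (k : ℕ) :
    ∫ x in (-1 : ℝ)..1, (T ℂ k).eval (x : ℂ) * ((√(1 - x ^ 2))⁻¹ * ullmanDensity a x : ℝ) =
      if k = 0 then (π : ℂ) else π / 2 * (-a) ^ k := by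
  have hreal : ∀ x : ℝ, (T ℂ k).eval (x : ℂ) * ((√(1 - x ^ 2))⁻¹ * ullmanDensity a x : ℝ) =
      (((T ℝ k).eval x * ullmanDensity a x * √(1 - x ^ 2)⁻¹ : ℝ) : ℂ) := by
    intro x
    rw [sqrt_inv, ← Chebyshev.complex_ofReal_eval_T]
    push_cast
    ring
  simp_rw [hreal]
  rw [intervalIntegral.integral_ofReal,
    ← Chebyshev.integral_measureT fun x ↦ (T ℝ k).eval x * ullmanDensity a x,
    integral_eval_T_mul_ullmanDensity_measureT ha]
  split_ifs with hk
  · rw [hk, Nat.cast_zero, Chebyshev.integral_eval_T_real_mul_self_measureT_zero, pow_zero, one_mul]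
  · rw [Chebyshev.integral_T_real_mul_self_measureT_of_ne_zero hk]
    push_cast
    ring

end Integrals

section Quadrature

open Polynomial Real
open Polynomial.Chebyshev (T)

@[elab_as_elim]
theorem eval_T_induction {K : Type*} [Field K] [NeZero (2 : K)] {n : ℕ} {motive : K[X] → Prop}
    (eval_T : ∀ k ≤ n, motive (T K k)) (add : ∀ p q, motive p → motive q → motive (p + q))
    (smul : ∀ (c : K) p, motive p → motive (c • p)) {p : K[X]} (hp : p.degree ≤ n) : motive p := by
  have hspan : p ∈ Submodule.span K (Chebyshev.chebyshevTsequence K '' Set.Iic n) := by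
    rw [Sequence.span_degreeLE _ (by simp), mem_degreeLE]
    exact hp
  clear hp
  induction hspan using Submodule.span_induction with
  | mem q hq =>
    obtain ⟨k, hk, rfl⟩ := hq
    exact eval_T k hk
  | zero => simpa using smul 0 _ (eval_T 0 n.zero_le)
  | add q r _ _ hq hr => exact add q r hq hr
  | smul c q _ hq => exact smul c q hq

theorem integral_mul_ullmanDensity_eq_sum {a : ℝ} (ha : |a| < 1) {n : ℕ} (hn : n ≠ 0)
    {Z : Finset ℂ} (hcard : Z.card = n)
    (hZ : ∀ k ≠ 0, k ≤ n → 2 * ∑ z ∈ Z, (T ℂ k).eval z = n * (-a) ^ k) {p : ℂ[X]}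
    (hp : p.degree ≤ n) :
    1 / (π : ℂ) *
        ∫ x in (-1 : ℝ)..1, p.eval (x : ℂ) * ((√(1 - x ^ 2))⁻¹ * ullmanDensity a x : ℝ) =
      1 / (n : ℂ) * ∑ z ∈ Z, p.eval z := by
  refine eval_T_induction (fun k hk ↦ ?_) (fun p q hp hq ↦ ?_) (fun c p hp ↦ ?_) hp
  · have hn' : (n : ℂ) ≠ 0 := Nat.cast_ne_zero.2 hn
    have hπ : (π : ℂ) ≠ 0 := Complex.ofReal_ne_zero.2 pi_ne_zero
    rw [integral_eval_T_mul_ullmanDensity ha]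
    split_ifs with h0
    · simp [h0, hcard, hn', hπ]
    · field_simp
      linear_combination -hZ k h0 hk
  · simp only [eval_add, add_mul, Finset.sum_add_distrib, mul_add]
    rw [intervalIntegral.integral_add (intervalIntegrable_eval_mul_ullmanDensity ha p)
      (intervalIntegrable_eval_mul_ullmanDensity ha q), mul_add, hp, hq]
  · simp only [eval_smul, smul_eq_mul, mul_assoc, ← Finset.mul_sum]
    rw [intervalIntegral.integral_const_mul, mul_left_comm, hp, mul_left_comm]

end Quadrature

lemma pow_lt_two_mul_one_sub_pow {t : ℝ} (ht : 0 ≤ t) (ht' : t ≤ 1 / 2) (n : ℕ) :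
    t ^ n < 2 * (1 - t) ^ n := by
  have hpos : 0 < (1 - t) ^ n := by
    apply pow_pos
    linarith
  have hle : t ^ n ≤ (1 - t) ^ n := by
    gcongr
    linarith
  linarith

theorem stmt_19_general (α : ℝ) (hα : |2 * α| < 1) (n : ℕ) (hn : 1 ≤ n)
    (hαn : |2 * α| ^ n < 2 * (1 - |2 * α|) ^ n) :
    ∃ Z : Finset ℂ, Z.card = n ∧
      (∀ z : ℂ, z ∈ Z ↔ ∀ s : ℂ, s ^ 2 = z ^ 2 - 1 →
        (z + 2 * (α : ℂ) + s) ^ n + (z + 2 * (α : ℂ) - s) ^ n - (2 * (α : ℂ)) ^ n = 0) ∧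
      (∀ z ∈ Z, ∃ x : ℝ, x ∈ Set.Icc (-1 : ℝ) 1 ∧ z = (x : ℂ)) ∧
      (∀ p : Polynomial ℂ, p.degree ≤ n →
        (1 / (Real.pi : ℂ)) *
          ∫ x in (-1 : ℝ)..1,
            p.eval (x : ℂ) *
              (((1 / Real.sqrt (1 - x ^ 2)) *
                ((1 + 2 * α * x) / (1 + 4 * α ^ 2 + 4 * α * x)) : ℝ) : ℂ) =
        (1 / (n : ℂ)) * ∑ z ∈ Z, p.eval z) := by
  have hn0 : n ≠ 0 := Nat.one_le_iff_ne_zero.1 hn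
  obtain ⟨Z, hcard, hZ⟩ := exists_finset_airfoilFaber_eq_zero hα hn0 hαn
  have hprod : ∏ z ∈ Z, joukowskiQuadratic z = airfoilFaberPullback (2 * (α : ℂ)) n := by
    refine prod_joukowskiQuadratic_eq_airfoilFaberPullback hn0 hcard fun z hz ↦ ?_
    simpa using (hZ z hz).2
  refine ⟨Z, hcard, mem_iff_forall_airfoilFaber_eq_zero hprod, fun z hz ↦ (hZ z hz).1,
    fun p hp ↦ ?_⟩
  have hpow : ∀ k ≠ 0, k ≤ n →
      2 * ∑ z ∈ Z, (Polynomial.Chebyshev.T ℂ k).eval z = n * (-(2 * (α : ℂ))) ^ k := by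
    intro k hk hkn
    refine two_mul_sum_eval_T_eq_of_X_pow_dvd ?_ hk (Nat.lt_succ_of_le hkn)
    simpa [hprod] using X_pow_succ_dvd_airfoilFaberPullback_sub (2 * (α : ℂ)) n
  have hdensity : ∀ x : ℝ,
      1 / √(1 - x ^ 2) * ((1 + 2 * α * x) / (1 + 4 * α ^ 2 + 4 * α * x)) =
        (√(1 - x ^ 2))⁻¹ * ullmanDensity (2 * α) x := by
    intro x
    rw [ullmanDensity]
    ring_nf
  simp_rw [hdensity]
  exact integral_mul_ullmanDensity_eq_sum hα hn0 hcard (by simpa using hpow) hp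

/-- Let `α ∈ (0, 1/4]`. For each `n ≥ 1`, the function
`p_n(z) = (z + 2α + s)ⁿ + (z + 2α − s)ⁿ − (2α)ⁿ` (`s² = z² − 1`, value independent of the
choice) has exactly `n` zeros `z_1, …, z_n`; they are pairwise distinct, lie in `[−1, 1]`,
and are Chebyshev quadrature nodes of order `n` for Ullman's measure
`dμ(x) = (1/π)·(1/√(1 − x²))·(1 + 2αx)/(1 + 4α² + 4αx) dx` on `[−1,1]`: for every
polynomial `p` of degree at most `n`, `∫_{−1}^1 p dμ = (1/n) Σ_j p(z_j)`. -/
theorem stmt_19 (α : ℝ) (hα : 0 < α) (hα' : α ≤ 1/4) (n : ℕ) (hn : 1 ≤ n) :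
    ∃ Z : Finset ℂ, Z.card = n ∧
      (∀ z : ℂ, z ∈ Z ↔ ∀ s : ℂ, s ^ 2 = z ^ 2 - 1 →
        (z + 2 * (α : ℂ) + s) ^ n + (z + 2 * (α : ℂ) - s) ^ n - (2 * (α : ℂ)) ^ n = 0) ∧
      (∀ z ∈ Z, ∃ x : ℝ, x ∈ Set.Icc (-1 : ℝ) 1 ∧ z = (x : ℂ)) ∧
      (∀ p : Polynomial ℂ, p.degree ≤ n →
        (1 / (Real.pi : ℂ)) *
          ∫ x in (-1 : ℝ)..1,
            p.eval (x : ℂ) *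
              (((1 / Real.sqrt (1 - x ^ 2)) *
                ((1 + 2 * α * x) / (1 + 4 * α ^ 2 + 4 * α * x)) : ℝ) : ℂ) =
        (1 / (n : ℂ)) * ∑ z ∈ Z, p.eval z) := by
  have habs : |2 * α| ≤ 1 / 2 := by
    rw [abs_of_pos (by linarith)]
    linarith
  exact stmt_19_general α (by linarith) n hn
    (pow_lt_two_mul_one_sub_pow (abs_nonneg _) habs n)
end
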